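/- For every 0 < τ ≪ 1 there exist positive constants ε(τ) and C(τ) such that if E + D ≤ ε(τ), then there exists a function φ whose gradient is harmonic in B_{1/4} such that ∫_{B_{1/4}} |T − (x + ∇φ)|² ≲ τ E + C(τ) D and ∫_{B_{1/4}} |∇φ|² ≲ E. -/

import Mathlib

/-!
The displacement `u = T - id` of an optimal map is a gradient, and minimality forces it to be close
to a gradient whose divergence is constant. The proof works with Kantorovich potentials only.

**Potentials.** Swapping small translated sets shows that `T` is cyclically monotone on a conull set
(`optMap_perm_ineq`, `optMap_cyclic`); Rockafellar's construction then gives potentials `f`, `χ` with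
`∇f = u`, `f + |x|²/2` convex and `χ y ≤ |y - x|²/2 + f x`, with equality at `y = T x`
(`exists_potentials`). Write `δ² = E`. The Poincaré inequality bounds `f` in `L²` by a multiple of
`δ`, and semiconvexity makes `f` and `u` uniformly small, at most `m` (`exists_potE`).

**Perturbative regime.** Suppose `D < β² E` with `β` small, and let `π` be a coupling of cost at most
`β² δ²` between the target measure and `κ dx` on `O`. Pushing test functions through `T` and `π`
gives `div u = 1 - κ` weakly, up to an error of order `β δ` (`Hyp.weak`). Integrating `η χ` against
`π`, with the equality case of duality on one side and the inequality for the competitor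
`x = y - v`, `v` a constant vector of size `O(δ)`, on the other, gives the minimality inequality
`½ ∫ η |u|² ≤ ½ |v|² + ∫ f ⟨∇η, v - u⟩ + (κ - 1) ∫ η f + O(β + m) δ²` (`Hyp.M`).

**Regularisation.** Let `p` be the mollification of `f` at the fixed scale `1/4`, up to an additive
constant (`pp`). Averages of `f` over balls of radius `s` depend on `s` as prescribed by the equation
for `div u`, so `p` is `L²`-close to `f`, by `γ δ` for any given `γ > 0` once `β` is small
(`pp_close`). Moreover `p` has `C²` norm `O(δ)` and Laplacian `1 - κ + O(β δ)`; correcting the latter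
with an explicit right inverse of the Laplacian (`poisson`) gives `φ` with constant Laplacian on
`B_{1/4}`, hence with harmonic gradient, and `|∇φ - ∇p| = O(β δ)` (`exists_phi`).

**Conclusion.** In the minimality inequality with `v = ∇p(z)`, replacing `f` by `p` and integrating by
parts with the weak equation for `u` gives
`½ ∫ η |u - v|² ≤ ∫ η ⟨∇p - v, u - v⟩ + O(β + m + γ) δ²`, so on the support of a bump `η` the
displacement is close to `∇p(z)` up to the oscillation of `∇p` there (`local_estimate`).
Averaging over bumps of small radius gives the claim in this regime (`perturbative`). If `D ≥ β² E`,
then `φ = 0` does.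
-/

open MeasureTheory Measure Set Metric
open scoped ENNReal NNReal Topology

noncomputable section

abbrev Ed (d : ℕ) : Type := EuclideanSpace ℝ (Fin d)

/-- Squared Euclidean `L²`-Wasserstein distance, as an infimum over couplings. -/
def W2sq {d : ℕ} (μ ν : Measure (Ed d)) : ℝ≥0∞ :=
  sInf { c | ∃ π : Measure (Ed d × Ed d), π.map Prod.fst = μ ∧ π.map Prod.snd = ν ∧
      c = ∫⁻ p, ENNReal.ofReal (‖p.1 - p.2‖ ^ 2) ∂π }

/-- `T` is the optimal transport map from `χ_Ω dx` to `μ`. -/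
def IsOptMap {d : ℕ} (Ω : Set (Ed d)) (μ : Measure (Ed d)) (T : Ed d → Ed d) : Prop :=
  Measurable T ∧ Measure.map T (volume.restrict Ω) = μ ∧
  ∀ S : Ed d → Ed d, Measurable S → Measure.map S (volume.restrict Ω) = μ →
    ∫⁻ x in Ω, ENNReal.ofReal (‖T x - x‖ ^ 2) ≤ ∫⁻ x in Ω, ENNReal.ofReal (‖S x - x‖ ^ 2)

/-- Laplacian of a real-valued function on Euclidean space. -/
def lap {d : ℕ} (f : Ed d → ℝ) (x : Ed d) : ℝ :=
  ∑ i : Fin d, fderiv ℝ (fun y => fderiv ℝ f y (EuclideanSpace.single i (1:ℝ))) x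
      (EuclideanSpace.single i (1:ℝ))

/-- A (smooth) real-valued function is harmonic on `s`. -/
def HarmonicOnSet {d : ℕ} (f : Ed d → ℝ) (s : Set (Ed d)) : Prop :=
  ContDiffOn ℝ (⊤ : ℕ∞) f s ∧ ∀ x ∈ s, lap f x = 0

/-- `φ` has a harmonic gradient on `s`. -/
def GradHarmonicOn {d : ℕ} (φ : Ed d → ℝ) (s : Set (Ed d)) : Prop :=
  ContDiffOn ℝ (⊤ : ℕ∞) φ s ∧ ∀ i : Fin d, HarmonicOnSet (fun y => gradient φ y i) s

/-- The excess energy `E = ∫_{B₂}|T−x|²`. -/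
def Elin {d : ℕ} (T : Ed d → Ed d) : ℝ≥0∞ :=
  ∫⁻ x in ball (0 : Ed d) 2, ENNReal.ofReal (‖T x - x‖ ^ 2)

/-- The data term `D = W₂²(μ⌞O, (μ(O)/|O|)χ_O)`. -/
def Dlin {d : ℕ} (μ : Measure (Ed d)) (O : Set (Ed d)) : ℝ≥0∞ :=
  W2sq (μ.restrict O) ((μ O / volume O) • volume.restrict O)

/-! ### Cyclical monotonicity and potentials -/

/-- Finitely many sets of positive measure contain pairwise disjoint translates of one common set of
positive finite measure: translate to distinct Lebesgue density points. -/
lemma exists_common_translates {d : ℕ} (hd : 2 ≤ d) {n : ℕ} (S : Fin n → Set (Ed d))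
    (hSm : ∀ i, MeasurableSet (S i)) (hS : ∀ i, volume (S i) ≠ 0) :
    ∃ (A : Set (Ed d)) (t : Fin n → Ed d), MeasurableSet A ∧ volume A ≠ 0 ∧ volume A ≠ ⊤ ∧
      (∀ i, ∀ a ∈ A, a + t i ∈ S i) ∧
      ∀ i j, i ≠ j → ∀ a ∈ A, ∀ b ∈ A, a + t i ≠ b + t j := by
  classical
  have : Nonempty (Fin d) := ⟨⟨0, by omega⟩⟩
  -- density points
  let D : Fin n → Set (Ed d) := fun i => {x | x ∈ S i ∧
    Filter.Tendsto (fun r => volume (S i ∩ closedBall x r) / volume (closedBall x r))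
      (𝓝[>] 0) (𝓝 1)}
  have hDinf : ∀ i, (D i).Infinite := by
    intro i hfin
    have h1 := Besicovitch.ae_tendsto_measure_inter_div (volume : Measure (Ed d)) (S i)
    rw [ae_restrict_iff' (hSm i)] at h1
    have h2 : volume (D i) = 0 := hfin.measure_zero _
    have h3 : ∀ᵐ x ∂(volume : Measure (Ed d)), x ∉ D i := measure_eq_zero_iff_ae_notMem.1 h2
    apply hS i
    rw [measure_eq_zero_iff_ae_notMem]
    filter_upwards [h1, h3] with x hx hx3 hxS
    exact hx3 ⟨hxS, hx hxS⟩
  choose s hsD hscard using fun i => (hDinf i).exists_subset_card_eq n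
  obtain ⟨t, htinj, hts⟩ : ∃ t : Fin n → Ed d, Function.Injective t ∧ ∀ i, t i ∈ s i := by
    apply (Finset.all_card_le_biUnion_card_iff_exists_injective s).1
    intro F
    rcases F.eq_empty_or_nonempty with rfl | ⟨i, hi⟩
    · simp
    · calc F.card ≤ n := by simpa using F.card_le_univ
        _ = (s i).card := (hscard i).symm
        _ ≤ _ := Finset.card_le_card (Finset.subset_biUnion_of_mem s hi)
  have htD : ∀ i, t i ∈ D i := fun i => hsD i (hts i)
  -- choose the radius
  have hev1 : ∀ᶠ r in 𝓝[>] (0:ℝ), ∀ i, (1 - 1 / ((n:ℝ)+1)) * volume.real (closedBall (t i) r)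
      < volume.real (S i ∩ closedBall (t i) r) := by
    rw [Filter.eventually_all]
    intro i
    have hlt : ENNReal.ofReal (1 - 1 / ((n:ℝ)+1)) < 1 := by
      rw [ENNReal.ofReal_lt_one]
      have : 0 < 1 / ((n:ℝ)+1) := by positivity
      linarith
    filter_upwards [(htD i).2.eventually_const_lt hlt, self_mem_nhdsWithin] with r hr hr0
    have hb0 : 0 < volume (closedBall (t i) r) := measure_closedBall_pos _ _ hr0
    have hbt : volume (closedBall (t i) r) ≠ ⊤ := measure_closedBall_lt_top.ne
    rw [ENNReal.lt_div_iff_mul_lt (Or.inl hb0.ne') (Or.inl hbt)] at hr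
    have hn : 0 ≤ 1 - 1 / ((n:ℝ)+1) := by
      have : 1 / ((n:ℝ)+1) ≤ 1 := by
        rw [div_le_one (by positivity)]; have : (0:ℝ) ≤ n := n.cast_nonneg; linarith
      linarith
    have := (ENNReal.toReal_lt_toReal (ENNReal.mul_ne_top ENNReal.ofReal_ne_top hbt)
      (measure_ne_top_of_subset inter_subset_right hbt)).2 hr
    rwa [ENNReal.toReal_mul, ENNReal.toReal_ofReal hn] at this
  have hev2 : ∀ᶠ r in 𝓝[>] (0:ℝ), ∀ i j, i ≠ j → 2 * r < dist (t i) (t j) := by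
    rw [Filter.eventually_all]; intro i
    rw [Filter.eventually_all]; intro j
    by_cases hij : i = j
    · simp [hij]
    · have h0 : 0 < dist (t i) (t j) / 2 := by
        have := dist_pos.2 (fun h => hij (htinj h)); linarith
      filter_upwards [Ioo_mem_nhdsGT h0] with r hr _
      linarith [hr.2]
  obtain ⟨r, ⟨hr1, hr2⟩, hr0⟩ := ((hev1.and hev2).and self_mem_nhdsWithin).exists
  replace hr0 : 0 < r := hr0
  let P : Fin n → Set (Ed d) := fun i => (fun a => a + t i) ⁻¹' S i
  have hPm : ∀ i, MeasurableSet (P i) := fun i => (measurable_add_const (t i)) (hSm i)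
  let A : Set (Ed d) := closedBall 0 r ∩ ⋂ i, P i
  have hAm : MeasurableSet A := measurableSet_closedBall.inter (MeasurableSet.iInter hPm)
  have hbt : volume (closedBall (0 : Ed d) r) ≠ ⊤ := measure_closedBall_lt_top.ne
  refine ⟨A, t, hAm, ?_, measure_ne_top_of_subset inter_subset_left hbt, ?_, ?_⟩
  · intro hA
    have hb0 : 0 < volume.real (closedBall (0 : Ed d) r) :=
      ENNReal.toReal_pos (measure_closedBall_pos _ _ hr0).ne' hbt
    have hcover : closedBall (0 : Ed d) r ⊆ A ∪ ⋃ i, (closedBall 0 r \ P i) := by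
      intro x hx
      by_cases h : x ∈ ⋂ i, P i
      · exact Or.inl ⟨hx, h⟩
      · right
        rw [mem_iInter, not_forall] at h
        obtain ⟨i, hi⟩ := h
        exact mem_iUnion.2 ⟨i, hx, hi⟩
    have hpiece : ∀ i, volume.real (closedBall (0 : Ed d) r \ P i)
        ≤ 1 / ((n:ℝ)+1) * volume.real (closedBall (0 : Ed d) r) := by
      intro i
      have e1 : volume.real (closedBall (t i) r) = volume.real (closedBall (0 : Ed d) r) := by
        simp only [measureReal_def, Measure.addHaar_closedBall_center]
      have hpre : closedBall (0 : Ed d) r ∩ P i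
          = (fun a => a + t i) ⁻¹' (S i ∩ closedBall (t i) r) := by
        ext x; simp [P, mem_closedBall, dist_eq_norm, and_comm]
      have e2 : volume.real (closedBall (0 : Ed d) r ∩ P i)
          = volume.real (S i ∩ closedBall (t i) r) := by
        rw [hpre, measureReal_def, measure_preimage_add_right, measureReal_def]
      have e3 := measureReal_sdiff_add_inter (μ := (volume : Measure (Ed d)))
        (s := closedBall (0 : Ed d) r) (hPm i) hbt
      have := hr1 i
      rw [e1] at this
      nlinarith
    have h1 : volume.real (closedBall (0 : Ed d) r) ≤
        volume.real A + ∑ i, volume.real (closedBall (0 : Ed d) r \ P i) := by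
      have hfin : volume (A ∪ ⋃ i, (closedBall (0 : Ed d) r \ P i)) ≠ ⊤ := by
        refine measure_ne_top_of_subset ?_ hbt
        exact union_subset inter_subset_left (iUnion_subset fun i => sdiff_subset)
      calc volume.real (closedBall (0 : Ed d) r) ≤ _ := measureReal_mono hcover hfin
        _ ≤ _ := measureReal_union_le _ _
        _ ≤ _ := by gcongr; exact measureReal_iUnion_fintype_le _
    have hA' : volume.real A = 0 := by simp [measureReal_def, hA]
    have h2 : ∑ i, volume.real (closedBall (0 : Ed d) r \ P i) ≤
        ∑ _i : Fin n, 1 / ((n:ℝ)+1) * volume.real (closedBall (0 : Ed d) r) :=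
      Finset.sum_le_sum fun i _ => hpiece i
    simp only [Finset.sum_const, Finset.card_univ, Fintype.card_fin, nsmul_eq_mul] at h2
    have h3 : (n:ℝ) * (1 / ((n:ℝ)+1) * volume.real (closedBall (0 : Ed d) r))
        < volume.real (closedBall (0 : Ed d) r) := by
      have : (n:ℝ) * (1 / ((n:ℝ)+1)) < 1 := by
        rw [mul_one_div, div_lt_one (by positivity)]; linarith
      rw [← mul_assoc]; nlinarith
    linarith
  · intro i a ha
    exact mem_iInter.1 ha.2 i
  · intro i j hij a ha b hb heq
    have h1 := hr2 i j hij
    have ha' := ha.1; have hb' := hb.1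
    rw [mem_closedBall_zero_iff] at ha' hb'
    have : t i - t j = b - a := by
      rw [sub_eq_sub_iff_add_eq_add]; rw [add_comm, heq]
    rw [dist_eq_norm, this] at h1
    linarith [norm_sub_le b a]

/-- `(x, T x)` lies in the support of the plan induced by `T` on `Ω`. -/
def GoodPt {d : ℕ} (Ω : Set (Ed d)) (T : Ed d → Ed d) (x : Ed d) : Prop :=
  ∀ ε : ℝ, 0 < ε → volume {x' | x' ∈ Ω ∧ ‖x' - x‖ < ε ∧ ‖T x' - T x‖ < ε} ≠ 0

lemma ae_goodPt {d : ℕ} {Ω : Set (Ed d)} {T : Ed d → Ed d}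
    (hT : Measurable T) : ∀ᵐ x ∂(volume.restrict Ω), GoodPt Ω T x := by
  have hm : Measurable (fun x => (x, T x)) := measurable_id.prodMk hT
  have h := support_mem_ae (μ := (volume.restrict Ω).map (fun x => (x, T x)))
  have h2 := ae_of_ae_map hm.aemeasurable h
  filter_upwards [h2] with x hx ε hε h0
  change (x, T x) ∈ Measure.support _ at hx
  rw [mem_support_iff_forall] at hx
  have h3 := hx (ball x ε ×ˢ ball (T x) ε)
    (prod_mem_nhds (ball_mem_nhds _ hε) (ball_mem_nhds _ hε))
  rw [map_apply hm (measurableSet_ball.prod measurableSet_ball),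
    restrict_apply (hm (measurableSet_ball.prod measurableSet_ball))] at h3
  refine h3.ne' (measure_mono_null ?_ h0)
  rintro y ⟨hy, hyΩ⟩
  simp only [mem_preimage, mem_prod, mem_ball, dist_eq_norm] at hy
  exact ⟨hyΩ, hy.1, hy.2⟩

lemma aux_norm_add_sq_bounds {d : ℕ} (P e : Ed d) {ε : ℝ} (he : ‖e‖ ≤ 2 * ε) :
    ‖P + e‖ ^ 2 ≤ (‖P‖ + 2 * ε) ^ 2 ∧ ‖P‖ ^ 2 - 4 * ε * ‖P‖ ≤ ‖P + e‖ ^ 2 := by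
  constructor
  · have := norm_add_le P e
    gcongr; linarith
  · rw [norm_add_sq_real]
    have := abs_real_inner_le_norm P e
    have h2 := (abs_le.1 this).1
    have : ‖P‖ * ‖e‖ ≤ ‖P‖ * (2 * ε) := by gcongr
    nlinarith [sq_nonneg ‖e‖]

/-- Permutation form of cyclical monotonicity. If it failed, permuting small translated sets around
the points `x i` would give a strictly cheaper transport map. -/
lemma optMap_perm_ineq {d : ℕ} (hd : 2 ≤ d) {Ω : Set (Ed d)} (hΩ : MeasurableSet Ω)
    {μ : Measure (Ed d)} {T : Ed d → Ed d} (hopt : IsOptMap Ω μ T)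
    (hfin : ∫⁻ x in Ω, ENNReal.ofReal (‖T x - x‖ ^ 2) ≠ ⊤)
    {n : ℕ} (x : Fin n → Ed d) (hx : ∀ i, GoodPt Ω T (x i)) (σ : Equiv.Perm (Fin n)) :
    ∑ i, ‖T (x i) - x i‖ ^ 2 ≤ ∑ i, ‖T (x (σ i)) - x i‖ ^ 2 := by
  classical
  obtain ⟨hT, hTmap, hmin⟩ := hopt
  by_contra! hlt
  obtain ⟨ε, hε, hεlt⟩ : ∃ ε : ℝ, 0 < ε ∧ ∑ i, (‖T (x (σ i)) - x i‖ + 2 * ε) ^ 2 <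
      ∑ i, (‖T (x i) - x i‖ ^ 2 - 4 * ε * ‖T (x i) - x i‖) := by
    have hc : Continuous fun ε : ℝ => ∑ i, (‖T (x (σ i)) - x i‖ + 2 * ε) ^ 2 -
      ∑ i, (‖T (x i) - x i‖ ^ 2 - 4 * ε * ‖T (x i) - x i‖) := by fun_prop
    have h0 := (hc.tendsto 0).mono_left (nhdsWithin_le_nhds (s := Ioi 0))
    have h1 : ∑ i, (‖T (x (σ i)) - x i‖ + 2 * 0) ^ 2 -
      ∑ i, (‖T (x i) - x i‖ ^ 2 - 4 * 0 * ‖T (x i) - x i‖) < 0 := by simpa using hlt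
    obtain ⟨ε, h2, h3⟩ := ((h0.eventually_lt_const h1).and self_mem_nhdsWithin).exists
    exact ⟨ε, h3, by linarith⟩
  let S : Fin n → Set (Ed d) := fun i => {x' | x' ∈ Ω ∧ ‖x' - x i‖ < ε ∧ ‖T x' - T (x i)‖ < ε}
  have hSm : ∀ i, MeasurableSet (S i) := fun i => by
    refine hΩ.inter (MeasurableSet.inter ?_ ?_)
    · exact measurableSet_lt (measurable_id.sub_const _).norm measurable_const
    · exact measurableSet_lt (hT.sub_const _).norm measurable_const
  obtain ⟨A, t, hAm, hA0, hAt, hAS, hdisj⟩ :=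
    exists_common_translates hd S hSm (fun i => hx i ε hε)
  let B : Fin n → Set (Ed d) := fun i => (fun y => y + (- t i)) ⁻¹' A
  have hBm : ∀ i, MeasurableSet (B i) := fun i => (measurable_add_const _) hAm
  have hBvol : ∀ i, volume (B i) = volume A := fun i => measure_preimage_add_right _ _ _
  have hBS : ∀ i, ∀ y ∈ B i, y ∈ S i := fun i y hy => by
    have := hAS i _ hy
    simpa using this
  have hBdisj : ∀ i j, i ≠ j → ∀ y, y ∈ B i → y ∉ B j := by
    intro i j hij y hyi hyj
    exact hdisj i j hij _ hyi _ hyj (by simp)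
  let R : Set (Ed d) := Ω \ ⋃ i, B i
  have hRm : MeasurableSet R := hΩ.diff (MeasurableSet.iUnion hBm)
  have hdec : volume.restrict Ω = volume.restrict R + ∑ i, volume.restrict (B i) := by
    have hsub : (⋃ i, B i) ⊆ Ω := iUnion_subset fun i y hy => (hBS i y hy).1
    have h1 : volume.restrict Ω = volume.restrict R + volume.restrict (⋃ i, B i) := by
      rw [← restrict_union disjoint_sdiff_left (MeasurableSet.iUnion hBm), sdiff_union_of_subset hsub]
    rw [h1, restrict_iUnion (fun i j hij => disjoint_left.2 (hBdisj i j hij)) hBm,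
      Measure.sum_fintype]
  let ρ : Ed d → Ed d := fun y => y + ∑ i, (B i).indicator (fun _ => t (σ i) - t i) y
  have hρm : Measurable ρ := measurable_id.add
    (Finset.measurable_sum _ fun i _ => measurable_const.indicator (hBm i))
  have hρB : ∀ i, ∀ y ∈ B i, ρ y = y + (t (σ i) - t i) := by
    intro i y hy
    simp only [ρ]
    rw [Finset.sum_eq_single i]
    · rw [indicator_of_mem hy]
    · intro j _ hj
      exact indicator_of_notMem (hBdisj i j hj.symm y hy) _
    · simp
  have hρR : ∀ y ∈ R, ρ y = y := by
    intro y hy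
    simp only [ρ]
    rw [Finset.sum_eq_zero, add_zero]
    intro j _
    exact indicator_of_notMem (fun h => hy.2 (mem_iUnion.2 ⟨j, h⟩)) _
  have hmapR : (volume.restrict R).map ρ = volume.restrict R := by
    have : ρ =ᵐ[volume.restrict R] id := by
      filter_upwards [ae_restrict_mem hRm] with y hy using hρR y hy
    rw [Measure.map_congr this, Measure.map_id]
  have hmapB : ∀ i, (volume.restrict (B i)).map ρ = volume.restrict (B (σ i)) := by
    intro i
    have h1 : ρ =ᵐ[volume.restrict (B i)] fun y => y + (t (σ i) - t i) := by
      filter_upwards [ae_restrict_mem (hBm i)] with y hy using hρB i y hy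
    rw [Measure.map_congr h1]
    have h2 : B i = (fun y => y + (t (σ i) - t i)) ⁻¹' B (σ i) := by
      ext y
      simp only [B, mem_preimage]
      rw [show y + (t (σ i) - t i) + -t (σ i) = y + - t i by abel]
    rw [h2]
    exact ((measurePreserving_add_right volume (t (σ i) - t i)).restrict_preimage
      (hBm (σ i))).map_eq
  have hmapρ : (volume.restrict Ω).map ρ = volume.restrict Ω := by
    conv_lhs => rw [hdec]
    rw [Measure.map_add _ _ hρm, hmapR, hdec]
    congr 1
    have : Measure.map ρ (∑ i, volume.restrict (B i))
        = ∑ i, Measure.map ρ (volume.restrict (B i)) := by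
      rw [← Measure.mapₗ_apply_of_measurable hρm, _root_.map_sum]
      simp only [Measure.mapₗ_apply_of_measurable hρm]
    rw [this]
    simp only [hmapB]
    exact Equiv.sum_comp σ fun i => volume.restrict (B i)
  have hle := hmin (T ∘ ρ) (hT.comp hρm) (by rw [← Measure.map_map hT hρm, hmapρ, hTmap])
  have hsplit : ∀ g : Ed d → ℝ≥0∞, ∫⁻ y in Ω, g y = (∫⁻ y in R, g y) + ∑ i, ∫⁻ y in B i, g y := by
    intro g
    rw [hdec, lintegral_add_measure, lintegral_finsetSum_measure]
  rw [hsplit, hsplit] at hle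
  have hReq : ∫⁻ y in R, ENNReal.ofReal (‖(T ∘ ρ) y - y‖ ^ 2)
      = ∫⁻ y in R, ENNReal.ofReal (‖T y - y‖ ^ 2) := by
    refine setLIntegral_congr_fun hRm fun y hy => ?_
    simp only [Function.comp, hρR y hy]
  have hRfin : ∫⁻ y in R, ENNReal.ofReal (‖T y - y‖ ^ 2) ≠ ⊤ :=
    ne_top_of_le_ne_top hfin (lintegral_mono_set sdiff_subset)
  rw [hReq, ENNReal.add_le_add_iff_left hRfin] at hle
  have hlow : ∀ i, ENNReal.ofReal (‖T (x i) - x i‖ ^ 2 - 4 * ε * ‖T (x i) - x i‖) * volume A ≤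
      ∫⁻ y in B i, ENNReal.ofReal (‖T y - y‖ ^ 2) := by
    intro i
    rw [← hBvol i, ← setLIntegral_const]
    refine setLIntegral_mono' (hBm i) fun y hy => ENNReal.ofReal_le_ofReal ?_
    have h := hBS i y hy
    have e : T y - y = (T (x i) - x i) + ((T y - T (x i)) - (y - x i)) := by abel
    rw [e]
    refine (aux_norm_add_sq_bounds _ _ ?_).2
    linarith [norm_sub_le (T y - T (x i)) (y - x i), h.2.1, h.2.2]
  have hup : ∀ i, ∫⁻ y in B i, ENNReal.ofReal (‖(T ∘ ρ) y - y‖ ^ 2) ≤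
      ENNReal.ofReal ((‖T (x (σ i)) - x i‖ + 2 * ε) ^ 2) * volume A := by
    intro i
    rw [← hBvol i, ← setLIntegral_const]
    refine setLIntegral_mono' (hBm i) fun y hy => ENNReal.ofReal_le_ofReal ?_
    have h := hBS i y hy
    have hy' : ρ y ∈ B (σ i) := by
      rw [hρB i y hy]
      simp only [B, mem_preimage]
      rw [show y + (t (σ i) - t i) + -t (σ i) = y + - t i by abel]
      exact hy
    have h' := hBS (σ i) _ hy'
    have e : (T ∘ ρ) y - y = (T (x (σ i)) - x i) + ((T (ρ y) - T (x (σ i))) - (y - x i)) := by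
      simp only [Function.comp]; abel
    rw [e]
    refine (aux_norm_add_sq_bounds _ _ ?_).1
    linarith [norm_sub_le (T (ρ y) - T (x (σ i))) (y - x i), h.2.1, h'.2.2]
  have hfinal : (∑ i, ENNReal.ofReal (‖T (x i) - x i‖ ^ 2 - 4 * ε * ‖T (x i) - x i‖)) * volume A ≤
      (∑ i, ENNReal.ofReal ((‖T (x (σ i)) - x i‖ + 2 * ε) ^ 2)) * volume A := by
    rw [Finset.sum_mul, Finset.sum_mul]
    exact (Finset.sum_le_sum fun i _ => hlow i).trans
      (hle.trans (Finset.sum_le_sum fun i _ => hup i))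
  rw [ENNReal.mul_le_mul_iff_left hA0 hAt] at hfinal
  rw [← ENNReal.ofReal_sum_of_nonneg (f := fun i => (‖T (x (σ i)) - x i‖ + 2 * ε) ^ 2)
    (fun i _ => sq_nonneg _)] at hfinal
  have h1 : ENNReal.ofReal (∑ i, (‖T (x i) - x i‖ ^ 2 - 4 * ε * ‖T (x i) - x i‖)) ≤
      ∑ i, ENNReal.ofReal (‖T (x i) - x i‖ ^ 2 - 4 * ε * ‖T (x i) - x i‖) := by
    induction (Finset.univ : Finset (Fin n)) using Finset.induction_on with
    | empty => simp
    | insert a s ha ih =>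
      rw [Finset.sum_insert ha, Finset.sum_insert ha]
      exact ENNReal.ofReal_add_le.trans (by gcongr)
  have h2 := h1.trans hfinal
  rw [ENNReal.ofReal_le_ofReal_iff (Finset.sum_nonneg fun i _ => by positivity)] at h2
  linarith

/-- Chain form of cyclical monotonicity. -/
lemma optMap_cyclic {d : ℕ} (hd : 2 ≤ d) {Ω : Set (Ed d)} (hΩ : MeasurableSet Ω)
    {μ : Measure (Ed d)} {T : Ed d → Ed d} (hopt : IsOptMap Ω μ T)
    (hfin : ∫⁻ x in Ω, ENNReal.ofReal (‖T x - x‖ ^ 2) ≠ ⊤)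
    (k : ℕ) (y : ℕ → Ed d) (hy : ∀ i, GoodPt Ω T (y i)) :
    (∑ i ∈ Finset.range (k + 1), inner ℝ (T (y i)) (y (i + 1) - y i))
      + inner ℝ (T (y (k + 1))) (y 0 - y (k + 1)) ≤ 0 := by
  have h := optMap_perm_ineq hd hΩ hopt hfin (n := k + 2) (fun i => y i) (fun i => hy i)
    (finRotate (k + 2)).symm
  have h2 : ∑ i : Fin (k + 2), ‖T (y ((finRotate (k + 2)).symm i)) - y i‖ ^ 2
      = ∑ i : Fin (k + 2), ‖T (y i) - y (finRotate (k + 2) i)‖ ^ 2 := by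
    rw [← Equiv.sum_comp (finRotate (k + 2))]
    simp
  have h3 : ∑ i : Fin (k + 2), ‖y (finRotate (k + 2) i)‖ ^ 2 = ∑ i : Fin (k + 2), ‖y i‖ ^ 2 :=
    Equiv.sum_comp (finRotate (k + 2)) fun i : Fin (k + 2) => ‖y i‖ ^ 2
  rw [h2] at h
  have key : ∑ i : Fin (k + 2), inner ℝ (T (y i)) (y (finRotate (k + 2) i) - y i) ≤ 0 := by
    have : ∑ i : Fin (k + 2), 2 * inner ℝ (T (y i)) (y (finRotate (k + 2) i) - y i)
        = ∑ i : Fin (k + 2), ‖T (y i) - y i‖ ^ 2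
          - ∑ i : Fin (k + 2), ‖T (y i) - y (finRotate (k + 2) i)‖ ^ 2
          + (∑ i : Fin (k + 2), ‖y (finRotate (k + 2) i)‖ ^ 2 - ∑ i : Fin (k + 2), ‖y i‖ ^ 2) := by
      rw [← Finset.sum_sub_distrib, ← Finset.sum_sub_distrib, ← Finset.sum_add_distrib]
      refine Finset.sum_congr rfl fun i _ => ?_
      rw [norm_sub_sq_real, norm_sub_sq_real, inner_sub_right]
      ring
    rw [← Finset.mul_sum] at this
    rw [h3] at this
    linarith
  rw [Fin.sum_univ_castSucc] at key
  have e : ∀ i : Fin (k + 1), ((finRotate (k + 2) i.castSucc : Fin (k + 2)) : ℕ) = i + 1 := by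
    intro i
    rw [coe_finRotate_of_ne_last (Fin.castSucc_lt_last i).ne]; simp
  simp only [e, Fin.val_castSucc, finRotate_last, Fin.val_zero, Fin.val_last] at key
  rwa [Finset.sum_range fun i => inner ℝ (T (y i)) (y (i + 1) - y i)]

/-- A measurable map `T` on `Ω` together with a pair of Kantorovich potentials: `f + |x|²/2` is a
Lipschitz function having `T x` as subgradient and gradient at each point of the conull set `G`,
and `χ` is the conjugate potential on the target side. -/
structure Pot {d : ℕ} (Ω : Set (Ed d)) (T : Ed d → Ed d) (G : Set (Ed d)) (f χ : Ed d → ℝ) :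
    Prop where
  Tm : Measurable T
  Ωm : MeasurableSet Ω
  Ωb : Bornology.IsBounded Ω
  ball_sub : ball (0 : Ed d) 2 ⊆ Ω
  Gm : MeasurableSet G
  GΩ : G ⊆ Ω
  Gae : ∀ᵐ x ∂(volume.restrict Ω), x ∈ G
  Tbdd : ∃ R : ℝ, ∀ x ∈ G, ‖T x‖ ≤ R
  flip : ∃ R : ℝ≥0, LipschitzWith R fun x => f x + ‖x‖ ^ 2 / 2
  χm : Measurable χ
  grad : ∀ x ∈ G, HasFDerivAt f (innerSL ℝ (T x - x)) x
  sub : ∀ x ∈ G, ∀ x', f x + inner ℝ (T x - x) (x' - x) - ‖x' - x‖ ^ 2 / 2 ≤ f x'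
  eqχ : ∀ x ∈ G, χ (T x) = ‖T x - x‖ ^ 2 / 2 + f x
  leχ : ∀ y, ∀ x ∈ ball (0 : Ed d) 2, χ y ≤ ‖y - x‖ ^ 2 / 2 + f x

/-- A subgradient at a point of differentiability is the gradient. -/
lemma hasFDerivAt_of_subgradient {d : ℕ} {ψ : Ed d → ℝ} {x p : Ed d}
    (hd : DifferentiableAt ℝ ψ x) (hs : ∀ x', ψ x + inner ℝ p (x' - x) ≤ ψ x') :
    HasFDerivAt ψ (innerSL ℝ p) x := by
  have h := hd.hasFDerivAt
  have h1 : HasFDerivAt (fun y => ψ y - innerSL ℝ p y) (fderiv ℝ ψ x - innerSL ℝ p) x :=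
    h.sub (innerSL ℝ p).hasFDerivAt
  have h2 : IsLocalMin (fun y => ψ y - innerSL ℝ p y) x := by
    refine Filter.Eventually.of_forall fun y => ?_
    have := hs y
    rw [inner_sub_right] at this
    simp only [innerSL_apply_apply]; linarith
  have h3 := h2.hasFDerivAt_eq_zero h1
  rwa [sub_eq_zero.1 h3] at h

/-- Kantorovich potentials of an optimal map, via Rockafellar's construction. -/
lemma exists_potentials {d : ℕ} (hd : 2 ≤ d) {Ω : Set (Ed d)} (hΩ : MeasurableSet Ω)
    (hΩb : Bornology.IsBounded Ω) (hΩB : ball (0 : Ed d) 2 ⊆ Ω)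
    {μ : Measure (Ed d)} {T : Ed d → Ed d} (hopt : IsOptMap Ω μ T)
    {R : ℝ≥0} (hTR : ∀ᵐ x ∂(volume.restrict Ω), ‖T x‖ ≤ R) :
    ∃ (G : Set (Ed d)) (f χ : Ed d → ℝ), Pot Ω T G f χ := by
  classical
  have hT := hopt.1
  obtain ⟨M, hM⟩ := hΩb.exists_norm_le
  have hΩ0 : volume Ω ≠ 0 :=
    (lt_of_lt_of_le (measure_ball_pos volume (0 : Ed d) two_pos) (measure_mono hΩB)).ne'
  have hfin : ∫⁻ x in Ω, ENNReal.ofReal (‖T x - x‖ ^ 2) ≠ ⊤ := by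
    have h1 : ∫⁻ x in Ω, ENNReal.ofReal (‖T x - x‖ ^ 2) ≤
        ∫⁻ x in Ω, ENNReal.ofReal ((R + M) ^ 2) := by
      refine lintegral_mono_ae ?_
      filter_upwards [hTR, ae_restrict_mem hΩ] with x h1 h2
      gcongr
      exact (norm_sub_le _ _).trans (add_le_add h1 (hM _ h2))
    refine (h1.trans_lt ?_).ne
    rw [setLIntegral_const]
    exact ENNReal.mul_lt_top ENNReal.ofReal_lt_top hΩb.measure_lt_top
  let G : Set (Ed d) := {x | x ∈ Ω ∧ GoodPt Ω T x ∧ ‖T x‖ ≤ R}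
  have hG : ∀ᵐ x ∂(volume.restrict Ω), x ∈ G := by
    filter_upwards [ae_goodPt hT, ae_restrict_mem hΩ, hTR] with x h1 h2 h3 using ⟨h2, h1, h3⟩
  obtain ⟨x₀, hx₀⟩ : ∃ x, x ∈ G := by
    have : (ae (volume.restrict Ω)).NeBot := ae_restrict_neBot.2 hΩ0
    exact hG.exists
  -- finite chains in `G` issuing from `x₀`
  let Ch := {p : ℕ × (ℕ → Ed d) // p.2 0 = x₀ ∧ ∀ i, p.2 i ∈ G}
  let val : Ch → Ed d → ℝ := fun c x =>
    (∑ i ∈ Finset.range c.1.1, inner ℝ (T (c.1.2 i)) (c.1.2 (i + 1) - c.1.2 i))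
      + inner ℝ (T (c.1.2 c.1.1)) (x - c.1.2 c.1.1)
  have hext : ∀ (c : Ch) (x : Ed d), x ∈ G → ∃ c' : Ch, ∀ x',
      val c' x' = val c x + inner ℝ (T x) (x' - x) := by
    rintro ⟨⟨k, y⟩, h0, hy⟩ x hx
    refine ⟨⟨⟨k + 1, Function.update y (k + 1) x⟩, ?_, ?_⟩, ?_⟩
    · simpa using h0
    · intro i
      by_cases hi : i = k + 1
      · simp only [hi, Function.update_self]; exact hx
      · simp only [Function.update_of_ne hi]; exact hy i
    · intro x'
      simp only [val, Finset.sum_range_succ, Function.update_self]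
      congr 2
      · refine Finset.sum_congr rfl fun i hi => ?_
        have hi' := Finset.mem_range.1 hi
        rw [Function.update_of_ne (by omega), Function.update_of_ne (by omega)]
      · rw [Function.update_of_ne (by omega)]
  have hcyc : ∀ (c : Ch) (x : Ed d), x ∈ G → val c x ≤ inner ℝ (T x) (x - x₀) := by
    rintro ⟨⟨k, y⟩, h0, hy⟩ x hx
    have h := optMap_cyclic hd hΩ hopt hfin k (Function.update y (k + 1) x) (fun i => by
      by_cases hi : i = k + 1
      · simp only [hi, Function.update_self]; exact hx.2.1
      · simp only [Function.update_of_ne hi]; exact (hy i).2.1)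
    simp only [Finset.sum_range_succ, Function.update_self] at h
    rw [Function.update_of_ne (by omega : (0:ℕ) ≠ k + 1), Function.update_of_ne (by omega : k ≠ k + 1)]
      at h
    have h1 : ∑ i ∈ Finset.range k, inner ℝ (T (Function.update y (k + 1) x i))
        (Function.update y (k + 1) x (i + 1) - Function.update y (k + 1) x i)
        = ∑ i ∈ Finset.range k, inner ℝ (T (y i)) (y (i + 1) - y i) := by
      refine Finset.sum_congr rfl fun i hi => ?_
      have hi' := Finset.mem_range.1 hi
      rw [Function.update_of_ne (by omega), Function.update_of_ne (by omega)]
    rw [h1, show y 0 = x₀ from h0, ← neg_sub x x₀, inner_neg_right] at h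
    simp only [val]
    linarith
  let c₀ : Ch := ⟨⟨0, fun _ => x₀⟩, rfl, fun _ => hx₀⟩
  have hvlip : ∀ (c : Ch) (x x' : Ed d), val c x ≤ val c x' + R * ‖x - x'‖ := by
    rintro ⟨⟨k, y⟩, h0, hy⟩ x x'
    simp only [val]
    have h1 : inner ℝ (T (y k)) (x - y k) = inner ℝ (T (y k)) (x' - y k)
        + inner ℝ (T (y k)) (x - x') := by rw [← inner_add_right]; congr 1; abel
    have h2 := real_inner_le_norm (T (y k)) (x - x')
    have h3 : ‖T (y k)‖ * ‖x - x'‖ ≤ R * ‖x - x'‖ := by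
      gcongr; exact (hy k).2.2
    rw [h1]; linarith
  have hbdd : ∀ x, BddAbove (range fun c => val c x) := by
    intro x
    refine ⟨inner ℝ (T x₀) (x₀ - x₀) + R * ‖x - x₀‖, ?_⟩
    rintro _ ⟨c, rfl⟩
    exact (hvlip c x x₀).trans (add_le_add_left (hcyc c x₀ hx₀) _)
  have : Nonempty Ch := ⟨c₀⟩
  let ψ : Ed d → ℝ := fun x => ⨆ c, val c x
  have hψ : ∀ x ∈ G, ∀ x', ψ x + inner ℝ (T x) (x' - x) ≤ ψ x' := by
    intro x hx x'
    rw [← le_sub_iff_add_le]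
    refine ciSup_le fun c => ?_
    obtain ⟨c', hc'⟩ := hext c x hx
    rw [le_sub_iff_add_le, ← hc']
    exact le_ciSup (hbdd x') c'
  have hψlow : ∀ x ∈ G, -(‖T x₀‖ * (M + M)) ≤ ψ x := by
    intro x hx
    have h1 : val c₀ x ≤ ψ x := le_ciSup (hbdd x) c₀
    have h2 : val c₀ x = inner ℝ (T x₀) (x - x₀) := by simp [val, c₀]
    have h3 := (abs_le.1 (abs_real_inner_le_norm (T x₀) (x - x₀))).1
    have h4 : ‖T x₀‖ * ‖x - x₀‖ ≤ ‖T x₀‖ * (M + M) := by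
      gcongr
      exact (norm_sub_le _ _).trans (add_le_add (hM _ hx.1) (hM _ hx₀.1))
    linarith
  have hψlip : LipschitzWith R ψ := by
    refine LipschitzWith.of_le_add_mul R fun x x' => ?_
    refine ciSup_le fun c => ?_
    rw [dist_eq_norm]
    exact (hvlip c x x').trans (add_le_add_left (le_ciSup (hbdd x') c) _)
  let ψs : Ed d → ℝ := fun y => ⨆ x : G, (inner ℝ (x : Ed d) y - ψ x)
  have hbdds : ∀ y, BddAbove (range fun x : G => inner ℝ (x : Ed d) y - ψ x) := by
    intro y
    refine ⟨M * ‖y‖ + ‖T x₀‖ * (M + M), ?_⟩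
    rintro _ ⟨⟨x, hx⟩, rfl⟩
    have h1 := hψlow x hx
    have h2 := real_inner_le_norm x y
    have h3 : ‖x‖ * ‖y‖ ≤ M * ‖y‖ := by gcongr; exact hM _ hx.1
    simp only
    linarith
  have hψsm : Measurable ψs := by
    refine LowerSemicontinuous.measurable (lowerSemicontinuous_ciSup hbdds fun x => ?_)
    exact Continuous.lowerSemicontinuous (by fun_prop)
  have : Nonempty G := ⟨⟨x₀, hx₀⟩⟩
  have hψsT : ∀ x ∈ G, ψs (T x) = inner ℝ x (T x) - ψ x := by
    intro x hx
    apply le_antisymm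
    · refine ciSup_le fun x' => ?_
      have := hψ x hx x'
      rw [inner_sub_right, real_inner_comm, real_inner_comm x] at this
      linarith
    · exact le_ciSup (hbdds (T x)) ⟨x, hx⟩
  have hχm : Measurable fun y : Ed d => ‖y‖ ^ 2 / 2 - ψs y :=
    ((measurable_norm.pow_const 2).div_const 2).sub hψsm
  have hle : ∀ y, ∀ x ∈ G, ‖y‖ ^ 2 / 2 - ψs y ≤ ‖y - x‖ ^ 2 / 2 + (ψ x - ‖x‖ ^ 2 / 2) := by
    intro y x hx
    rw [norm_sub_sq_real]
    have : inner ℝ x y - ψ x ≤ ψs y := le_ciSup (hbdds y) ⟨x, hx⟩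
    rw [real_inner_comm] at this
    linarith
  let Gd : Set (Ed d) := G ∩ {x | DifferentiableAt ℝ ψ x}
  have hGd : ∀ᵐ x ∂(volume.restrict Ω), x ∈ Gd := by
    filter_upwards [hG, ae_restrict_of_ae hψlip.ae_differentiableAt] with x h1 h2 using ⟨h1, h2⟩
  let G' : Set (Ed d) := Ω ∩ (toMeasurable (volume.restrict Ω) Gdᶜ)ᶜ
  have hG'G : G' ⊆ Gd := by
    rintro x ⟨-, hx⟩
    by_contra h
    exact hx (subset_toMeasurable _ _ h)
  have hG'ae : ∀ᵐ x ∂(volume.restrict Ω), x ∈ G' := by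
    have h1 : volume.restrict Ω (toMeasurable (volume.restrict Ω) Gdᶜ) = 0 := by
      rw [measure_toMeasurable]; exact hGd
    have h2 : ∀ᵐ x ∂(volume.restrict Ω), x ∈ (toMeasurable (volume.restrict Ω) Gdᶜ)ᶜ :=
      compl_mem_ae_iff.2 h1
    filter_upwards [h2, ae_restrict_mem hΩ] with x h1 h2 using ⟨h2, h1⟩
  have hψf : (fun x : Ed d => (ψ x - ‖x‖ ^ 2 / 2) + ‖x‖ ^ 2 / 2) = ψ := by ext x; ring
  have hdense : ball (0 : Ed d) 2 ⊆ closure G' := by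
    have h1 : ∀ᵐ x ∂(volume.restrict (ball (0 : Ed d) 2)), x ∈ G' := ae_restrict_of_ae_restrict_of_subset hΩB hG'ae
    intro x hx
    by_contra hn
    have hop : IsOpen (ball (0 : Ed d) 2 ∩ (closure G')ᶜ) :=
      isOpen_ball.inter isClosed_closure.isOpen_compl
    have h2 := hop.measure_pos volume ⟨x, hx, hn⟩
    have h3 := (ae_restrict_iff' measurableSet_ball).1 h1
    refine h2.ne' (measure_mono_null ?_ h3)
    rintro y ⟨hy, hyn⟩ h
    exact hyn (subset_closure (h hy))
  refine ⟨G', fun x => ψ x - ‖x‖ ^ 2 / 2, fun y => ‖y‖ ^ 2 / 2 - ψs y, hT, hΩ, hΩb, hΩB,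
    hΩ.inter (measurableSet_toMeasurable _ _).compl, inter_subset_left, hG'ae,
    ⟨R, fun x hx => (hG'G hx).1.2.2⟩, ⟨R, by rw [hψf]; exact hψlip⟩, hχm, ?_, ?_, ?_, ?_⟩
  · intro x hx
    have h1 := hasFDerivAt_of_subgradient (hG'G hx).2 (hψ x (hG'G hx).1)
    have h2 : HasFDerivAt (fun y : Ed d => (1 / 2 : ℝ) * ‖y‖ ^ 2) ((1 / 2 : ℝ) • (2 • innerSL ℝ x)) x :=
      ((hasStrictFDerivAt_norm_sq x).hasFDerivAt).const_mul (1 / 2 : ℝ)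
    have h3 := h1.sub h2
    have h4 : (fun x => ψ x - ‖x‖ ^ 2 / 2) = ψ - fun y : Ed d => (1 / 2 : ℝ) * ‖y‖ ^ 2 := by
      ext y; simp only [Pi.sub_apply]; ring
    rw [h4]
    refine h3.congr_fderiv ?_
    ext y
    simp
  · intro x hx x'
    have h1 := hψ x (hG'G hx).1 x'
    simp only [inner_sub_left]
    have h2 : ‖x'‖ ^ 2 = ‖x‖ ^ 2 + 2 * inner ℝ x (x' - x) + ‖x' - x‖ ^ 2 := by
      rw [← norm_add_sq_real]; congr 2; abel
    linarith
  · intro x hx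
    rw [hψsT x (hG'G hx).1, norm_sub_sq_real, real_inner_comm]; ring
  · intro y x hx
    have hc : IsClosed {x : Ed d | ‖y‖ ^ 2 / 2 - ψs y ≤ ‖y - x‖ ^ 2 / 2 + (ψ x - ‖x‖ ^ 2 / 2)} := by
      refine isClosed_le continuous_const ?_
      have := hψlip.continuous
      fun_prop
    exact hc.closure_subset_iff.2 (fun x hx => hle y x (hG'G hx).1) (hdense hx)

/-! ### Quantitative bounds on the potential -/

lemma lintegral_sq_le {α : Type*} [MeasurableSpace α] (ν : Measure α) {a : α → ℝ≥0∞}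
    (ha : AEMeasurable a ν) : (∫⁻ x, a x ∂ν) ^ 2 ≤ ν univ * ∫⁻ x, a x ^ 2 ∂ν := by
  have h := ENNReal.lintegral_mul_le_Lp_mul_Lq ν Real.HolderConjugate.two_two
    (aemeasurable_const (b := (1 : ℝ≥0∞))) ha
  simp only [Pi.mul_apply, one_mul, ENNReal.rpow_two, one_pow, lintegral_one] at h
  calc (∫⁻ x, a x ∂ν) ^ 2 ≤ (ν univ ^ (1 / 2 : ℝ) * (∫⁻ x, a x ^ 2 ∂ν) ^ (1 / 2 : ℝ)) ^ 2 := by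
        gcongr
    _ = _ := by
        rw [mul_pow, ← ENNReal.rpow_two, ← ENNReal.rpow_two, ← ENNReal.rpow_mul,
          ← ENNReal.rpow_mul]
        norm_num

lemma ofReal_sq_eq_enorm (a : ℝ) : ENNReal.ofReal (a ^ 2) = ‖a‖ₑ ^ 2 := by
  rw [← sq_abs, ENNReal.ofReal_pow (abs_nonneg a), Real.enorm_eq_ofReal_abs]

lemma ofReal_norm_sq_eq_enorm {E : Type*} [SeminormedAddCommGroup E] (a : E) :
    ENNReal.ofReal (‖a‖ ^ 2) = ‖a‖ₑ ^ 2 := by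
  rw [ENNReal.ofReal_pow (norm_nonneg a), ofReal_norm]

namespace Pot
variable {d : ℕ} {Ω : Set (Ed d)} {T : Ed d → Ed d} {G : Set (Ed d)} {f χ : Ed d → ℝ}

lemma cont (P : Pot Ω T G f χ) : Continuous f := by
  obtain ⟨R, hR⟩ := P.flip
  have h : f = fun x => (f x + ‖x‖ ^ 2 / 2) - ‖x‖ ^ 2 / 2 := by ext x; ring
  rw [h]
  have := hR.continuous
  exact this.sub (by fun_prop)

lemma lipOn (P : Pot Ω T G f χ) (ρ : ℝ) (hρ : 0 ≤ ρ) :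
    ∃ K : ℝ≥0, LipschitzOnWith K f (closedBall 0 ρ) := by
  obtain ⟨R, hR⟩ := P.flip
  refine ⟨R + ρ.toNNReal, LipschitzOnWith.of_dist_le_mul fun x hx y hy => ?_⟩
  have h1 := hR.dist_le_mul x y
  rw [Real.dist_eq, dist_eq_norm] at *
  have hx' : ‖x‖ ≤ ρ := by simpa using hx
  have hy' : ‖y‖ ≤ ρ := by simpa using hy
  have h2 : |‖x‖ ^ 2 / 2 - ‖y‖ ^ 2 / 2| ≤ ρ * ‖x - y‖ := by
    have h3 := abs_norm_sub_norm_le x y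
    rw [show ‖x‖ ^ 2 / 2 - ‖y‖ ^ 2 / 2 = ((‖x‖ + ‖y‖) / 2) * (‖x‖ - ‖y‖) by ring, abs_mul]
    have h4 : |(‖x‖ + ‖y‖) / 2| ≤ ρ := by
      rw [abs_of_nonneg (by positivity)]; linarith
    gcongr
  have h5 : f x - f y = (f x + ‖x‖ ^ 2 / 2 - (f y + ‖y‖ ^ 2 / 2))
    - (‖x‖ ^ 2 / 2 - ‖y‖ ^ 2 / 2) := by ring
  rw [h5]
  refine (abs_sub _ _).trans ?_
  rw [NNReal.coe_add, Real.coe_toNNReal ρ hρ, add_mul]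
  exact add_le_add h1 h2

lemma um (P : Pot Ω T G f χ) : Measurable fun x => T x - x := P.Tm.sub measurable_id

lemma ubdd (P : Pot Ω T G f χ) : ∃ R : ℝ, 0 ≤ R ∧ ∀ x ∈ G, ‖T x - x‖ ≤ R := by
  obtain ⟨R, hR⟩ := P.Tbdd
  obtain ⟨M, hM⟩ := P.Ωb.exists_norm_le
  refine ⟨|R| + |M|, by positivity, fun x hx => (norm_sub_le _ _).trans (add_le_add ?_ ?_)⟩
  · exact (hR x hx).trans (le_abs_self _)
  · exact (hM x (P.GΩ hx)).trans (le_abs_self _)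

lemma Gae2 (P : Pot Ω T G f χ) : ∀ᵐ x : Ed d, x ∈ ball (0 : Ed d) 2 → x ∈ G := by
  have h := P.Gae
  rw [ae_restrict_iff' P.Ωm] at h
  filter_upwards [h] with x hx hx2 using hx (P.ball_sub hx2)

/-- The potential `f` has gradient `T - id`, so its difference quotients are controlled in `L²`. -/
lemma translate (P : Pot Ω T G f χ) (h : Ed d) :
    ∫⁻ x in {x | x ∈ ball (0 : Ed d) 2 ∧ x + h ∈ ball (0 : Ed d) 2},
      ENNReal.ofReal ((f (x + h) - f x) ^ 2) ≤ ENNReal.ofReal (‖h‖ ^ 2) * Elin T := by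
  set S : Set (Ed d) := {x | x ∈ ball (0 : Ed d) 2 ∧ x + h ∈ ball (0 : Ed d) 2} with hS
  have hSm : MeasurableSet S :=
    (measurableSet_ball).inter (measurableSet_ball.preimage (measurable_id.add_const h))
  have hseg : ∀ x ∈ S, ∀ t ∈ Icc (0 : ℝ) 1, x + t • h ∈ ball (0 : Ed d) 2 := by
    rintro x ⟨hx, hxh⟩ t ht
    have := (convex_ball (0 : Ed d) 2).add_smul_sub_mem hx hxh ht
    simpa using this
  let I : Measure ℝ := volume.restrict (Ioc (0 : ℝ) 1)
  let U : Ed d → ℝ≥0∞ := fun x => ‖T x - x‖ₑ ^ 2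
  have hUm : Measurable U := P.um.enorm.pow_const 2
  -- for almost every `x`, almost every point of the segment lies in `G`
  have hae : ∀ᵐ x : Ed d, ∀ᵐ t ∂I, x + t • h ∈ ball (0 : Ed d) 2 → x + t • h ∈ G := by
    have hB : MeasurableSet {x : Ed d | x ∈ ball (0 : Ed d) 2 → x ∈ G} := by
      have : {x : Ed d | x ∈ ball (0 : Ed d) 2 → x ∈ G} = (ball 0 2)ᶜ ∪ G := by
        ext x; simp [imp_iff_not_or]
      rw [this]; exact measurableSet_ball.compl.union P.Gm
    have hm : Measurable fun p : Ed d × ℝ => p.1 + p.2 • h := by fun_prop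
    have h1 : ∀ᵐ p ∂((volume : Measure (Ed d)).prod I), p.1 + p.2 • h ∈ ball (0 : Ed d) 2 →
        p.1 + p.2 • h ∈ G := by
      have h2 : ∀ᵐ p ∂(I.prod (volume : Measure (Ed d))), p.2 + p.1 • h ∈ ball (0 : Ed d) 2 →
          p.2 + p.1 • h ∈ G := by
        refine (ae_prod_iff_ae_ae (p := fun p : ℝ × Ed d => p.2 + p.1 • h ∈ ball (0 : Ed d) 2 →
          p.2 + p.1 • h ∈ G) (hB.preimage (by fun_prop :
            Measurable fun p : ℝ × Ed d => p.2 + p.1 • h))).2 ?_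
        refine Filter.Eventually.of_forall fun t => ?_
        exact (measurePreserving_add_right volume (t • h)).quasiMeasurePreserving.ae P.Gae2
      exact (measurePreserving_swap (μ := (volume : Measure (Ed d))) (ν := I)).quasiMeasurePreserving.ae h2
    exact ae_ae_of_ae_prod h1
  have hpt : ∀ᵐ x ∂(volume.restrict S), ENNReal.ofReal ((f (x + h) - f x) ^ 2) ≤
      ‖h‖ₑ ^ 2 * ∫⁻ t, U (x + t • h) ∂I := by
    filter_upwards [ae_restrict_of_ae hae, ae_restrict_mem hSm] with x hx hxS
    let g : ℝ → ℝ := fun t => f (x + t • h)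
    have hg : AbsolutelyContinuousOnInterval g 0 1 := by
      obtain ⟨K, hK⟩ := P.lipOn 2 zero_le_two
      have hl : LipschitzOnWith (K * ‖h‖₊) g (uIcc 0 1) := by
        refine hK.comp (f := fun t : ℝ => x + t • h) (LipschitzOnWith.of_dist_le_mul ?_) ?_
        · intro s _ t _
          rw [dist_add_left, dist_eq_norm, ← sub_smul, norm_smul, mul_comm, Real.dist_eq]; rfl
        · intro t ht
          rw [uIcc_of_le zero_le_one] at ht
          exact ball_subset_closedBall (hseg x hxS t ht)
      exact hl.absolutelyContinuousOnInterval
    have h1 := hg.integral_deriv_eq_sub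
    have h2 : f (x + h) - f x = ∫ t, deriv g t ∂I := by
      rw [intervalIntegral.integral_of_le zero_le_one] at h1
      rw [h1]; simp [g]
    rw [ofReal_sq_eq_enorm, h2]
    have h3 : ‖∫ t, deriv g t ∂I‖ₑ ≤ ∫⁻ t, ‖deriv g t‖ₑ ∂I := enorm_integral_le_lintegral_enorm _
    have h4 : ∫⁻ t, ‖deriv g t‖ₑ ∂I ≤ ∫⁻ t, ‖h‖ₑ * ‖T (x + t • h) - (x + t • h)‖ₑ ∂I := by
      refine lintegral_mono_ae ?_
      filter_upwards [hx, ae_restrict_mem measurableSet_Ioc] with t ht htI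
      have hG := ht (hseg x hxS t (Ioc_subset_Icc_self htI))
      have hd : HasDerivAt g (inner ℝ (T (x + t • h) - (x + t • h)) h) t := by
        have h5 : HasDerivAt (fun t : ℝ => x + t • h) h t := by
          simpa using ((hasDerivAt_id t).smul_const h).const_add x
        exact (P.grad _ hG).comp_hasDerivAt t h5
      rw [hd.deriv, ← ofReal_norm, ← ofReal_norm, ← ofReal_norm,
        ← ENNReal.ofReal_mul (norm_nonneg _), mul_comm]
      exact ENNReal.ofReal_le_ofReal (norm_inner_le_norm _ _)
    have hm2 : Measurable fun t : ℝ => ‖T (x + t • h) - (x + t • h)‖ₑ :=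
      (P.um.comp (by fun_prop : Measurable fun t : ℝ => x + t • h)).enorm
    have hI : I univ = 1 := by simp [I]
    calc ‖∫ t, deriv g t ∂I‖ₑ ^ 2
        ≤ (∫⁻ t, ‖h‖ₑ * ‖T (x + t • h) - (x + t • h)‖ₑ ∂I) ^ 2 := by gcongr; exact h3.trans h4
      _ = ‖h‖ₑ ^ 2 * (∫⁻ t, ‖T (x + t • h) - (x + t • h)‖ₑ ∂I) ^ 2 := by
          rw [lintegral_const_mul _ hm2, mul_pow]
      _ ≤ ‖h‖ₑ ^ 2 * (I univ * ∫⁻ t, ‖T (x + t • h) - (x + t • h)‖ₑ ^ 2 ∂I) := by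
          gcongr
          exact lintegral_sq_le _ hm2.aemeasurable
      _ = _ := by rw [hI, one_mul]
  refine (lintegral_mono_ae hpt).trans ?_
  have hm3 : Measurable fun p : Ed d × ℝ => U (p.1 + p.2 • h) := hUm.comp (by fun_prop)
  rw [lintegral_const_mul _ hm3.lintegral_prod_right', lintegral_lintegral_swap hm3.aemeasurable,
    ← ofReal_norm_sq_eq_enorm]
  gcongr
  have hI : I univ = 1 := by simp [I]
  calc ∫⁻ t, (∫⁻ x in S, U (x + t • h)) ∂I ≤ ∫⁻ t, Elin T ∂I := by
        refine lintegral_mono_ae ?_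
        filter_upwards [ae_restrict_mem measurableSet_Ioc] with t ht
        have h1 : ∫⁻ x in S, U (x + t • h) ≤
            ∫⁻ x in (fun x => x + t • h) ⁻¹' ball (0 : Ed d) 2, U (x + t • h) :=
          lintegral_mono_set fun x hx => hseg x hx t (Ioc_subset_Icc_self ht)
        refine h1.trans (le_of_eq ?_)
        rw [(measurePreserving_add_right volume (t • h)).setLIntegral_comp_preimage
          measurableSet_ball hUm]
        simp only [U, Elin, ofReal_norm_sq_eq_enorm]
    _ = Elin T := by rw [lintegral_const, hI, mul_one]
end Pot

namespace Pot
variable {d : ℕ} {Ω : Set (Ed d)} {T : Ed d → Ed d} {G : Set (Ed d)} {f χ : Ed d → ℝ}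

/-- The potentials are determined up to a common additive constant. -/
lemma shift (P : Pot Ω T G f χ) (c : ℝ) : Pot Ω T G (fun x => f x - c) (fun y => χ y - c) where
  Tm := P.Tm
  Ωm := P.Ωm
  Ωb := P.Ωb
  ball_sub := P.ball_sub
  Gm := P.Gm
  GΩ := P.GΩ
  Gae := P.Gae
  Tbdd := P.Tbdd
  flip := by
    obtain ⟨R, hR⟩ := P.flip
    refine ⟨R, LipschitzWith.of_dist_le_mul fun x y => ?_⟩
    have := hR.dist_le_mul x y
    rw [Real.dist_eq] at *
    convert this using 2
    ring
  χm := P.χm.sub_const c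
  grad := fun x hx => (P.grad x hx).sub_const c
  sub := fun x hx x' => by have := P.sub x hx x'; linarith
  eqχ := fun x hx => by rw [P.eqχ x hx]; ring
  leχ := fun y x hx => by have := P.leχ y x hx; linarith

lemma integrableOn_of (P : Pot Ω T G f χ) {g : Ed d → ℝ} (hg : Measurable g) {C : ℝ}
    (hC : ∀ x ∈ G, x ∈ ball (0 : Ed d) 2 → |g x| ≤ C) : IntegrableOn g (ball 0 2) := by
  refine Measure.integrableOn_of_bounded (M := C) measure_ball_lt_top.ne hg.aestronglyMeasurable ?_
  filter_upwards [ae_restrict_of_ae P.Gae2, ae_restrict_mem measurableSet_ball] with x h1 h2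
  exact hC x (h1 h2) h2

lemma int_u2 (P : Pot Ω T G f χ) : IntegrableOn (fun x => ‖T x - x‖ ^ 2) (ball 0 2) := by
  obtain ⟨R, hR0, hR⟩ := P.ubdd
  refine P.integrableOn_of (P.um.norm.pow_const 2) (C := R ^ 2) fun x hx _ => ?_
  rw [abs_of_nonneg (by positivity)]
  have := hR x hx
  gcongr

lemma int_u (P : Pot Ω T G f χ) : IntegrableOn (fun x => ‖T x - x‖) (ball 0 2) := by
  obtain ⟨R, hR0, hR⟩ := P.ubdd
  refine P.integrableOn_of P.um.norm (C := R) fun x hx _ => ?_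
  rw [abs_of_nonneg (by positivity)]
  exact hR x hx

lemma _root_.Continuous.integrableOn_ball' {g : Ed d → ℝ} (hg : Continuous g) (x : Ed d) (ρ : ℝ) :
    IntegrableOn g (ball x ρ) :=
  ((hg.locallyIntegrable).integrableOn_isCompact (isCompact_closedBall x ρ)).mono_set
    ball_subset_closedBall

lemma int_f2 (P : Pot Ω T G f χ) : IntegrableOn (fun x => f x ^ 2) (ball 0 2) :=
  (P.cont.pow 2).integrableOn_ball' 0 2

lemma dense (P : Pot Ω T G f χ) {s : Set (Ed d)} (hs : IsOpen s) (h2 : s ⊆ ball 0 2) :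
    s ⊆ closure (G ∩ s) := by
  intro x hx
  by_contra hn
  have hop : IsOpen (s ∩ (closure (G ∩ s))ᶜ) := hs.inter isClosed_closure.isOpen_compl
  have h3 := hop.measure_pos volume ⟨x, hx, hn⟩
  refine h3.ne' (measure_mono_null ?_ P.Gae2)
  rintro y ⟨hy, hyn⟩ h
  exact hyn (subset_closure ⟨h (h2 hy), hy⟩)

/-- The constant in the Poincaré inequality on `B₂`. -/
def _root_.CP (d : ℕ) : ℝ :=
  16 * (volume (ball (0 : Ed d) 4)).toReal / (volume (ball (0 : Ed d) 2)).toReal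

lemma _root_.CP_nonneg (d : ℕ) : 0 ≤ CP d := by unfold CP; positivity

/-- Poincaré inequality. -/
lemma poincare (P : Pot Ω T G f χ) (h0 : ∫ x in ball (0 : Ed d) 2, f x = 0) {δ : ℝ}
    (hδ : ∫ x in ball (0 : Ed d) 2, ‖T x - x‖ ^ 2 ≤ δ ^ 2) :
    ∫ x in ball (0 : Ed d) 2, f x ^ 2 ≤ CP d * δ ^ 2 := by
  set B : Set (Ed d) := ball 0 2 with hB
  have hBm : MeasurableSet B := measurableSet_ball
  have hBtop : volume B ≠ ⊤ := measure_ball_lt_top.ne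
  have hBpos : 0 < (volume B).toReal :=
    ENNReal.toReal_pos (measure_ball_pos volume (0 : Ed d) two_pos).ne' hBtop
  have hfB : IntegrableOn f B := P.cont.integrableOn_ball' 0 2
  have hE : Elin T ≤ ENNReal.ofReal (δ ^ 2) := by
    rw [Elin, ← ofReal_integral_eq_lintegral_ofReal P.int_u2 (Filter.Eventually.of_forall fun x => by positivity)]
    exact ENNReal.ofReal_le_ofReal hδ
  have hpt : ∀ x, volume B * ENNReal.ofReal (f x ^ 2) ≤
      ∫⁻ y in B, ENNReal.ofReal ((f y - f x) ^ 2) := by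
    intro x
    have h1 : ∫ y in B, (f y - f x) = - ((volume B).toReal * f x) := by
      rw [integral_sub hfB (integrableOn_const hBtop), h0]
      simp [Measure.real]
    have h2 : ‖∫ y in B, (f y - f x)‖ₑ ≤ ∫⁻ y in B, ‖f y - f x‖ₑ := enorm_integral_le_lintegral_enorm _
    have hm : Measurable fun y => ‖f y - f x‖ₑ := (P.cont.measurable.sub_const _).enorm
    have h3 := lintegral_sq_le (volume.restrict B) hm.aemeasurable
    have h4 : (volume B * ‖f x‖ₑ) ^ 2 ≤ volume B * ∫⁻ y in B, ‖f y - f x‖ₑ ^ 2 := by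
      calc (volume B * ‖f x‖ₑ) ^ 2 = ‖∫ y in B, (f y - f x)‖ₑ ^ 2 := by
            rw [h1, enorm_neg, enorm_mul, Real.enorm_of_nonneg hBpos.le, ENNReal.ofReal_toReal hBtop]
        _ ≤ _ := (pow_le_pow_left' h2 2).trans (by simpa using h3)
    rw [mul_pow, sq, mul_assoc] at h4
    have hB0 : volume B ≠ 0 := (measure_ball_pos volume (0 : Ed d) two_pos).ne'
    have h5 := (ENNReal.mul_le_mul_iff_right hB0 hBtop).1 h4
    simpa only [ofReal_sq_eq_enorm] using h5
  have hF : Measurable fun p : Ed d × Ed d => ENNReal.ofReal ((f (p.1 + p.2) - f p.1) ^ 2) := by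
    have := P.cont
    exact Measurable.ennreal_ofReal (by fun_prop)
  have hdbl : ∫⁻ x in B, ∫⁻ y in B, ENNReal.ofReal ((f y - f x) ^ 2) ≤
      volume (ball (0 : Ed d) 4) * ENNReal.ofReal (16 * δ ^ 2) := by
    let F : Ed d → Ed d → ℝ≥0∞ := fun x h =>
      {p : Ed d × Ed d | p.1 ∈ B ∧ p.1 + p.2 ∈ B}.indicator
        (fun p => ENNReal.ofReal ((f (p.1 + p.2) - f p.1) ^ 2)) (x, h)
    have hFm : Measurable (Function.uncurry F) := by
      refine hF.indicator ?_
      exact (hBm.preimage measurable_fst).inter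
        (hBm.preimage (by fun_prop : Measurable fun p : Ed d × Ed d => p.1 + p.2))
    have h1 : ∫⁻ x in B, ∫⁻ y in B, ENNReal.ofReal ((f y - f x) ^ 2) = ∫⁻ x, ∫⁻ h, F x h := by
      rw [← lintegral_indicator hBm]
      refine lintegral_congr fun x => ?_
      by_cases hx : x ∈ B
      · rw [indicator_of_mem hx, ← lintegral_indicator hBm, ← lintegral_add_left_eq_self _ x]
        refine lintegral_congr fun h => ?_
        by_cases hxh : x + h ∈ B
        · rw [indicator_of_mem hxh]
          simp only [F]
          rw [indicator_of_mem (show (x, h) ∈ {p : Ed d × Ed d | p.1 ∈ B ∧ p.1 + p.2 ∈ B} from ⟨hx, hxh⟩)]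
        · rw [indicator_of_notMem hxh]
          simp only [F]
          rw [indicator_of_notMem (fun h' => hxh h'.2)]
      · rw [indicator_of_notMem hx]
        symm
        rw [lintegral_eq_zero_iff' (by exact (hFm.comp measurable_prodMk_left).aemeasurable)]
        refine Filter.Eventually.of_forall fun h => ?_
        simp only [F]
        rw [indicator_of_notMem (fun h' => hx h'.1)]; rfl
    rw [h1, lintegral_lintegral_swap hFm.aemeasurable]
    calc ∫⁻ h, ∫⁻ x, F x h ≤ ∫⁻ h, (ball (0 : Ed d) 4).indicator
          (fun _ => ENNReal.ofReal (16 * δ ^ 2)) h := by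
          refine lintegral_mono fun h => ?_
          by_cases hh : h ∈ ball (0 : Ed d) 4
          · rw [indicator_of_mem hh]
            have h2 := P.translate h
            have hm : MeasurableSet {x | x ∈ ball (0 : Ed d) 2 ∧ x + h ∈ ball (0 : Ed d) 2} :=
              (measurableSet_ball).inter (measurableSet_ball.preimage (measurable_id.add_const h))
            rw [← lintegral_indicator hm] at h2
            have hh' : ‖h‖ ≤ 4 := by simpa using (mem_ball.1 hh).le
            calc ∫⁻ x, F x h ≤ ENNReal.ofReal (‖h‖ ^ 2) * Elin T := h2
              _ ≤ ENNReal.ofReal (4 ^ 2) * ENNReal.ofReal (δ ^ 2) := by gcongr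
              _ = _ := by rw [← ENNReal.ofReal_mul (by norm_num)]; norm_num
          · rw [indicator_of_notMem hh, nonpos_iff_eq_zero,
              lintegral_eq_zero_iff' (by exact (hFm.comp measurable_prodMk_right).aemeasurable)]
            refine Filter.Eventually.of_forall fun x => ?_
            simp only [F]
            rw [indicator_of_notMem]; · rfl
            rintro ⟨h3, h4⟩
            apply hh
            simp only [hB, mem_ball, dist_zero_right] at h3 h4 ⊢
            calc ‖h‖ = ‖(x + h) - x‖ := by congr 1; abel
              _ ≤ ‖x + h‖ + ‖x‖ := norm_sub_le _ _
              _ < 4 := by linarith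
      _ = _ := by rw [lintegral_indicator measurableSet_ball, setLIntegral_const, mul_comm]
  have h6 : volume B * ENNReal.ofReal (∫ x in B, f x ^ 2) ≤
      volume (ball (0 : Ed d) 4) * ENNReal.ofReal (16 * δ ^ 2) := by
    rw [ofReal_integral_eq_lintegral_ofReal P.int_f2 (Filter.Eventually.of_forall fun x => by positivity),
      ← lintegral_const_mul _ (Measurable.ennreal_ofReal (P.cont.measurable.pow_const 2))]
    exact (lintegral_mono fun x => hpt x).trans hdbl
  have h7 := ENNReal.toReal_mono (ENNReal.mul_ne_top measure_ball_lt_top.ne ENNReal.ofReal_ne_top) h6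
  rw [ENNReal.toReal_mul, ENNReal.toReal_mul, ENNReal.toReal_ofReal (integral_nonneg fun x => by positivity),
    ENNReal.toReal_ofReal (by positivity)] at h7
  rw [CP, div_mul_eq_mul_div, le_div_iff₀ hBpos]
  linarith
end Pot

lemma integral_inner_ball_eq_zero {d : ℕ} (p x : Ed d) (ρ : ℝ) :
    ∫ y in ball x ρ, inner ℝ p (y - x) = 0 := by
  have h1 : ∫ y in ball x ρ, inner ℝ p (y - x) = ∫ h in ball (0 : Ed d) ρ, inner ℝ p h := by
    have h := (measurePreserving_add_right (volume : Measure (Ed d)) (-x)).setIntegral_preimage_emb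
      (MeasurableEquiv.addRight (-x)).measurableEmbedding (fun h => inner ℝ p h) (ball 0 ρ)
    rw [← h]
    have h2 : (fun y => y + -x) ⁻¹' ball (0 : Ed d) ρ = ball x ρ := by
      ext y; simp [dist_eq_norm, ← sub_eq_add_neg]
    rw [h2]; simp only [← sub_eq_add_neg]
  have h3 : ∫ h in ball (0 : Ed d) ρ, inner ℝ p h = ∫ h in ball (0 : Ed d) ρ, inner ℝ p (-h) := by
    have h := (measurePreserving_neg (volume : Measure (Ed d))).setIntegral_preimage_emb
      (MeasurableEquiv.neg (Ed d)).measurableEmbedding (fun h => inner ℝ p h) (ball 0 ρ)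
    rw [← h]
    have h2 : (fun y : Ed d => -y) ⁻¹' ball (0 : Ed d) ρ = ball 0 ρ := by
      ext y; simp
    rw [← h2]; simp
  simp only [inner_neg_right, integral_neg] at h3
  rw [h1]; linarith

namespace Pot
variable {d : ℕ} {Ω : Set (Ed d)} {T : Ed d → Ed d} {G : Set (Ed d)} {f χ : Ed d → ℝ}

/-- Semiconvexity of `f` turns the `L²` bounds into a pointwise bound. -/
lemma sup_f (P : Pot Ω T G f χ) {δ : ℝ} (hδ0 : 0 < δ)
    (hδ : ∫ x in ball (0 : Ed d) 2, ‖T x - x‖ ^ 2 ≤ δ ^ 2)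
    (hf : ∫ x in ball (0 : Ed d) 2, f x ^ 2 ≤ CP d * δ ^ 2) {ρ : ℝ} (hρ : 0 < ρ) (hρ4 : ρ ≤ 1 / 4)
    {x : Ed d} (hx : x ∈ ball (0 : Ed d) (7 / 4)) :
    |f x| ≤ ρ ^ 2 / 2 + (1 + CP d / (volume (ball (0 : Ed d) ρ)).toReal
      + 1 / (volume (ball (0 : Ed d) ρ)).toReal) * δ := by
  set V := (volume (ball (0 : Ed d) ρ)).toReal with hV
  have hVpos : 0 < V :=
    ENNReal.toReal_pos (measure_ball_pos volume (0 : Ed d) hρ).ne' measure_ball_lt_top.ne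
  have hVx : ∀ x : Ed d, volume.real (ball x ρ) = V := by
    intro x; rw [Measure.real, addHaar_ball_center]
  have hCP := CP_nonneg d
  have main : ∀ x ∈ G ∩ ball (0 : Ed d) (7 / 4), |f x| ≤ ρ ^ 2 / 2 + (1 + CP d / V + 1 / V) * δ := by
    rintro x ⟨hxG, hx⟩
    have hsub : ball x ρ ⊆ ball (0 : Ed d) 2 := by
      intro y hy
      rw [mem_ball, dist_zero_right] at *
      rw [dist_eq_norm] at hy
      calc ‖y‖ = ‖(y - x) + x‖ := by congr 1; abel
        _ ≤ ‖y - x‖ + ‖x‖ := norm_add_le _ _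
        _ < 2 := by linarith
    have hfi : IntegrableOn f (ball x ρ) := P.cont.integrableOn_ball' x ρ
    have hci : ∀ c : ℝ, IntegrableOn (fun _ : Ed d => c) (ball x ρ) := fun c =>
      integrableOn_const measure_ball_lt_top.ne
    have hintg : ∀ c : ℝ, ∫ _ in ball x ρ, c = V * c := by
      intro c; rw [setIntegral_const, hVx, smul_eq_mul]
    -- `|f|` and `|u|` have small averages on the ball
    have habs : ∫ y in ball x ρ, |f y| ≤ δ * V / 2 + CP d * δ / 2 := by
      have h1 : ∫ y in ball x ρ, |f y| ≤ ∫ y in ball x ρ, (δ / 2 + f y ^ 2 * (1 / (2 * δ))) := by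
        refine setIntegral_mono hfi.abs ((hci _).add ((P.int_f2.mono_set hsub).mul_const _)) fun y => ?_
        simp only
        have : |f y| = (2 * δ * |f y|) * (1 / (2 * δ)) := by field_simp
        rw [this, show δ / 2 + f y ^ 2 * (1 / (2 * δ)) = (δ ^ 2 + f y ^ 2) * (1 / (2 * δ)) by field_simp]
        gcongr
        nlinarith [sq_nonneg (δ - |f y|), sq_abs (f y)]
      rw [integral_add (hci _) ((P.int_f2.mono_set hsub).mul_const _), hintg, integral_mul_const] at h1
      have h2 : ∫ y in ball x ρ, f y ^ 2 ≤ CP d * δ ^ 2 :=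
        (setIntegral_mono_set P.int_f2 (Filter.Eventually.of_forall fun y => by positivity)
          hsub.eventuallyLE).trans hf
      have h3 : (∫ y in ball x ρ, f y ^ 2) * (1 / (2 * δ)) ≤ CP d * δ ^ 2 * (1 / (2 * δ)) := by gcongr
      have h4 : CP d * δ ^ 2 * (1 / (2 * δ)) = CP d * δ / 2 := by field_simp
      linarith
    have habu : ∫ y in ball x ρ, ‖T y - y‖ ≤ δ * V / 2 + δ / 2 := by
      have h1 : ∫ y in ball x ρ, ‖T y - y‖ ≤
          ∫ y in ball x ρ, (δ / 2 + ‖T y - y‖ ^ 2 * (1 / (2 * δ))) := by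
        refine setIntegral_mono (P.int_u.mono_set hsub)
          ((hci _).add ((P.int_u2.mono_set hsub).mul_const _)) fun y => ?_
        simp only
        have : ‖T y - y‖ = (2 * δ * ‖T y - y‖) * (1 / (2 * δ)) := by field_simp
        rw [this, show δ / 2 + ((2 * δ * ‖T y - y‖) * (1 / (2 * δ))) ^ 2 * (1 / (2 * δ))
          = (δ ^ 2 + ‖T y - y‖ ^ 2) * (1 / (2 * δ)) by field_simp]
        gcongr
        nlinarith [sq_nonneg (δ - ‖T y - y‖)]
      rw [integral_add (hci _) ((P.int_u2.mono_set hsub).mul_const _), hintg, integral_mul_const] at h1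
      have h2 : ∫ y in ball x ρ, ‖T y - y‖ ^ 2 ≤ δ ^ 2 :=
        (setIntegral_mono_set P.int_u2 (Filter.Eventually.of_forall fun y => by positivity)
          hsub.eventuallyLE).trans hδ
      have h3 : (∫ y in ball x ρ, ‖T y - y‖ ^ 2) * (1 / (2 * δ)) ≤ δ ^ 2 * (1 / (2 * δ)) := by gcongr
      have h4 : δ ^ 2 * (1 / (2 * δ)) = δ / 2 := by field_simp
      linarith
    have hnorm : ∀ y ∈ ball x ρ, ‖y - x‖ ^ 2 / 2 ≤ ρ ^ 2 / 2 := by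
      intro y hy
      have : ‖y - x‖ ≤ ρ := by rw [← dist_eq_norm]; exact (mem_ball.1 hy).le
      gcongr
    have hup : V * f x ≤ V * (ρ ^ 2 / 2) + ∫ y in ball x ρ, |f y| := by
      have hli : IntegrableOn (fun y => inner ℝ (T x - x) (y - x)) (ball x ρ) :=
        Continuous.integrableOn_ball' (by fun_prop) x ρ
      have hfa : IntegrableOn (fun y => |f y| + ρ ^ 2 / 2) (ball x ρ) := hfi.abs.add (hci _)
      have h1 : ∫ _ in ball x ρ, f x ≤
          ∫ y in ball x ρ, ((|f y| + ρ ^ 2 / 2) - inner ℝ (T x - x) (y - x)) := by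
        refine setIntegral_mono_on (hci _) (hfa.sub hli) measurableSet_ball
          fun y hy => ?_
        have := P.sub x hxG y
        have h2 := hnorm y hy
        have h3 := le_abs_self (f y)
        linarith
      rw [integral_sub hfa hli, integral_add hfi.abs (hci _), hintg, hintg,
        integral_inner_ball_eq_zero] at h1
      linarith
    have hlow : -(V * (ρ ^ 2 / 2)) - (∫ y in ball x ρ, |f y|) - ∫ y in ball x ρ, ‖T y - y‖
        ≤ V * f x := by
      have hui := P.int_u.mono_set hsub
      have hfa : IntegrableOn (fun y => |f y| + ‖T y - y‖) (ball x ρ) := hfi.abs.add hui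
      have hfb : IntegrableOn (fun y => |f y| + ‖T y - y‖ + ρ ^ 2 / 2) (ball x ρ) :=
        hfa.add (hci _)
      have h1 : ∫ y in ball x ρ, -(|f y| + ‖T y - y‖ + ρ ^ 2 / 2) ≤ ∫ _ in ball x ρ, f x := by
        refine integral_mono_ae hfb.neg (hci _) ?_
        filter_upwards [ae_restrict_of_ae P.Gae2, ae_restrict_mem measurableSet_ball] with y h1 h2
        have h3 := P.sub y (h1 (hsub h2)) x
        have h4 := hnorm y h2
        have h5 : ‖x - y‖ ≤ 1 := by
          rw [norm_sub_rev, ← dist_eq_norm]; linarith [mem_ball.1 h2]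
        have h6 := (abs_le.1 (abs_real_inner_le_norm (T y - y) (x - y))).1
        have h7 : ‖T y - y‖ * ‖x - y‖ ≤ ‖T y - y‖ := mul_le_of_le_one_right (norm_nonneg _) h5
        have h8 := neg_abs_le (f y)
        rw [norm_sub_rev] at h4
        linarith
      rw [integral_neg, integral_add hfa (hci _), integral_add hfi.abs hui, hintg, hintg] at h1
      linarith
    have hVR : V * (ρ ^ 2 / 2 + (1 + CP d / V + 1 / V) * δ) = V * (ρ ^ 2 / 2) +
      (V + CP d + 1) * δ := by field_simp
    have hVδ : 0 ≤ V * δ := by positivity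
    have hCδ : 0 ≤ CP d * δ := by positivity
    rw [abs_le]
    constructor
    · refine le_of_mul_le_mul_left ?_ hVpos
      rw [mul_neg, hVR]; linarith
    · refine le_of_mul_le_mul_left ?_ hVpos
      rw [hVR]; linarith
  have hcl : IsClosed {x | |f x| ≤ ρ ^ 2 / 2 + (1 + CP d / V + 1 / V) * δ} :=
    isClosed_le P.cont.abs continuous_const
  exact hcl.closure_subset_iff.2 main
    (P.dense isOpen_ball (ball_subset_ball (by norm_num)) hx)

/-- A bound on `f` bounds its gradient, since `f` is semiconvex: compare `f` at `x` and at distance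
`ρ` from `x` in the direction of `T x - x`. -/
lemma sup_u (P : Pot Ω T G f χ) {m ρ : ℝ} (hρ : 0 < ρ) (hρ4 : ρ ≤ 1 / 4)
    (hm : ∀ x ∈ ball (0 : Ed d) (7 / 4), |f x| ≤ m) {x : Ed d} (hxG : x ∈ G)
    (hx : x ∈ ball (0 : Ed d) (3 / 2)) : ‖T x - x‖ ≤ ρ / 2 + 2 * m / ρ := by
  have hx7 : x ∈ ball (0 : Ed d) (7 / 4) := ball_subset_ball (by norm_num) hx
  rcases eq_or_ne (T x - x) 0 with h0 | h0
  · rw [h0, norm_zero]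
    have := (abs_nonneg _).trans (hm x hx7)
    positivity
  have hn : 0 < ‖T x - x‖ := norm_pos_iff.2 h0
  set u := T x - x
  let p : Ed d := x + (ρ / ‖u‖) • u
  have hpn : ‖p - x‖ = ρ := by
    simp only [p, add_sub_cancel_left, norm_smul, norm_div, Real.norm_eq_abs, abs_of_pos hρ, abs_of_pos hn]
    field_simp
  have hp : p ∈ ball (0 : Ed d) (7 / 4) := by
    rw [mem_ball, dist_zero_right] at *
    calc ‖p‖ = ‖(p - x) + x‖ := by congr 1; abel
      _ ≤ ‖p - x‖ + ‖x‖ := norm_add_le _ _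
      _ < 7 / 4 := by rw [hpn]; linarith
  have h1 := P.sub x hxG p
  have h2 : inner ℝ u (p - x) = ρ * ‖u‖ := by
    simp only [p, add_sub_cancel_left, inner_smul_right, real_inner_self_eq_norm_sq]
    field_simp
  rw [hpn] at h1
  change f x + inner ℝ u (p - x) - _ ≤ _ at h1
  rw [h2] at h1
  have h3 := (abs_le.1 (hm p hp)).2
  have h4 := (abs_le.1 (hm x hx7)).1
  refine le_of_mul_le_mul_left ?_ hρ
  have : ρ * (ρ / 2 + 2 * m / ρ) = ρ ^ 2 / 2 + 2 * m := by field_simp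
  rw [this]; linarith
end Pot

/-- Potentials in the perturbative regime: `δ²` bounds the excess energy, and `f` and `T - id` are
uniformly smaller than `m`. -/
structure PotE {d : ℕ} (Ω : Set (Ed d)) (T : Ed d → Ed d) (G : Set (Ed d)) (f χ : Ed d → ℝ)
    (δ m : ℝ) : Prop extends Pot Ω T G f χ where
  δpos : 0 < δ
  δ1 : δ ≤ 1
  hE : ∫ x in ball (0 : Ed d) 2, ‖T x - x‖ ^ 2 ≤ δ ^ 2
  hf : ∫ x in ball (0 : Ed d) 2, f x ^ 2 ≤ CP d * δ ^ 2
  mpos : 0 < m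
  m1 : m ≤ 1 / 100
  fm : ∀ x ∈ ball (0 : Ed d) (7 / 4), |f x| ≤ m
  um' : ∀ x ∈ G, x ∈ ball (0 : Ed d) (3 / 2) → ‖T x - x‖ ≤ m

/-- Potentials with small excess can be normalised so as to be uniformly small. -/
lemma exists_potE (d : ℕ) {m : ℝ} (hm : 0 < m) (hm1 : m ≤ 1 / 100) : ∃ ω > 0, ∀ {Ω : Set (Ed d)}
    {T : Ed d → Ed d} {G : Set (Ed d)} {f χ : Ed d → ℝ} {δ : ℝ}, Pot Ω T G f χ → 0 < δ → δ ≤ ω →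
    ∫ x in ball (0 : Ed d) 2, ‖T x - x‖ ^ 2 ≤ δ ^ 2 →
    ∃ f χ : Ed d → ℝ, PotE Ω T G f χ δ m := by
  set ρ := m / 3 with hρ
  have hρ0 : 0 < ρ := by positivity
  have hρ4 : ρ ≤ 1 / 4 := by rw [hρ]; linarith
  set V := (volume (ball (0 : Ed d) ρ)).toReal with hV
  have hVpos : 0 < V :=
    ENNReal.toReal_pos (measure_ball_pos volume (0 : Ed d) hρ0).ne' measure_ball_lt_top.ne
  have hCP := CP_nonneg d
  set A := 1 + CP d / V + 1 / V with hA
  have hApos : 0 < A := by positivity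
  refine ⟨min 1 (m * ρ / (8 * A)), by positivity, ?_⟩
  intro Ω T G f χ δ P hδ0 hδω hE
  set c := (∫ x in ball (0 : Ed d) 2, f x) / (volume (ball (0 : Ed d) 2)).toReal with hc
  have hBpos : 0 < (volume (ball (0 : Ed d) 2)).toReal :=
    ENNReal.toReal_pos (measure_ball_pos volume (0 : Ed d) two_pos).ne' measure_ball_lt_top.ne
  have P' := P.shift c
  have h0 : ∫ x in ball (0 : Ed d) 2, (f x - c) = 0 := by
    rw [integral_sub (P.cont.integrableOn_ball' 0 2) (integrableOn_const measure_ball_lt_top.ne),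
      setIntegral_const, Measure.real, smul_eq_mul, hc]
    field_simp; simp
  have hf := P'.poincare h0 hE
  have hδA : A * δ ≤ m * ρ / 8 := by
    calc A * δ ≤ A * (m * ρ / (8 * A)) := by gcongr; exact hδω.trans (min_le_right _ _)
      _ = _ := by field_simp
  have hs : ∀ x ∈ ball (0 : Ed d) (7 / 4), |f x - c| ≤ ρ ^ 2 / 2 + m * ρ / 8 := by
    intro x hx
    have := P'.sup_f hδ0 hE hf hρ0 hρ4 hx
    linarith
  have hb : ρ ^ 2 / 2 + m * ρ / 8 ≤ m := by rw [hρ]; nlinarith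
  refine ⟨_, _, P', hδ0, hδω.trans (min_le_left _ _), hE, hf, hm, hm1,
    fun x hx => (hs x hx).trans hb, fun x hxG hx => (P'.sup_u hρ0 hρ4 hs hxG hx).trans ?_⟩
  have : 2 * (ρ ^ 2 / 2 + m * ρ / 8) / ρ = ρ + m / 4 := by field_simp; ring
  rw [this, hρ]; linarith

/-! ### Test functions with quantitative `C²` bounds -/

/-- `θ` has gradient `g`, and `θ`, `g` and the second-order Taylor remainder are bounded in terms
of `K`. Such bounds pass trivially to superpositions of translates. -/
structure C2b {d : ℕ} (K : ℝ) (θ : Ed d → ℝ) (g : Ed d → Ed d) : Prop where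
  bd : ∀ x, |θ x| ≤ K
  gbd : ∀ x, ‖g x‖ ≤ K
  taylor : ∀ x v, |θ (x + v) - θ x - inner ℝ (g x) v| ≤ K * ‖v‖ ^ 2
  gc : Continuous g

namespace C2b
variable {d : ℕ} {K : ℝ} {θ : Ed d → ℝ} {g : Ed d → Ed d}

lemma nonneg (h : C2b K θ g) : 0 ≤ K := (abs_nonneg _).trans (h.bd 0)

lemma mono (h : C2b K θ g) {K' : ℝ} (hK : K ≤ K') : C2b K' θ g where
  bd x := (h.bd x).trans hK
  gbd x := (h.gbd x).trans hK
  taylor x v := (h.taylor x v).trans (by gcongr)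
  gc := h.gc

lemma _root_.hasFDerivAt_of_taylor {θ : Ed d → ℝ} {a x : Ed d} {K : ℝ}
    (h : ∀ v, |θ (x + v) - θ x - inner ℝ a v| ≤ K * ‖v‖ ^ 2) :
    HasFDerivAt θ (innerSL ℝ a) x := by
  rw [hasFDerivAt_iff_isLittleO_nhds_zero]
  refine Asymptotics.IsBigO.trans_isLittleO (g := fun v : Ed d => ‖v‖ ^ 2) ?_ ?_
  · refine Asymptotics.IsBigO.of_bound K (Filter.Eventually.of_forall fun v => ?_)
    rw [Real.norm_eq_abs, innerSL_apply_apply, Real.norm_of_nonneg (by positivity)]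
    exact h v
  · have := (Asymptotics.isLittleO_norm_pow_id (E' := Ed d) one_lt_two)
    exact this

lemma hasFDerivAt (h : C2b K θ g) (x : Ed d) : HasFDerivAt θ (innerSL ℝ (g x)) x :=
  hasFDerivAt_of_taylor (h.taylor x)

lemma cont (h : C2b K θ g) : Continuous θ :=
  continuous_iff_continuousAt.2 fun x => (h.hasFDerivAt x).continuousAt

lemma lip (h : C2b K θ g) (x y : Ed d) : |θ x - θ y| ≤ K * ‖x - y‖ := by
  have := convex_univ.norm_image_sub_le_of_norm_hasFDerivWithin_le
    (fun z _ => (h.hasFDerivAt z).hasFDerivWithinAt (s := univ)) (C := K)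
    (fun z _ => by rw [innerSL_apply_norm]; exact h.gbd z) (mem_univ y) (mem_univ x)
  rwa [Real.norm_eq_abs] at this

lemma translate (h : C2b K θ g) (z : Ed d) : C2b K (fun x => θ (x - z)) (fun x => g (x - z)) where
  bd x := h.bd _
  gbd x := h.gbd _
  taylor x v := by rw [add_sub_right_comm]; exact h.taylor _ _
  gc := h.gc.comp (by fun_prop)

lemma reflect (h : C2b K θ g) (z : Ed d) :
    C2b K (fun x => θ (z - x)) (fun x => -g (z - x)) where
  bd x := h.bd _
  gbd x := by rw [norm_neg]; exact h.gbd _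
  taylor x v := by
    have := h.taylor (z - x) (-v)
    rw [inner_neg_right, norm_neg] at this
    rw [inner_neg_left, ← sub_sub, sub_eq_add_neg (z - x) v]
    exact this
  gc := (h.gc.comp (by fun_prop)).neg

lemma mul (h : C2b K θ g) {K' : ℝ} {θ' : Ed d → ℝ} {g' : Ed d → Ed d} (h' : C2b K' θ' g') :
    C2b (3 * K * K') (fun x => θ x * θ' x) (fun x => θ' x • g x + θ x • g' x) where
  bd x := by
    have h0 := h.nonneg
    have h1 := h'.nonneg
    have h2 := mul_nonneg h0 h1
    rw [abs_mul]
    calc |θ x| * |θ' x| ≤ K * K' := mul_le_mul (h.bd x) (h'.bd x) (abs_nonneg _) h0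
      _ ≤ _ := by nlinarith
  gbd x := by
    have h0 := h.nonneg
    have h1 := h'.nonneg
    have h2 := mul_nonneg h0 h1
    refine (norm_add_le _ _).trans ?_
    rw [norm_smul, norm_smul, Real.norm_eq_abs, Real.norm_eq_abs]
    have h3 : |θ' x| * ‖g x‖ ≤ K' * K := mul_le_mul (h'.bd x) (h.gbd x) (norm_nonneg _) h1
    have h4 : |θ x| * ‖g' x‖ ≤ K * K' := mul_le_mul (h.bd x) (h'.gbd x) (norm_nonneg _) h0
    nlinarith
  taylor x v := by
    have h0 := h.nonneg
    have h1 := h'.nonneg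
    rw [inner_add_left, inner_smul_left, inner_smul_left]
    simp only [conj_trivial]
    have e : θ (x + v) * θ' (x + v) - θ x * θ' x - (θ' x * inner ℝ (g x) v + θ x * inner ℝ (g' x) v)
      = (θ (x + v) - θ x - inner ℝ (g x) v) * θ' x + θ x * (θ' (x + v) - θ' x - inner ℝ (g' x) v)
        + (θ (x + v) - θ x) * (θ' (x + v) - θ' x) := by ring
    rw [e]
    refine (abs_add_three _ _ _).trans ?_
    rw [abs_mul, abs_mul, abs_mul]
    have h2 := h.taylor x v
    have h3 := h'.taylor x v
    have h4 := h.lip (x + v) x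
    have h5 := h'.lip (x + v) x
    rw [add_sub_cancel_left] at h4 h5
    have e1 : |θ (x + v) - θ x - inner ℝ (g x) v| * |θ' x| ≤ K * ‖v‖ ^ 2 * K' :=
      mul_le_mul h2 (h'.bd x) (abs_nonneg _) (by positivity)
    have e2 : |θ x| * |θ' (x + v) - θ' x - inner ℝ (g' x) v| ≤ K * (K' * ‖v‖ ^ 2) :=
      mul_le_mul (h.bd x) h3 (abs_nonneg _) h0
    have e3 : |θ (x + v) - θ x| * |θ' (x + v) - θ' x| ≤ (K * ‖v‖) * (K' * ‖v‖) :=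
      mul_le_mul h4 h5 (abs_nonneg _) (by positivity)
    nlinarith
  gc := (h'.cont.smul h.gc).add (h.cont.smul h'.gc)
end C2b

/-! ### Couplings -/

/-- Potentials in the perturbative regime together with a coupling `π` between the restriction of
the target measure to `O` and `κ dx` on `O`, of cost at most `β² δ²`. -/
structure Hyp {d : ℕ} (Ω : Set (Ed d)) (T : Ed d → Ed d) (G : Set (Ed d)) (f χ : Ed d → ℝ)
    (δ m : ℝ) (O : Set (Ed d)) (π : Measure (Ed d × Ed d)) (κ β : ℝ) : Prop
    extends PotE Ω T G f χ δ m where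
  β0 : 0 < β
  β1 : β ≤ 1
  δβ : δ ≤ β
  Om : MeasurableSet O
  Osub : ball (0 : Ed d) 2 ⊆ O
  κ0 : 0 ≤ κ
  πfin : IsFiniteMeasure π
  fst : π.map Prod.fst = (Measure.map T (volume.restrict Ω)).restrict O
  snd : π.map Prod.snd = ENNReal.ofReal κ • volume.restrict O
  costI : Integrable (fun p : Ed d × Ed d => ‖p.1 - p.2‖ ^ 2) π
  cost : ∫ p, ‖p.1 - p.2‖ ^ 2 ∂π ≤ β ^ 2 * δ ^ 2

lemma Pot.monotone {d : ℕ} {Ω : Set (Ed d)} {T : Ed d → Ed d} {G : Set (Ed d)} {f χ : Ed d → ℝ}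
    (P : Pot Ω T G f χ) {x y : Ed d} (hx : x ∈ G) (hy : y ∈ G) :
    0 ≤ inner ℝ (T x - T y) (x - y) := by
  have h1 := P.sub x hx y
  have h2 := P.sub y hy x
  have e1 : inner ℝ (T x - T y) (x - y) = -inner ℝ (T x - x) (y - x) - inner ℝ (T y - y) (x - y)
      + ‖x - y‖ ^ 2 := by
    rw [← neg_sub x y, inner_neg_right, ← real_inner_self_eq_norm_sq, neg_neg, ← inner_sub_left,
      ← inner_add_left]
    congr 1; abel
  rw [norm_sub_rev] at h1
  rw [e1]; linarith

/-- Points transported into `B_{5/4}` come from `B_{3/2}`. -/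
lemma PotE.localize {d : ℕ} {Ω : Set (Ed d)} {T : Ed d → Ed d} {G : Set (Ed d)} {f χ : Ed d → ℝ}
    {δ m : ℝ} (P : PotE Ω T G f χ δ m) {x : Ed d} (hx : x ∈ G) (hT : ‖T x‖ ≤ 5 / 4) :
    x ∈ ball (0 : Ed d) (3 / 2) := by
  rw [mem_ball, dist_zero_right]
  by_contra! hge
  -- a point `p` of the segment from `T x` to `x` on the sphere of radius `11 / 8`
  obtain ⟨s, hs, hsn⟩ : ∃ s ∈ Icc (0 : ℝ) 1, ‖T x + s • (x - T x)‖ = 11 / 8 := by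
    have hc : ContinuousOn (fun s : ℝ => ‖T x + s • (x - T x)‖) (Icc 0 1) :=
      Continuous.continuousOn (by fun_prop)
    have := intermediate_value_Icc zero_le_one hc
    have h2 : (11 / 8 : ℝ) ∈ Icc ‖T x + (0 : ℝ) • (x - T x)‖ ‖T x + (1 : ℝ) • (x - T x)‖ := by
      constructor
      · rw [zero_smul, add_zero]; linarith
      · rw [one_smul, add_sub_cancel]; linarith
    exact this h2
  set p := T x + s • (x - T x) with hp
  have hpb : p ∈ ball (0 : Ed d) (3 / 2) := by
    rw [mem_ball, dist_zero_right, hsn]; norm_num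
  have hcl := P.dense isOpen_ball (ball_subset_ball (by norm_num)) hpb
  obtain ⟨x', ⟨hx'G, hx'b⟩, hx'⟩ := Metric.mem_closure_iff.1 hcl (1 / 100) (by norm_num)
  have hu' := (P.um' x' hx'G hx'b).trans P.m1
  have hmono := P.monotone hx hx'G
  set A := T x - p with hA
  set B := x - p with hB
  have hAe : A = -(s • (x - T x)) := by rw [hA, hp]; abel
  have hBe : B = (1 - s) • (x - T x) := by rw [hB, hp, sub_smul, one_smul]; abel
  have hAn : ‖A‖ = s * ‖x - T x‖ := by
    rw [hAe, norm_neg, norm_smul, Real.norm_of_nonneg hs.1]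
  have hBn : ‖B‖ = (1 - s) * ‖x - T x‖ := by
    rw [hBe, norm_smul, Real.norm_of_nonneg (by linarith [hs.2])]
  have hAB : inner ℝ A B = -(‖A‖ * ‖B‖) := by
    rw [hAn, hBn, hAe, hBe, inner_neg_left, inner_smul_left, inner_smul_right,
      real_inner_self_eq_norm_sq]
    simp only [conj_trivial]; ring
  have hA8 : 1 / 8 ≤ ‖A‖ := by
    have := norm_sub_norm_le p (T x)
    rw [norm_sub_rev] at this
    linarith
  have hB8 : 1 / 8 ≤ ‖B‖ := by
    have := norm_sub_norm_le x p
    linarith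
  set e := p - x' with he
  have hen : ‖e‖ ≤ 1 / 100 := by rw [he, ← dist_eq_norm]; exact hx'.le
  set e1 := e - (T x' - x') with he1
  have he1n : ‖e1‖ ≤ 2 / 100 := (norm_sub_le _ _).trans (by linarith)
  have h1 : T x - T x' = A + e1 := by rw [hA, he1, he]; abel
  have h2 : x - x' = B + e := by rw [hB, he]; abel
  rw [h1, h2, inner_add_left, inner_add_right, inner_add_right, hAB] at hmono
  have i1 := real_inner_le_norm A e
  have i2 := real_inner_le_norm e1 B
  have i3 := real_inner_le_norm e1 e
  have j1 : ‖A‖ * ‖e‖ ≤ ‖A‖ * (1 / 100) := by gcongr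
  have j2 : ‖e1‖ * ‖B‖ ≤ 2 / 100 * ‖B‖ := by gcongr
  have j3 : ‖e1‖ * ‖e‖ ≤ 2 / 100 * (1 / 100) := by gcongr
  nlinarith

/-- Indicator function of the ball `B_ρ`. -/
def ballInd {d : ℕ} (ρ : ℝ) (x : Ed d) : ℝ := (ball (0 : Ed d) ρ).indicator (fun _ => (1 : ℝ)) x

lemma ballInd_nonneg {d : ℕ} (ρ : ℝ) (x : Ed d) : 0 ≤ ballInd ρ x :=
  indicator_nonneg (fun _ _ => zero_le_one) _

lemma ballInd_le_one {d : ℕ} (ρ : ℝ) (x : Ed d) : ballInd ρ x ≤ 1 :=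
  indicator_le_self' (fun _ _ => zero_le_one) _

lemma ballInd_sq {d : ℕ} (ρ : ℝ) (x : Ed d) : ballInd ρ x ^ 2 = ballInd ρ x := by
  unfold ballInd indicator; split_ifs <;> norm_num

lemma ballInd_meas {d : ℕ} (ρ : ℝ) : Measurable (ballInd ρ : Ed d → ℝ) :=
  measurable_const.indicator measurableSet_ball

lemma ballInd_one {d : ℕ} {ρ : ℝ} {x : Ed d} (h : ‖x‖ < ρ) : ballInd ρ x = 1 := by
  unfold ballInd; rw [indicator_of_mem]; rwa [mem_ball, dist_zero_right]

lemma ballInd_zero {d : ℕ} {ρ : ℝ} {x : Ed d} (h : ρ ≤ ‖x‖) : ballInd ρ x = 0 := by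
  unfold ballInd; rw [indicator_of_notMem]; rw [mem_ball, dist_zero_right]; exact not_lt.2 h

lemma ballInd_integral {d : ℕ} (ρ : ℝ) : ∫ x : Ed d, ballInd ρ x = volume.real (ball (0 : Ed d) ρ) := by
  unfold ballInd
  rw [integral_indicator measurableSet_ball]; simp

lemma integrable_of_vanish {d : ℕ} {F : Ed d → ℝ} {ρ : ℝ} (hF : IntegrableOn F (ball 0 ρ))
    (h0 : ∀ x, ρ ≤ ‖x‖ → F x = 0) : Integrable F :=
  hF.integrable_of_forall_notMem_eq_zero fun x hx => h0 x (by simpa using hx)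

lemma setIntegral_of_vanish {d : ℕ} {F : Ed d → ℝ} {ρ : ℝ}
    (h0 : ∀ x, ρ ≤ ‖x‖ → F x = 0) : ∫ x in ball (0 : Ed d) ρ, F x = ∫ x, F x :=
  setIntegral_eq_integral_of_forall_compl_eq_zero fun x hx => h0 x (by simpa using hx)

/-- The number bounding all masses that occur. -/
def NN (d : ℕ) : ℝ := volume.real (ball (0 : Ed d) (3 / 2)) + 16

lemma NN_pos (d : ℕ) : 0 < NN d := by unfold NN; positivity

namespace Hyp
variable {d : ℕ} {Ω : Set (Ed d)} {T : Ed d → Ed d} {G : Set (Ed d)} {f χ : Ed d → ℝ}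
  {δ m : ℝ} {O : Set (Ed d)} {π : Measure (Ed d × Ed d)} {κ β : ℝ}

lemma ae_fst (H : Hyp Ω T G f χ δ m O π κ β) {S : Set (Ed d)} (hS : MeasurableSet S)
    (h : ∀ x ∈ G, T x ∈ S) : ∀ᵐ p ∂π, p.1 ∈ S := by
  have h1 : ∀ᵐ y ∂(π.map Prod.fst), y ∈ S := by
    rw [H.fst]
    refine ae_restrict_of_ae ?_
    refine (ae_map_iff H.Tm.aemeasurable hS).2 ?_
    filter_upwards [H.Gae] with x hx using h x hx
  exact ae_of_ae_map measurable_fst.aemeasurable h1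

lemma int_fst (H : Hyp Ω T G f χ δ m O π κ β) {F : Ed d → ℝ} (hF : Measurable F)
    (h0 : ∀ y, 5 / 4 ≤ ‖y‖ → F y = 0) :
    ∫ p, F p.1 ∂π = ∫ x in ball (0 : Ed d) (3 / 2), F (T x) := by
  have h1 : ∫ p, F p.1 ∂π = ∫ y, F y ∂(π.map Prod.fst) :=
    (integral_map measurable_fst.aemeasurable hF.aestronglyMeasurable).symm
  rw [h1, H.fst, setIntegral_eq_integral_of_forall_compl_eq_zero,
    integral_map H.Tm.aemeasurable hF.aestronglyMeasurable]
  · have hsub : ball (0 : Ed d) (3 / 2) ⊆ Ω := (ball_subset_ball (by norm_num)).trans H.ball_sub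
    rw [← integral_indicator H.Ωm, ← integral_indicator measurableSet_ball]
    refine integral_congr_ae ?_
    have hG := H.Gae
    rw [ae_restrict_iff' H.Ωm] at hG
    filter_upwards [hG] with x hx
    by_cases hb : x ∈ ball (0 : Ed d) (3 / 2)
    · rw [indicator_of_mem (hsub hb), indicator_of_mem hb]
    · rw [indicator_of_notMem hb]
      by_cases hΩ : x ∈ Ω
      · rw [indicator_of_mem hΩ]
        apply h0
        by_contra! hc
        exact hb (H.localize (hx hΩ) hc.le)
      · rw [indicator_of_notMem hΩ]
  · intro y hy
    apply h0
    by_contra! hc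
    exact hy (H.Osub (by rw [mem_ball, dist_zero_right]; linarith))

lemma int_snd (H : Hyp Ω T G f χ δ m O π κ β) {F : Ed d → ℝ} (hF : Measurable F)
    (h0 : ∀ y, 2 ≤ ‖y‖ → F y = 0) :
    ∫ p, F p.2 ∂π = κ * ∫ y, F y := by
  have h1 : ∫ p, F p.2 ∂π = ∫ y, F y ∂(π.map Prod.snd) :=
    (integral_map measurable_snd.aemeasurable hF.aestronglyMeasurable).symm
  rw [h1, H.snd, integral_smul_measure, ENNReal.toReal_ofReal H.κ0, smul_eq_mul,
    setIntegral_eq_integral_of_forall_compl_eq_zero]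
  intro y hy
  apply h0
  by_contra! hc
  exact hy (H.Osub (by rwa [mem_ball, dist_zero_right]))

lemma integrable_of_bdd (H : Hyp Ω T G f χ δ m O π κ β) {F : Ed d × Ed d → ℝ} (hF : Measurable F)
    {C : ℝ} (hC : ∀ p, |F p| ≤ C) : Integrable F π := by
  have := H.πfin
  exact Integrable.of_bound hF.aestronglyMeasurable C (Filter.Eventually.of_forall hC)

lemma ballInd_fst_int (H : Hyp Ω T G f χ δ m O π κ β) (ρ : ℝ) :
    Integrable (fun p : Ed d × Ed d => ballInd ρ p.1) π :=
  H.integrable_of_bdd ((ballInd_meas ρ).comp measurable_fst) (C := 1) fun p => by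
    rw [abs_of_nonneg (ballInd_nonneg _ _)]; exact ballInd_le_one _ _

lemma ballInd_snd_int (H : Hyp Ω T G f χ δ m O π κ β) (ρ : ℝ) :
    Integrable (fun p : Ed d × Ed d => ballInd ρ p.2) π :=
  H.integrable_of_bdd ((ballInd_meas ρ).comp measurable_snd) (C := 1) fun p => by
    rw [abs_of_nonneg (ballInd_nonneg _ _)]; exact ballInd_le_one _ _

lemma mass_fst (H : Hyp Ω T G f χ δ m O π κ β) :
    ∫ p, ballInd (5 / 4) p.1 ∂π ≤ volume.real (ball (0 : Ed d) (3 / 2)) := by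
  rw [H.int_fst (ballInd_meas _) fun y hy => ballInd_zero hy]
  have h : ∫ x in ball (0 : Ed d) (3 / 2), ballInd (5 / 4) (T x)
      ≤ ∫ x in ball (0 : Ed d) (3 / 2), (1 : ℝ) := by
    refine integral_mono_of_nonneg (Filter.Eventually.of_forall fun x => ballInd_nonneg _ _)
      (integrableOn_const measure_ball_lt_top.ne) (Filter.Eventually.of_forall fun x => ballInd_le_one _ _)
  simpa using h

lemma mass_fst' (H : Hyp Ω T G f χ δ m O π κ β) : ∫ p, ballInd 1 p.1 ∂π ≤ NN d := by
  have h := H.mass_fst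
  refine (integral_mono (H.ballInd_fst_int 1) (H.ballInd_fst_int (5 / 4)) fun p => ?_).trans
    (h.trans (by unfold NN; linarith))
  by_cases hp : ‖p.1‖ < 1
  · simp only [ballInd_one hp, ballInd_one (hp.trans (by norm_num : (1 : ℝ) < 5 / 4)), le_refl]
  · simp only [ballInd_zero (not_lt.1 hp)]; exact ballInd_nonneg _ _

lemma cost1 (H : Hyp Ω T G f χ δ m O π κ β) : ∫ p, ‖p.1 - p.2‖ ^ 2 ∂π ≤ 1 := by
  refine H.cost.trans ?_
  have := H.β1; have := H.δ1; have := H.β0; have := H.δpos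
  rw [← mul_pow]
  exact pow_le_one₀ (by positivity) (mul_le_one₀ ‹_› (by positivity) ‹_›)

lemma mass_snd (H : Hyp Ω T G f χ δ m O π κ β) : ∫ p, ballInd 1 p.2 ∂π ≤ NN d := by
  have h := H.mass_fst
  have hi : Integrable (fun p : Ed d × Ed d => ballInd (5 / 4) p.1 + 16 * ‖p.1 - p.2‖ ^ 2) π :=
    (H.ballInd_fst_int _).add (H.costI.const_mul 16)
  refine (integral_mono (H.ballInd_snd_int 1) hi fun p => ?_).trans ?_
  · by_cases hp : ‖p.2‖ < 1
    · simp only [ballInd_one hp]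
      by_cases hq : ‖p.1‖ < 5 / 4
      · rw [ballInd_one hq]; linarith [sq_nonneg ‖p.1 - p.2‖]
      · have h1 : ‖p.1‖ - ‖p.2‖ ≤ ‖p.1 - p.2‖ := norm_sub_norm_le _ _
        have := ballInd_nonneg (5 / 4) p.1
        nlinarith
    · simp only [ballInd_zero (not_lt.1 hp)]
      have := ballInd_nonneg (5 / 4) p.1
      positivity
  · rw [integral_add (H.ballInd_fst_int _) (H.costI.const_mul 16), integral_const_mul]
    have := H.cost1
    unfold NN; linarith

lemma κ_le (H : Hyp Ω T G f χ δ m O π κ β) : κ ≤ NN d / volume.real (ball (0 : Ed d) 1) := by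
  have h := H.mass_snd
  rw [H.int_snd (ballInd_meas 1) (fun y hy => ballInd_zero (by linarith)), ballInd_integral] at h
  have hpos : 0 < volume.real (ball (0 : Ed d) 1) :=
    ENNReal.toReal_pos (measure_ball_pos volume (0 : Ed d) one_pos).ne' measure_ball_lt_top.ne
  rwa [le_div_iff₀ hpos]

lemma costI1 (H : Hyp Ω T G f χ δ m O π κ β) :
    Integrable (fun p : Ed d × Ed d => ‖p.1 - p.2‖) π := by
  have := H.πfin
  refine Integrable.mono' (H.costI.add (integrable_const (1 : ℝ)))
    (by fun_prop) (Filter.Eventually.of_forall fun p => ?_)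
  rw [norm_norm, Pi.add_apply]
  nlinarith [sq_nonneg (‖p.1 - p.2‖ - 1)]

/-- First moment of the displacement of the coupling near `B₁`. -/
lemma cost_one (H : Hyp Ω T G f χ δ m O π κ β) :
    Integrable (fun p : Ed d × Ed d => ‖p.1 - p.2‖ * (ballInd 1 p.1 + ballInd 1 p.2)) π ∧
    ∫ p, ‖p.1 - p.2‖ * (ballInd 1 p.1 + ballInd 1 p.2) ∂π ≤ (1 + NN d) * (β * δ) := by
  have hi : Integrable (fun p : Ed d × Ed d => ‖p.1 - p.2‖ * (ballInd 1 p.1 + ballInd 1 p.2)) π := by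
    refine Integrable.mono' (H.costI1.const_mul 2) ?_ (Filter.Eventually.of_forall fun p => ?_)
    · exact ((measurable_fst.sub measurable_snd).norm.mul
        (((ballInd_meas 1).comp measurable_fst).add
          ((ballInd_meas 1).comp measurable_snd))).aestronglyMeasurable
    · have h1 := ballInd_nonneg 1 p.1
      have h2 := ballInd_nonneg 1 p.2
      have h3 := ballInd_le_one 1 p.1
      have h4 := ballInd_le_one 1 p.2
      rw [Real.norm_of_nonneg (by positivity)]
      nlinarith [norm_nonneg (p.1 - p.2)]
  refine ⟨hi, ?_⟩
  have ht : 0 < β * δ := mul_pos H.β0 H.δpos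
  set t := β * δ with htd
  have hI1 := H.costI.const_mul (1 / t)
  have hI2 : Integrable (fun p : Ed d × Ed d => t / 2 * (ballInd 1 p.1 + ballInd 1 p.2)) π :=
    ((H.ballInd_fst_int 1).add (H.ballInd_snd_int 1)).const_mul (t / 2)
  have hI : Integrable (fun p : Ed d × Ed d => 1 / t * ‖p.1 - p.2‖ ^ 2
      + t / 2 * (ballInd 1 p.1 + ballInd 1 p.2)) π := hI1.add hI2
  have hy : ∀ a b : ℝ, b ^ 2 = b → a * b ≤ 1 / (2 * t) * a ^ 2 + t / 2 * b := by
    intro a b hb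
    have : 0 ≤ (a - t * b) ^ 2 / (2 * t) := by positivity
    have e : (a - t * b) ^ 2 / (2 * t) = 1 / (2 * t) * a ^ 2 + t / 2 * b ^ 2 - a * b := by
      field_simp; ring
    rw [e, hb] at this; linarith
  refine (integral_mono hi hI fun p => ?_).trans ?_
  · have h1 := hy ‖p.1 - p.2‖ _ (ballInd_sq 1 p.1)
    have h2 := hy ‖p.1 - p.2‖ _ (ballInd_sq 1 p.2)
    have e : 1 / t * ‖p.1 - p.2‖ ^ 2 = 2 * (1 / (2 * t) * ‖p.1 - p.2‖ ^ 2) := by field_simp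
    simp only [e]
    linarith
  · have e1 : ∫ p, (1 / t * ‖p.1 - p.2‖ ^ 2 + t / 2 * (ballInd 1 p.1 + ballInd 1 p.2)) ∂π
        = 1 / t * ∫ p, ‖p.1 - p.2‖ ^ 2 ∂π
          + t / 2 * (∫ p, ballInd 1 p.1 ∂π + ∫ p, ballInd 1 p.2 ∂π) := by
      rw [integral_add hI1 hI2, integral_const_mul, integral_const_mul,
        ← integral_add (H.ballInd_fst_int 1) (H.ballInd_snd_int 1)]
    rw [e1]
    have h1 : 1 / t * ∫ p, ‖p.1 - p.2‖ ^ 2 ∂π ≤ 1 / t * (t ^ 2) := by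
      have := H.cost
      rw [htd, mul_pow]; gcongr
    have h2 := H.mass_fst'
    have h3 := H.mass_snd
    have e2 : 1 / t * t ^ 2 = t := by field_simp
    rw [e2] at h1
    nlinarith

lemma integrable_inner (H : Hyp Ω T G f χ δ m O π κ β) {g : Ed d → Ed d} (hg : Continuous g)
    (h0 : ∀ x, 2 ≤ ‖x‖ → g x = 0) : Integrable fun x => inner ℝ (g x) (T x - x) := by
  refine integrable_of_vanish (ρ := 2) ?_ (fun x hx => by rw [h0 x hx, inner_zero_left])
  obtain ⟨R, hR0, hR⟩ := H.ubdd
  obtain ⟨M, hM⟩ := (isCompact_closedBall (0 : Ed d) 2).exists_bound_of_continuousOn hg.continuousOn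
  refine H.integrableOn_of (hg.measurable.inner H.um) (C := M * R) fun x hx hb => ?_
  refine (abs_real_inner_le_norm _ _).trans ?_
  have := hM x (ball_subset_closedBall hb)
  have h1 := hR x hx
  have : 0 ≤ M := (norm_nonneg _).trans this
  gcongr

lemma hE' (H : Hyp Ω T G f χ δ m O π κ β) {ρ : ℝ} (hρ : ρ ≤ 2) :
    ∫ x in ball (0 : Ed d) ρ, ‖T x - x‖ ^ 2 ≤ δ ^ 2 :=
  (setIntegral_mono_set H.int_u2 (Filter.Eventually.of_forall fun x => by positivity)
    (Filter.Eventually.of_forall (ball_subset_ball hρ))).trans H.hE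

/-- The transport condition, linearised: `div u = 1 - κ` up to an error that is small compared
with `δ`, in a weak sense. -/
lemma weak (H : Hyp Ω T G f χ δ m O π κ β) {K : ℝ} {θ : Ed d → ℝ} {g : Ed d → Ed d}
    (hθ : C2b K θ g) (h0 : ∀ x, 1 ≤ ‖x‖ → θ x = 0) (hg0 : ∀ x, 1 ≤ ‖x‖ → g x = 0) :
    |(∫ x, inner ℝ (g x) (T x - x)) - (κ - 1) * ∫ x, θ x| ≤ (NN d + 2) * K * (β * δ) := by
  have hK := hθ.nonneg
  have hθm := hθ.cont.measurable
  set B : Set (Ed d) := ball 0 (3 / 2) with hB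
  have h2 : B ⊆ ball 0 2 := ball_subset_ball (by norm_num)
  have hgi : Integrable fun x => inner ℝ (g x) (T x - x) :=
    H.integrable_inner hθ.gc fun x hx => hg0 x (by linarith)
  have hθi : Integrable θ :=
    integrable_of_vanish (hθ.cont.integrableOn_ball' 0 1) h0
  have hu2 : IntegrableOn (fun x => ‖T x - x‖ ^ 2) B := H.int_u2.mono_set h2
  have hTi : IntegrableOn (fun x => θ (T x)) B :=
    (H.integrableOn_of (hθm.comp H.Tm) (C := K) fun x _ _ => hθ.bd _).mono_set h2
  have e1 : ∫ p, θ p.1 ∂π = ∫ x in B, θ (T x) := H.int_fst hθm fun y hy => h0 y (by linarith)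
  have e2 : ∫ p, θ p.2 ∂π = κ * ∫ x, θ x := H.int_snd hθm fun y hy => h0 y (by linarith)
  have e3 : ∫ x in B, θ x = ∫ x, θ x := setIntegral_of_vanish fun x hx => h0 x (by linarith)
  have e4 : ∫ x in B, inner ℝ (g x) (T x - x) = ∫ x, inner ℝ (g x) (T x - x) :=
    setIntegral_of_vanish fun x hx => by rw [hg0 x (by linarith), inner_zero_left]
  have i1 : |∫ p, θ p.1 ∂π - ∫ p, θ p.2 ∂π| ≤ K * ((1 + NN d) * (β * δ)) := by
    have j1 : Integrable (fun p : Ed d × Ed d => θ p.1) π :=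
      H.integrable_of_bdd (hθm.comp measurable_fst) fun p => hθ.bd _
    have j2 : Integrable (fun p : Ed d × Ed d => θ p.2) π :=
      H.integrable_of_bdd (hθm.comp measurable_snd) fun p => hθ.bd _
    rw [← integral_sub j1 j2, ← Real.norm_eq_abs]
    refine (norm_integral_le_of_norm_le (H.cost_one.1.const_mul K)
      (Filter.Eventually.of_forall fun p => ?_)).trans ?_
    · rw [Real.norm_eq_abs]
      have hl := hθ.lip p.1 p.2
      have n1 := ballInd_nonneg 1 p.1
      have n2 := ballInd_nonneg 1 p.2
      by_cases ha : ‖p.1‖ < 1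
      · rw [ballInd_one ha]
        have : 0 ≤ K * ‖p.1 - p.2‖ := by positivity
        nlinarith
      · by_cases hb : ‖p.2‖ < 1
        · rw [ballInd_one hb]
          have : 0 ≤ K * ‖p.1 - p.2‖ := by positivity
          nlinarith
        · rw [h0 _ (not_lt.1 ha), h0 _ (not_lt.1 hb)]
          simp only [sub_self, abs_zero]; positivity
    · rw [integral_const_mul]
      exact mul_le_mul_of_nonneg_left H.cost_one.2 hK
  have i2 : |∫ x in B, (θ (T x) - θ x - inner ℝ (g x) (T x - x))| ≤ K * δ ^ 2 := by
    rw [← Real.norm_eq_abs]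
    refine (norm_integral_le_of_norm_le (hu2.const_mul K)
      (Filter.Eventually.of_forall fun x => ?_)).trans ?_
    · have := hθ.taylor x (T x - x)
      rw [add_sub_cancel] at this
      exact this
    · rw [integral_const_mul]
      exact mul_le_mul_of_nonneg_left (H.hE' (by norm_num)) hK
  have hTθ : IntegrableOn (fun x => θ (T x) - θ x) B := hTi.sub hθi.integrableOn
  rw [integral_sub hTθ hgi.integrableOn, integral_sub hTi hθi.integrableOn, e3, e4, ← e1] at i2
  rw [e2] at i1
  have hδ : K * δ ^ 2 ≤ K * (β * δ) := by
    have := H.δβ; have := H.δpos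
    rw [sq]; gcongr
  rw [abs_le] at *
  constructor <;> linarith [i1.1, i1.2, i2.1, i2.2]

end Hyp

/-- The constant in `∫_{B₂} |u| ≤ L δ`. -/
def LL (d : ℕ) : ℝ := (volume.real (ball (0 : Ed d) 2) + 1) / 2

lemma LL_nonneg (d : ℕ) : 0 ≤ LL d := by unfold LL; positivity

/-- Upper bound for `κ`. -/
def KM (d : ℕ) : ℝ := NN d / volume.real (ball (0 : Ed d) 1)

lemma KM_nonneg (d : ℕ) : 0 ≤ KM d := by unfold KM; have := NN_pos d; positivity

namespace Hyp
variable {d : ℕ} {Ω : Set (Ed d)} {T : Ed d → Ed d} {G : Set (Ed d)} {f χ : Ed d → ℝ}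
  {δ m : ℝ} {O : Set (Ed d)} {π : Measure (Ed d × Ed d)} {κ β : ℝ}

lemma int_norm_u (H : Hyp Ω T G f χ δ m O π κ β) {ρ : ℝ} (hρ : ρ ≤ 2) :
    ∫ x in ball (0 : Ed d) ρ, ‖T x - x‖ ≤ LL d * δ := by
  have hδ := H.δpos
  have h1 : ∫ x in ball (0 : Ed d) ρ, ‖T x - x‖ ≤ ∫ x in ball (0 : Ed d) 2, ‖T x - x‖ :=
    setIntegral_mono_set H.int_u (Filter.Eventually.of_forall fun x => norm_nonneg _)
      (Filter.Eventually.of_forall (ball_subset_ball hρ))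
  refine h1.trans ?_
  have hi1 : IntegrableOn (fun x => 1 / (2 * δ) * ‖T x - x‖ ^ 2) (ball 0 2) := H.int_u2.const_mul _
  have hi2 : IntegrableOn (fun _ : Ed d => δ / 2) (ball 0 2) :=
    integrableOn_const measure_ball_lt_top.ne
  have hi3 : IntegrableOn (fun x => 1 / (2 * δ) * ‖T x - x‖ ^ 2 + δ / 2) (ball 0 2) := hi1.add hi2
  refine (integral_mono H.int_u hi3 fun x => ?_).trans ?_
  · have h : 0 ≤ (‖T x - x‖ - δ) ^ 2 / (2 * δ) := by positivity
    have e : (‖T x - x‖ - δ) ^ 2 / (2 * δ) = 1 / (2 * δ) * ‖T x - x‖ ^ 2 + δ / 2 - ‖T x - x‖ := by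
      field_simp; ring
    simp only
    linarith
  · have e : ∫ x in ball (0 : Ed d) 2, (1 / (2 * δ) * ‖T x - x‖ ^ 2 + δ / 2)
        = 1 / (2 * δ) * (∫ x in ball (0 : Ed d) 2, ‖T x - x‖ ^ 2)
          + volume.real (ball (0 : Ed d) 2) * (δ / 2) := by
      rw [integral_add hi1 hi2, integral_const_mul, setIntegral_const, smul_eq_mul]
    rw [e]
    have : 1 / (2 * δ) * (∫ x in ball (0 : Ed d) 2, ‖T x - x‖ ^ 2) ≤ 1 / (2 * δ) * δ ^ 2 := by
      have := H.hE; gcongr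
    have e2 : 1 / (2 * δ) * δ ^ 2 = δ / 2 := by field_simp
    unfold LL; linarith

lemma int_inner_le (H : Hyp Ω T G f χ δ m O π κ β) {g : Ed d → Ed d} {K : ℝ}
    (hK : ∀ x, ‖g x‖ ≤ K) (h0 : ∀ x, 2 ≤ ‖x‖ → g x = 0) :
    |∫ x, inner ℝ (g x) (T x - x)| ≤ K * (LL d * δ) := by
  have hK0 : 0 ≤ K := (norm_nonneg _).trans (hK 0)
  rw [← setIntegral_of_vanish (ρ := 2) fun x hx => by rw [h0 x hx, inner_zero_left],
    ← Real.norm_eq_abs]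
  refine (norm_integral_le_of_norm_le (H.int_u.const_mul K)
    (Filter.Eventually.of_forall fun x => ?_)).trans ?_
  · rw [Real.norm_eq_abs]
    exact (abs_real_inner_le_norm _ _).trans (by gcongr; exact hK x)
  · rw [integral_const_mul]
    exact mul_le_mul_of_nonneg_left (H.int_norm_u le_rfl) hK0

lemma κ_sub_one (H : Hyp Ω T G f χ δ m O π κ β) {K : ℝ} {θ : Ed d → ℝ} {g : Ed d → Ed d}
    (hθ : C2b K θ g) (h0 : ∀ x, 1 ≤ ‖x‖ → θ x = 0) (hg0 : ∀ x, 1 ≤ ‖x‖ → g x = 0)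
    (h1 : ∫ x, θ x = 1) : |κ - 1| ≤ (LL d + NN d + 2) * K * δ := by
  have h := H.weak hθ h0 hg0
  have h2 := H.int_inner_le hθ.gbd fun x hx => hg0 x (by linarith)
  rw [h1, mul_one] at h
  have hK := hθ.nonneg
  have hN := NN_pos d
  have h3 : (NN d + 2) * K * (β * δ) ≤ (NN d + 2) * K * δ := by
    have := H.β1; have := H.δpos
    have : β * δ ≤ δ := by nlinarith
    gcongr
  rw [abs_le] at *
  constructor <;> nlinarith

/-- Pointwise consequence of the duality between `f` and `χ`. -/
lemma ptwise (H : Hyp Ω T G f χ δ m O π κ β) {K : ℝ} {η : Ed d → ℝ} {g : Ed d → Ed d}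
    (hη : C2b K η g) (h0 : ∀ x, 1 / 2 ≤ ‖x‖ → η x = 0) (hpos : ∀ x, 0 ≤ η x) {v : Ed d}
    (hv : ‖v‖ ≤ 1 / 8) {y y' : Ed d} (hχ : ‖y‖ < 1 → |χ y| ≤ 2 * m) :
    η y * χ y ≤ η y' * f (y' - v) + ‖v‖ ^ 2 / 2 * η y
      + K * ‖v‖ * (‖y - y'‖ * (ballInd 1 y + ballInd 1 y')) + 17 * K * ‖y - y'‖ ^ 2
      + K * (1 / (2 * β) * ‖y - y'‖ ^ 2 + β / 2 * (ballInd 1 y' * f (y' - v) ^ 2)) := by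
  have hK := hη.nonneg
  have hβ := H.β0
  have hm := H.mpos
  have hm1 := H.m1
  set e := ‖y - y'‖ with he
  have he0 : 0 ≤ e := norm_nonneg _
  have n1 := ballInd_nonneg 1 y
  have n2 := ballInd_nonneg 1 y'
  have hyoung : e * (ballInd 1 y' * |f (y' - v)|)
      ≤ 1 / (2 * β) * e ^ 2 + β / 2 * (ballInd 1 y' * f (y' - v) ^ 2) := by
    have h : 0 ≤ (e - β * (ballInd 1 y' * |f (y' - v)|)) ^ 2 / (2 * β) := by positivity
    have e1 : (e - β * (ballInd 1 y' * |f (y' - v)|)) ^ 2 / (2 * β) = 1 / (2 * β) * e ^ 2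
        + β / 2 * (ballInd 1 y' ^ 2 * |f (y' - v)| ^ 2) - e * (ballInd 1 y' * |f (y' - v)|) := by
      field_simp; ring
    rw [e1, ballInd_sq, sq_abs] at h
    linarith
  have hyoung' := mul_le_mul_of_nonneg_left hyoung hK
  have hlip := hη.lip y y'
  rw [← he] at hlip
  have hQ : 0 ≤ ‖v‖ ^ 2 / 2 * η y := mul_nonneg (by positivity) (hpos y)
  have hQ2 : 0 ≤ K * ‖v‖ * (e * (ballInd 1 y + ballInd 1 y')) := by positivity
  have hQ3 : 0 ≤ K * (e * (ballInd 1 y' * |f (y' - v)|)) := by positivity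
  have hKe : 0 ≤ K * e ^ 2 := by positivity
  suffices η y * χ y ≤ η y' * f (y' - v) + ‖v‖ ^ 2 / 2 * η y
      + K * ‖v‖ * (e * (ballInd 1 y + ballInd 1 y')) + 17 * K * e ^ 2
      + K * (e * (ballInd 1 y' * |f (y' - v)|)) by linarith
  by_cases hlt : e < 1 / 4
  · have hyy : ‖y'‖ ≤ ‖y‖ + e := by
      have := norm_sub_norm_le y' y
      rw [norm_sub_rev] at this; linarith
    have hyy' : ‖y‖ ≤ ‖y'‖ + e := by
      have := norm_sub_norm_le y y'
      linarith
    have hcross : η y * f (y' - v) ≤ η y' * f (y' - v) + K * (e * (ballInd 1 y' * |f (y' - v)|)) := by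
      by_cases hb : ‖y'‖ < 1
      · rw [ballInd_one hb, one_mul]
        have h1 : (η y - η y') * f (y' - v) ≤ |η y - η y'| * |f (y' - v)| := by
          rw [← abs_mul]; exact le_abs_self _
        have h2 : |η y - η y'| * |f (y' - v)| ≤ K * e * |f (y' - v)| := by gcongr
        linarith
      · rw [h0 y (by linarith), h0 y' (by linarith)]
        simp only [zero_mul, zero_add]; exact hQ3
    by_cases hy : ‖y‖ < 1 / 2
    · have hx : y' - v ∈ ball (0 : Ed d) 2 := by
        rw [mem_ball, dist_zero_right]
        have := norm_sub_le y' v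
        linarith
      have h1 := H.leχ y (y' - v) hx
      have h2 : ‖y - (y' - v)‖ ^ 2 ≤ e ^ 2 + 2 * e * ‖v‖ + ‖v‖ ^ 2 := by
        have h3 : ‖y - (y' - v)‖ ≤ e + ‖v‖ := by
          rw [sub_sub_eq_add_sub, add_sub_right_comm]; exact norm_add_le _ _
        calc _ ≤ (e + ‖v‖) ^ 2 := by gcongr
          _ = _ := by ring
      have h4 : η y * χ y ≤ η y * ((e ^ 2 + 2 * e * ‖v‖ + ‖v‖ ^ 2) / 2 + f (y' - v)) :=
        mul_le_mul_of_nonneg_left (by linarith) (hpos y)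
      have h5 : η y ≤ K := (le_abs_self _).trans (hη.bd y)
      rw [ballInd_one (by linarith : ‖y‖ < 1)] at hQ2 ⊢
      have h6 : η y * (e ^ 2 / 2) ≤ K * (e ^ 2 / 2) := by gcongr
      have h7 : η y * (e * ‖v‖) ≤ K * (e * ‖v‖) := by gcongr
      have h8 : 0 ≤ K * ‖v‖ * (e * ballInd 1 y') := by positivity
      nlinarith
    · have hy0 := h0 y (not_lt.1 hy)
      rw [hy0, zero_mul] at hcross
      rw [hy0, zero_mul]
      rw [hy0] at hQ
      linarith
  · have h16 : 1 ≤ 16 * e ^ 2 := by nlinarith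
    have h1 : η y * χ y ≤ K * (2 * m) := by
      by_cases hy : ‖y‖ < 1
      · have := hχ hy
        have h5 : η y ≤ K := (le_abs_self _).trans (hη.bd y)
        calc η y * χ y ≤ η y * |χ y| := mul_le_mul_of_nonneg_left (le_abs_self _) (hpos y)
          _ ≤ K * (2 * m) := by gcongr
      · rw [h0 y (by linarith), zero_mul]; positivity
    have h2 : -(K * m) ≤ η y' * f (y' - v) := by
      by_cases hy : ‖y'‖ < 1 / 2
      · have hx : y' - v ∈ ball (0 : Ed d) (7 / 4) := by
          rw [mem_ball, dist_zero_right]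
          have := norm_sub_le y' v
          linarith
        have h3 := H.fm _ hx
        have h4 : |η y' * f (y' - v)| ≤ K * m := by
          rw [abs_mul]; exact mul_le_mul (hη.bd _) h3 (abs_nonneg _) hK
        exact (abs_le.1 h4).1
      · rw [h0 y' (by linarith), zero_mul]
        have : 0 ≤ K * m := by positivity
        linarith
    have h3 : K * (3 * m) ≤ K * (16 * e ^ 2) := mul_le_mul_of_nonneg_left (by linarith) hK
    nlinarith

end Hyp

/-! ### The minimality inequality -/

namespace Hyp
variable {d : ℕ} {Ω : Set (Ed d)} {T : Ed d → Ed d} {G : Set (Ed d)} {f χ : Ed d → ℝ}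
  {δ m : ℝ} {O : Set (Ed d)} {π : Measure (Ed d × Ed d)} {κ β : ℝ}

/-- Values of `χ` on the part of the target near the origin. -/
lemma χ_small (H : Hyp Ω T G f χ δ m O π κ β) : ∀ᵐ p ∂π, ‖p.1‖ < 1 → |χ p.1| ≤ 2 * m := by
  have hS : MeasurableSet {y : Ed d | ‖y‖ < 1 → |χ y| ≤ 2 * m} := by
    have e : {y : Ed d | ‖y‖ < 1 → |χ y| ≤ 2 * m} = {y | ‖y‖ < 1}ᶜ ∪ {y | |χ y| ≤ 2 * m} := by
      ext y; simp [imp_iff_not_or]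
    rw [e]
    exact (measurableSet_lt measurable_norm measurable_const).compl.union
      (measurableSet_le H.χm.abs measurable_const)
  refine H.ae_fst hS fun x hx h1 => ?_
  have hb := H.localize hx (by linarith)
  have h2 := H.um' x hx hb
  have h3 := H.fm x (ball_subset_ball (by norm_num) hb)
  rw [H.eqχ x hx, abs_le]
  rw [abs_le] at h3
  have hm := H.mpos
  have hm1 := H.m1
  have h4 : ‖T x - x‖ ^ 2 ≤ m ^ 2 := by gcongr
  constructor <;> nlinarith [sq_nonneg ‖T x - x‖]

lemma f_int (H : Hyp Ω T G f χ δ m O π κ β) {g : Ed d → ℝ} (hg : Continuous g)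
    (h0 : ∀ x, 2 ≤ ‖x‖ → g x = 0) : Integrable fun x => g x * f x :=
  integrable_of_vanish ((hg.mul H.cont).integrableOn_ball' 0 2) fun x hx => by rw [h0 x hx, zero_mul]

lemma f_inner_int (H : Hyp Ω T G f χ δ m O π κ β) {g : Ed d → Ed d} (hg : Continuous g)
    (h0 : ∀ x, 2 ≤ ‖x‖ → g x = 0) : Integrable fun x => f x * inner ℝ (g x) (T x - x) := by
  have h := H.integrable_inner (g := fun x => f x • g x) (H.cont.smul hg)
    (fun x hx => by rw [h0 x hx, smul_zero])
  simpa only [inner_smul_left, conj_trivial] using h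

lemma η_u2_int (H : Hyp Ω T G f χ δ m O π κ β) {η : Ed d → ℝ} (hη : Continuous η)
    (h0 : ∀ x, 2 ≤ ‖x‖ → η x = 0) : Integrable fun x => η x * ‖T x - x‖ ^ 2 := by
  refine integrable_of_vanish (ρ := 2) ?_ (fun x hx => by rw [h0 x hx, zero_mul])
  obtain ⟨R, hR0, hR⟩ := H.ubdd
  obtain ⟨M, hM⟩ := (isCompact_closedBall (0 : Ed d) 2).exists_bound_of_continuousOn hη.continuousOn
  refine H.integrableOn_of (hη.measurable.mul (H.um.norm.pow_const 2)) (C := M * R ^ 2)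
    fun x hx hb => ?_
  have h1 := hM x (ball_subset_closedBall hb)
  have h2 := hR x hx
  rw [abs_mul, abs_of_nonneg (sq_nonneg ‖T x - x‖)]
  rw [Real.norm_eq_abs] at h1
  have : 0 ≤ M := (abs_nonneg _).trans h1
  gcongr

/-- Lower bound for `∫ η χ dπ`: pull back by `T`, use that `χ (T x) = |T x - x|²/2 + f x`, and expand
`η (T x)` to first order. -/
lemma M_lower (H : Hyp Ω T G f χ δ m O π κ β) {K : ℝ} {η : Ed d → ℝ} {g : Ed d → Ed d}
    (hη : C2b K η g) (h0 : ∀ x, 1 / 2 ≤ ‖x‖ → η x = 0) (hg0 : ∀ x, 1 / 2 ≤ ‖x‖ → g x = 0) :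
    1 / 2 * (∫ x, η x * ‖T x - x‖ ^ 2) + (∫ x, η x * f x) + (∫ x, f x * inner ℝ (g x) (T x - x))
      - 3 / 2 * K * m * δ ^ 2 ≤ ∫ p, η p.1 * χ p.1 ∂π := by
  have hK := hη.nonneg
  have hm := H.mpos
  have hF : Measurable fun y => η y * χ y := hη.cont.measurable.mul H.χm
  rw [H.int_fst hF fun y hy => by rw [h0 y (by linarith), zero_mul]]
  set B : Set (Ed d) := ball 0 (3 / 2) with hB
  have h2 : B ⊆ ball 0 2 := ball_subset_ball (by norm_num)
  have i1 : Integrable fun x => η x * ‖T x - x‖ ^ 2 :=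
    H.η_u2_int hη.cont fun x hx => h0 x (by linarith)
  have i2 : Integrable fun x => η x * f x := H.f_int hη.cont fun x hx => h0 x (by linarith)
  have i3 : Integrable fun x => f x * inner ℝ (g x) (T x - x) :=
    H.f_inner_int hη.gc fun x hx => hg0 x (by linarith)
  have i4 : IntegrableOn (fun x => ‖T x - x‖ ^ 2) B := H.int_u2.mono_set h2
  have e1 : ∫ x in B, η x * ‖T x - x‖ ^ 2 = ∫ x, η x * ‖T x - x‖ ^ 2 :=
    setIntegral_of_vanish fun x hx => by rw [h0 x (by linarith), zero_mul]
  have e2 : ∫ x in B, η x * f x = ∫ x, η x * f x :=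
    setIntegral_of_vanish fun x hx => by rw [h0 x (by linarith), zero_mul]
  have e3 : ∫ x in B, f x * inner ℝ (g x) (T x - x) = ∫ x, f x * inner ℝ (g x) (T x - x) :=
    setIntegral_of_vanish fun x hx => by rw [hg0 x (by linarith), inner_zero_left, mul_zero]
  have e4 := H.hE' (ρ := 3 / 2) (by norm_num)
  have j1 : IntegrableOn (fun x => 1 / 2 * (η x * ‖T x - x‖ ^ 2)) B := (i1.const_mul _).integrableOn
  have j2 : IntegrableOn (fun x => 1 / 2 * (η x * ‖T x - x‖ ^ 2) + η x * f x) B :=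
    j1.add i2.integrableOn
  have j3 : IntegrableOn (fun x => 1 / 2 * (η x * ‖T x - x‖ ^ 2) + η x * f x
      + f x * inner ℝ (g x) (T x - x)) B := j2.add i3.integrableOn
  have j4 : IntegrableOn (fun x => 3 / 2 * K * m * ‖T x - x‖ ^ 2) B := i4.const_mul _
  have j5 : IntegrableOn (fun x => 1 / 2 * (η x * ‖T x - x‖ ^ 2) + η x * f x
      + f x * inner ℝ (g x) (T x - x) - 3 / 2 * K * m * ‖T x - x‖ ^ 2) B := j3.sub j4
  have hGB : ∀ᵐ x ∂volume.restrict B, x ∈ G := by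
    filter_upwards [ae_restrict_of_ae H.Gae2, ae_restrict_mem measurableSet_ball] with x h1 h3
    exact h1 (h2 h3)
  have j6 : IntegrableOn (fun x => η (T x) * χ (T x)) B := by
    refine Measure.integrableOn_of_bounded (M := K * (2 * m)) measure_ball_lt_top.ne
      (hF.comp H.Tm).aestronglyMeasurable ?_
    filter_upwards [hGB, ae_restrict_mem measurableSet_ball] with x hx hb
    have h3 := H.um' x hx hb
    have h4 := H.fm x (ball_subset_ball (by norm_num) hb)
    rw [H.eqχ x hx, Real.norm_eq_abs, abs_mul]
    have h5 : |‖T x - x‖ ^ 2 / 2 + f x| ≤ 2 * m := by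
      rw [abs_le] at h4 ⊢
      have hm1 := H.m1
      have h4 : ‖T x - x‖ ^ 2 ≤ m ^ 2 := by gcongr
      constructor <;> nlinarith [sq_nonneg ‖T x - x‖]
    have := hη.bd (T x)
    gcongr
  have hmain : ∫ x in B, (1 / 2 * (η x * ‖T x - x‖ ^ 2) + η x * f x
      + f x * inner ℝ (g x) (T x - x) - 3 / 2 * K * m * ‖T x - x‖ ^ 2)
      ≤ ∫ x in B, η (T x) * χ (T x) := by
    refine integral_mono_ae j5 j6 ?_
    filter_upwards [hGB, ae_restrict_mem measurableSet_ball] with x hx hb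
    have h3 := H.um' x hx hb
    have h4 := H.fm x (ball_subset_ball (by norm_num) hb)
    have h5 := hη.taylor x (T x - x)
    have h6 := hη.lip (T x) x
    rw [add_sub_cancel] at h5
    rw [H.eqχ x hx]
    set U := ‖T x - x‖ with hU
    set q := inner ℝ (g x) (T x - x)
    have hU0 : 0 ≤ U := norm_nonneg _
    have k1 : |(η (T x) - η x - q) * f x| ≤ K * U ^ 2 * m := by
      rw [abs_mul]; exact mul_le_mul h5 h4 (abs_nonneg _) (by positivity)
    have k2 : η x - K * U ≤ η (T x) := by have := (abs_le.1 h6).1; linarith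
    have k3 : (η x - K * U) * (U ^ 2 / 2) ≤ η (T x) * (U ^ 2 / 2) := by gcongr
    have k4 : K * (U * U ^ 2) ≤ K * (m * U ^ 2) := by gcongr
    have k5 := (abs_le.1 k1).1
    nlinarith
  rw [integral_sub j3 j4, integral_add j2 i3.integrableOn, integral_add j1 i2.integrableOn,
    integral_const_mul, integral_const_mul, e1, e2, e3] at hmain
  have : 3 / 2 * K * m * ∫ x in B, ‖T x - x‖ ^ 2 ≤ 3 / 2 * K * m * δ ^ 2 := by gcongr
  linarith
end Hyp

namespace Hyp
variable {d : ℕ} {Ω : Set (Ed d)} {T : Ed d → Ed d} {G : Set (Ed d)} {f χ : Ed d → ℝ}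
  {δ m : ℝ} {O : Set (Ed d)} {π : Measure (Ed d × Ed d)} {κ β : ℝ}

/-- Upper bound for `∫ η χ dπ`: integrate `Hyp.ptwise`, in which duality is applied with the
competitor displaced by `v`. -/
lemma M_upper1 (H : Hyp Ω T G f χ δ m O π κ β) {K : ℝ} {η : Ed d → ℝ} {g : Ed d → Ed d}
    (hη : C2b K η g) (h0 : ∀ x, 1 / 2 ≤ ‖x‖ → η x = 0)
    (hpos : ∀ x, 0 ≤ η x) {v : Ed d} (hv : ‖v‖ ≤ 1 / 8) :
    ∫ p, η p.1 * χ p.1 ∂π ≤ κ * (∫ x, η x * f (x - v)) + ‖v‖ ^ 2 / 2 * (∫ p, η p.1 ∂π)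
      + K * ‖v‖ * ((1 + NN d) * (β * δ)) + 17 * K * (β ^ 2 * δ ^ 2)
      + K * (1 / (2 * β) * (β ^ 2 * δ ^ 2) + β / 2 * (KM d * (CP d * δ ^ 2))) := by
  have hK := hη.nonneg
  have hm := H.mpos
  have hβ := H.β0
  have hηm := hη.cont.measurable
  have hfm := H.cont.measurable
  have hfv : ∀ y : Ed d, ‖y‖ < 1 → |f (y - v)| ≤ m := fun y hy => H.fm _ (by
    rw [mem_ball, dist_zero_right]; have := norm_sub_le y v; linarith)
  have i0 : Integrable (fun p : Ed d × Ed d => η p.1 * χ p.1) π := by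
    have := H.πfin
    have hme : Measurable (fun p : Ed d × Ed d => η p.1 * χ p.1) :=
      (hηm.mul H.χm).comp measurable_fst
    refine Integrable.of_bound hme.aestronglyMeasurable (K * (2 * m)) ?_
    filter_upwards [H.χ_small] with p hp
    rw [norm_mul, Real.norm_eq_abs, Real.norm_eq_abs]
    by_cases hy : ‖p.1‖ < 1
    · have := hp hy
      have := hη.bd p.1
      gcongr
    · rw [h0 _ (by linarith), abs_zero, zero_mul]; positivity
  have m1 : Measurable fun y : Ed d => η y * f (y - v) :=
    hηm.mul (hfm.comp (measurable_id.sub_const v))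
  have m2 : Measurable fun y : Ed d => ballInd 1 y * f (y - v) ^ 2 :=
    (ballInd_meas 1).mul ((hfm.comp (measurable_id.sub_const v)).pow_const 2)
  have i1 : Integrable (fun p : Ed d × Ed d => η p.2 * f (p.2 - v)) π := by
    refine H.integrable_of_bdd (m1.comp measurable_snd) (C := K * m) fun p => ?_
    rw [abs_mul]
    by_cases hy : ‖p.2‖ < 1
    · have := hfv _ hy
      have := hη.bd p.2
      gcongr
    · rw [h0 _ (by linarith), abs_zero, zero_mul]; positivity
  have i2 : Integrable (fun p : Ed d × Ed d => ‖v‖ ^ 2 / 2 * η p.1) π :=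
    (H.integrable_of_bdd (hηm.comp measurable_fst) fun p => hη.bd _).const_mul _
  have i3 : Integrable (fun p : Ed d × Ed d =>
      K * ‖v‖ * (‖p.1 - p.2‖ * (ballInd 1 p.1 + ballInd 1 p.2))) π := H.cost_one.1.const_mul _
  have i4 : Integrable (fun p : Ed d × Ed d => 17 * K * ‖p.1 - p.2‖ ^ 2) π := H.costI.const_mul _
  have i6 : Integrable (fun p : Ed d × Ed d => ballInd 1 p.2 * f (p.2 - v) ^ 2) π := by
    refine H.integrable_of_bdd (m2.comp measurable_snd) (C := 1 * m ^ 2) fun p => ?_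
    rw [abs_mul, abs_of_nonneg (ballInd_nonneg _ _), abs_of_nonneg (sq_nonneg _), ← sq_abs]
    by_cases hy : ‖p.2‖ < 1
    · have h1 := hfv _ hy
      have h2 := ballInd_le_one 1 p.2
      gcongr
    · rw [ballInd_zero (not_lt.1 hy), zero_mul]; positivity
  have i7 : Integrable (fun p : Ed d × Ed d => 1 / (2 * β) * ‖p.1 - p.2‖ ^ 2) π :=
    H.costI.const_mul _
  have i8 : Integrable (fun p : Ed d × Ed d => β / 2 * (ballInd 1 p.2 * f (p.2 - v) ^ 2)) π :=
    i6.const_mul _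
  have i9 : Integrable (fun p : Ed d × Ed d => 1 / (2 * β) * ‖p.1 - p.2‖ ^ 2
      + β / 2 * (ballInd 1 p.2 * f (p.2 - v) ^ 2)) π := i7.add i8
  have i5 : Integrable (fun p : Ed d × Ed d => K * (1 / (2 * β) * ‖p.1 - p.2‖ ^ 2
      + β / 2 * (ballInd 1 p.2 * f (p.2 - v) ^ 2))) π := i9.const_mul K
  have s1 : Integrable (fun p : Ed d × Ed d => η p.2 * f (p.2 - v) + ‖v‖ ^ 2 / 2 * η p.1) π :=
    i1.add i2
  have s2 : Integrable (fun p : Ed d × Ed d => η p.2 * f (p.2 - v) + ‖v‖ ^ 2 / 2 * η p.1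
      + K * ‖v‖ * (‖p.1 - p.2‖ * (ballInd 1 p.1 + ballInd 1 p.2))) π := s1.add i3
  have s3 : Integrable (fun p : Ed d × Ed d => η p.2 * f (p.2 - v) + ‖v‖ ^ 2 / 2 * η p.1
      + K * ‖v‖ * (‖p.1 - p.2‖ * (ballInd 1 p.1 + ballInd 1 p.2)) + 17 * K * ‖p.1 - p.2‖ ^ 2) π :=
    s2.add i4
  have s4 : Integrable (fun p : Ed d × Ed d => η p.2 * f (p.2 - v) + ‖v‖ ^ 2 / 2 * η p.1
      + K * ‖v‖ * (‖p.1 - p.2‖ * (ballInd 1 p.1 + ballInd 1 p.2)) + 17 * K * ‖p.1 - p.2‖ ^ 2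
      + K * (1 / (2 * β) * ‖p.1 - p.2‖ ^ 2 + β / 2 * (ballInd 1 p.2 * f (p.2 - v) ^ 2))) π :=
    s3.add i5
  refine (integral_mono_ae i0 s4 ?_).trans ?_
  · filter_upwards [H.χ_small] with p hp
    exact H.ptwise hη h0 hpos hv hp
  rw [integral_add s3 i5, integral_add s2 i4, integral_add s1 i3, integral_add i1 i2,
    integral_const_mul, integral_const_mul, integral_const_mul, integral_const_mul,
    integral_add i7 i8, integral_const_mul, integral_const_mul,
    H.int_snd m1 fun y hy => by rw [h0 y (by linarith), zero_mul],
    H.int_snd m2 fun y hy => by rw [ballInd_zero (by linarith), zero_mul]]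
  have t1 := H.cost_one.2
  have t2 := H.cost
  have t3 : ∫ y, ballInd 1 y * f (y - v) ^ 2 ≤ CP d * δ ^ 2 := by
    have e : ∫ y, ballInd 1 y * f (y - v) ^ 2 = ∫ x, ballInd 1 (x + v) * f x ^ 2 := by
      rw [← integral_add_right_eq_self _ v]; simp only [add_sub_cancel_right]
    rw [e]
    have e2 : ∫ x in ball (0 : Ed d) 2, f x ^ 2
        = ∫ x, (ball (0 : Ed d) 2).indicator (fun x => f x ^ 2) x :=
      (integral_indicator measurableSet_ball).symm
    refine le_trans ?_ H.hf
    rw [e2]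
    refine integral_mono_of_nonneg (Filter.Eventually.of_forall fun x => ?_)
      (H.int_f2.integrable_indicator measurableSet_ball) (Filter.Eventually.of_forall fun x => ?_)
    · exact mul_nonneg (ballInd_nonneg _ _) (sq_nonneg _)
    · by_cases hx : ‖x + v‖ < 1
      · have hx2 : x ∈ ball (0 : Ed d) 2 := by
          rw [mem_ball, dist_zero_right]
          have := norm_sub_le (x + v) v
          rw [add_sub_cancel_right] at this
          linarith
        simp only [ballInd_one hx, indicator_of_mem hx2, one_mul, le_refl]
      · simp only [ballInd_zero (not_lt.1 hx), zero_mul]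
        exact indicator_nonneg (fun _ _ => sq_nonneg _) _
  have t4 := H.κ_le
  have t4' : κ * ∫ y, ballInd 1 y * f (y - v) ^ 2 ≤ KM d * (CP d * δ ^ 2) :=
    mul_le_mul t4 t3 (integral_nonneg fun x => mul_nonneg (ballInd_nonneg _ _) (sq_nonneg _))
      (KM_nonneg d)
  have hNN := NN_pos d
  gcongr

set_option maxHeartbeats 1000000 in
/-- The minimality inequality: testing the duality with the constant displacement `v`. -/
lemma M (d : ℕ) (K V : ℝ) : ∃ C : ℝ, 0 ≤ C ∧ ∀ {Ω : Set (Ed d)} {T : Ed d → Ed d} {G : Set (Ed d)}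
    {f χ : Ed d → ℝ} {δ m : ℝ} {O : Set (Ed d)} {π : Measure (Ed d × Ed d)} {κ β : ℝ}
    (_ : Hyp Ω T G f χ δ m O π κ β) {η : Ed d → ℝ} {g : Ed d → Ed d} (_ : C2b K η g)
    (_ : ∀ x, 1 / 2 ≤ ‖x‖ → η x = 0) (_ : ∀ x, 1 / 2 ≤ ‖x‖ → g x = 0) (_ : ∀ x, 0 ≤ η x)
    (_ : ∫ x, η x = 1) {v : Ed d} (_ : ‖v‖ ≤ 1 / 8) (_ : ‖v‖ ≤ V * δ),
    1 / 2 * (∫ x, η x * ‖T x - x‖ ^ 2) ≤ ‖v‖ ^ 2 / 2 + (∫ x, f x * inner ℝ (g x) (v - (T x - x)))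
      + (κ - 1) * (∫ x, η x * f x) + C * (β + m) * δ ^ 2 := by
  rcases lt_or_ge K 0 with hK | hK
  · exact ⟨0, le_rfl, fun _ _ _ hη => absurd hη.nonneg (not_le.2 hK)⟩
  rcases lt_or_ge V 0 with hV | hV
  · refine ⟨0, le_rfl, ?_⟩
    intro Ω T G f χ δ m O π κ β H η g _ _ _ _ _ v _ hv
    exact absurd (norm_nonneg v) (not_le.2 (lt_of_le_of_lt hv (mul_neg_of_neg_of_pos hV H.δpos)))
  have hNN := NN_pos d
  have hKM := KM_nonneg d
  have hCP := CP_nonneg d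
  have hLL := LL_nonneg d
  set W := volume.real (ball (0 : Ed d) 1) with hW
  set Cκ := (LL d + NN d + 2) * K with hCκ
  have hCκ0 : 0 ≤ Cκ := by positivity
  set C1 := V ^ 2 / 2 * (K * LL d) + K * V * (1 + NN d) + 17 * K + K * (1 / 2 + 1 / 2 * (KM d * CP d))
  set C2 := KM d * (K * V ^ 2 * W) + Cκ * (K * V * W) + 3 / 2 * K
  have hC1 : 0 ≤ C1 := by positivity
  have hC2 : 0 ≤ C2 := by positivity
  refine ⟨C1 + C2, by positivity, ?_⟩
  intro Ω T G f χ δ m O π κ β H η g hη h0 hg0 hpos hintg v hv8 hvV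
  have hlow := H.M_lower hη h0 hg0
  have hup := H.M_upper1 hη h0 hpos hv8
  have hβ := H.β0; have hβ1 := H.β1; have hδ := H.δpos; have hδ1 := H.δ1; have hm := H.mpos
  have hδβ := H.δβ
  have hκ1 := H.κ_sub_one hη (fun x hx => h0 x (by linarith)) (fun x hx => hg0 x (by linarith)) hintg
  rw [← hCκ] at hκ1
  have hηi : Integrable η :=
    integrable_of_vanish (hη.cont.integrableOn_ball' 0 1) fun x hx => h0 x (by linarith)
  have hv0 := norm_nonneg v
  have hv2 : ‖v‖ ^ 2 ≤ V ^ 2 * δ ^ 2 := by rw [← mul_pow]; gcongr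
  -- mass of `η` under the target
  have a1 : ∫ p, η p.1 ∂π ≤ 1 + K * (LL d * δ) := by
    rw [H.int_fst hη.cont.measurable fun y hy => h0 y (by linarith)]
    have h2 : ball (0 : Ed d) (3 / 2) ⊆ ball 0 2 := ball_subset_ball (by norm_num)
    have j1 : IntegrableOn (fun x => η (T x)) (ball 0 (3 / 2)) :=
      (H.integrableOn_of (hη.cont.measurable.comp H.Tm) (C := K) fun x _ _ => hη.bd _).mono_set h2
    have j2 : IntegrableOn (fun x => K * ‖T x - x‖) (ball 0 (3 / 2)) :=
      (H.int_u.mono_set h2).const_mul K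
    have j3 : IntegrableOn (fun x => η x + K * ‖T x - x‖) (ball 0 (3 / 2)) := hηi.integrableOn.add j2
    refine (integral_mono j1 j3 fun x => ?_).trans ?_
    · have := (abs_le.1 (hη.lip (T x) x)).2
      simp only; linarith
    · rw [integral_add hηi.integrableOn j2, integral_const_mul,
        setIntegral_of_vanish fun x hx => h0 x (by linarith), hintg]
      have := H.int_norm_u (ρ := 3 / 2) (by norm_num)
      gcongr
  -- Taylor expansion of `η (x + v)`
  have k1 : Integrable fun x => η x * f x := H.f_int hη.cont fun x hx => h0 x (by linarith)
  have k2 : Integrable fun x => f x * inner ℝ (g x) v := by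
    have hc : Continuous fun x => inner ℝ (g x) v := hη.gc.inner continuous_const
    have := H.f_int hc fun x hx => by rw [hg0 x (by linarith), inner_zero_left]
    simpa only [mul_comm] using this
  have k3 : Integrable fun x => f x * inner ℝ (g x) (T x - x) :=
    H.f_inner_int hη.gc fun x hx => hg0 x (by linarith)
  have k4 : Integrable fun x => η (x + v) * f x := by
    refine H.f_int (g := fun x => η (x + v)) (hη.cont.comp (by fun_prop)) fun x hx => h0 _ ?_
    have := norm_sub_le (x + v) v
    rw [add_sub_cancel_right] at this
    linarith
  have hWi : Integrable (ballInd 1 : Ed d → ℝ) := by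
    unfold ballInd
    exact (integrable_indicator_iff measurableSet_ball).2 (integrableOn_const measure_ball_lt_top.ne)
  have a2 : |∫ x, (η (x + v) * f x - η x * f x - f x * inner ℝ (g x) v)|
      ≤ K * V ^ 2 * δ ^ 2 * m * W := by
    rw [← Real.norm_eq_abs]
    refine (norm_integral_le_of_norm_le (hWi.const_mul (K * V ^ 2 * δ ^ 2 * m))
      (Filter.Eventually.of_forall fun x => ?_)).trans ?_
    · rw [Real.norm_eq_abs]
      by_cases hx : ‖x‖ < 1
      · rw [ballInd_one hx, mul_one]
        have e : η (x + v) * f x - η x * f x - f x * inner ℝ (g x) v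
          = (η (x + v) - η x - inner ℝ (g x) v) * f x := by ring
        rw [e, abs_mul]
        have h1 := hη.taylor x v
        have h2 := H.fm x (by rw [mem_ball, dist_zero_right]; linarith)
        refine mul_le_mul (h1.trans ?_) h2 (abs_nonneg _) (by positivity)
        rw [mul_assoc]; gcongr
      · have : 1 / 2 ≤ ‖x + v‖ := by
          have := norm_sub_le (x + v) v
          rw [add_sub_cancel_right] at this
          linarith
        rw [h0 _ this, h0 x (by linarith), hg0 x (by linarith), inner_zero_left,
          ballInd_zero (not_lt.1 hx)]
        simp
    · rw [integral_const_mul, ballInd_integral]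
  have a3 : |∫ x, f x * inner ℝ (g x) v| ≤ m * (K * (V * δ)) * W := by
    rw [← Real.norm_eq_abs]
    refine (norm_integral_le_of_norm_le (hWi.const_mul (m * (K * (V * δ))))
      (Filter.Eventually.of_forall fun x => ?_)).trans ?_
    · rw [Real.norm_eq_abs]
      by_cases hx : ‖x‖ < 1
      · rw [ballInd_one hx, mul_one, abs_mul]
        have h2 := H.fm x (by rw [mem_ball, dist_zero_right]; linarith)
        have h3 : |inner ℝ (g x) v| ≤ K * (V * δ) := (abs_real_inner_le_norm _ _).trans
          (mul_le_mul (hη.gbd x) hvV hv0 hK)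
        gcongr
      · rw [hg0 x (by linarith), inner_zero_left, mul_zero, abs_zero]
        have := ballInd_nonneg 1 x
        positivity
    · rw [integral_const_mul, ballInd_integral]
  have e1 : ∫ x, η x * f (x - v) = ∫ x, η (x + v) * f x := by
    rw [← integral_add_right_eq_self _ v]; simp only [add_sub_cancel_right]
  have k5 : Integrable fun x => η (x + v) * f x - η x * f x := k4.sub k1
  rw [integral_sub k5 k2, integral_sub k4 k1] at a2
  have e2 : ∫ x, f x * inner ℝ (g x) (v - (T x - x))
      = (∫ x, f x * inner ℝ (g x) v) - ∫ x, f x * inner ℝ (g x) (T x - x) := by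
    rw [← integral_sub k2 k3]
    congr 1; ext x; rw [inner_sub_right]; ring
  rw [e1] at hup
  rw [e2]
  set X := ∫ x, η (x + v) * f x
  set Y := ∫ x, η x * f x
  set Z := ∫ x, f x * inner ℝ (g x) v
  have b1 : κ * (X - Y - Z) ≤ KM d * (K * V ^ 2 * δ ^ 2 * m * W) := by
    calc κ * (X - Y - Z) ≤ κ * |X - Y - Z| := mul_le_mul_of_nonneg_left (le_abs_self _) H.κ0
      _ ≤ _ := mul_le_mul H.κ_le a2 (abs_nonneg _) hKM
  have b2 : (κ - 1) * Z ≤ Cκ * δ * (m * (K * (V * δ)) * W) := by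
    calc (κ - 1) * Z ≤ |κ - 1| * |Z| := by rw [← abs_mul]; exact le_abs_self _
      _ ≤ _ := mul_le_mul hκ1 a3 (abs_nonneg _) (by positivity)
  have b3 : ‖v‖ ^ 2 / 2 * (∫ p, η p.1 ∂π) ≤ ‖v‖ ^ 2 / 2 + V ^ 2 / 2 * (K * LL d) * (β * δ ^ 2) := by
    have c1 : ‖v‖ ^ 2 / 2 * (∫ p, η p.1 ∂π) ≤ ‖v‖ ^ 2 / 2 * (1 + K * (LL d * δ)) := by gcongr
    have c2 : ‖v‖ ^ 2 * (K * (LL d * δ)) ≤ V ^ 2 * δ ^ 2 * (K * (LL d * β)) := by gcongr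
    linarith
  have b4 : K * ‖v‖ * ((1 + NN d) * (β * δ)) ≤ K * V * (1 + NN d) * (β * δ ^ 2) := by
    have : K * ‖v‖ * ((1 + NN d) * (β * δ)) ≤ K * (V * δ) * ((1 + NN d) * (β * δ)) := by gcongr
    linarith
  have hb2 : β ^ 2 * δ ^ 2 ≤ β * δ ^ 2 := by
    have : β ^ 2 ≤ β := by nlinarith
    gcongr
  have b5 : 17 * K * (β ^ 2 * δ ^ 2) ≤ 17 * K * (β * δ ^ 2) := by gcongr
  have b6 : 1 / (2 * β) * (β ^ 2 * δ ^ 2) = 1 / 2 * (β * δ ^ 2) := by field_simp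
  rw [b6] at hup
  have hC1β : C1 * (β * δ ^ 2) + C2 * (m * δ ^ 2) ≤ (C1 + C2) * (β + m) * δ ^ 2 := by
    have : 0 ≤ C1 * (m * δ ^ 2) + C2 * (β * δ ^ 2) := by positivity
    linarith
  have hC1e : C1 * (β * δ ^ 2) = V ^ 2 / 2 * (K * LL d) * (β * δ ^ 2)
    + K * V * (1 + NN d) * (β * δ ^ 2) + 17 * K * (β * δ ^ 2)
    + K * (1 / 2 * (β * δ ^ 2) + β / 2 * (KM d * (CP d * δ ^ 2))) := by ring
  have hC2e : C2 * (m * δ ^ 2) = KM d * (K * V ^ 2 * δ ^ 2 * m * W)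
    + Cκ * δ * (m * (K * (V * δ)) * W) + 3 / 2 * K * m * δ ^ 2 := by ring
  linarith
end Hyp

/-! ### Smooth kernels -/

lemma gradient_inner {d : ℕ} (θ : Ed d → ℝ) (x : Ed d) :
    innerSL ℝ (gradient θ x) = fderiv ℝ θ x := by
  ext v
  rw [innerSL_apply_apply, gradient, InnerProductSpace.toDual_symm_apply]

/-- Smooth compactly supported functions satisfy `C2b` bounds. -/
lemma C2b_of_contDiff {d : ℕ} {θ : Ed d → ℝ} (hθ : ContDiff ℝ (⊤ : ℕ∞) θ)
    (hs : HasCompactSupport θ) : ∃ K, C2b K θ (gradient θ) := by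
  obtain ⟨K1, h1⟩ := hs.exists_bound_of_continuous hθ.continuous
  have hf : ContDiff ℝ 1 (fderiv ℝ θ) := hθ.fderiv_right (by norm_cast)
  obtain ⟨K2, h2⟩ := hs.fderiv (𝕜 := ℝ) |>.exists_bound_of_continuous hf.continuous
  obtain ⟨K3, h3⟩ := hf.lipschitzWith_of_hasCompactSupport (hs.fderiv (𝕜 := ℝ)) one_ne_zero
  have g1 : ∀ x, ‖gradient θ x‖ = ‖fderiv ℝ θ x‖ := fun x => by
    rw [← gradient_inner, innerSL_apply_norm]
  refine ⟨|K1| + |K2| + K3, fun x => ?_, fun x => ?_, fun x v => ?_, ?_⟩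
  · have := h1 x; have := le_abs_self K1; have := abs_nonneg K2; have := K3.coe_nonneg
    rw [Real.norm_eq_abs] at *; linarith
  · have := h2 x; have := le_abs_self K2; have := abs_nonneg K1; have := K3.coe_nonneg
    rw [g1]; linarith
  · have h := (convex_closedBall x ‖v‖).norm_image_sub_le_of_norm_hasFDerivWithin_le' (𝕜 := ℝ)
      (f := θ) (f' := fderiv ℝ θ) (φ := fderiv ℝ θ x) (C := K3 * ‖v‖) (x := x) (y := x + v)
      (fun z _ => ((hθ.differentiable (by simp)) z).hasFDerivAt.hasFDerivWithinAt)
      (fun z hz => by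
        rw [← dist_eq_norm]
        refine (h3.dist_le_mul z x).trans ?_
        gcongr; exact hz)
      (mem_closedBall_self (norm_nonneg _)) (by simp)
    rw [add_sub_cancel_left, Real.norm_eq_abs, ← gradient_inner, innerSL_apply_apply] at h
    refine h.trans ?_
    rw [mul_assoc, ← sq]
    gcongr
    have := abs_nonneg K2; have := abs_nonneg K1; linarith
  · exact (InnerProductSpace.toDual ℝ (Ed d)).symm.continuous.comp hf.continuous

lemma C2b.scale {d : ℕ} {K : ℝ} {θ : Ed d → ℝ} {g : Ed d → Ed d} (h : C2b K θ g) {a : ℝ}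
    (ha : 1 ≤ a) : C2b (K * a ^ 2) (fun x => θ (a • x)) (fun x => a • g (a • x)) where
  bd x := (h.bd _).trans (le_mul_of_one_le_right h.nonneg (one_le_pow₀ ha))
  gbd x := by
    have := h.gbd (a • x)
    have := h.nonneg
    rw [norm_smul, Real.norm_of_nonneg (by linarith)]
    calc a * ‖g (a • x)‖ ≤ a * K := by gcongr
      _ ≤ K * a ^ 2 := by nlinarith [mul_nonneg this (by nlinarith : 0 ≤ a * (a - 1))]
  taylor x v := by
    have := h.taylor (a • x) (a • v)
    rw [norm_smul, Real.norm_of_nonneg (by linarith : 0 ≤ a), mul_pow] at this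
    rw [smul_add, inner_smul_left, conj_trivial, ← inner_smul_right]
    linarith
  gc := by have := h.gc; fun_prop

/-- Unnormalised radial profile. -/
def prof0 (t : ℝ) : ℝ := Real.smoothTransition (2 - 2 * t)

lemma prof0_contDiff : ContDiff ℝ (⊤ : ℕ∞) prof0 :=
  Real.smoothTransition.contDiff.comp (by fun_prop)

lemma prof0_nonneg (t : ℝ) : 0 ≤ prof0 t := Real.smoothTransition.nonneg _

lemma prof0_one {t : ℝ} (ht : t ≤ 1 / 2) : prof0 t = 1 :=
  Real.smoothTransition.one_of_one_le (by linarith)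

lemma prof0_zero {t : ℝ} (ht : 1 ≤ t) : prof0 t = 0 :=
  Real.smoothTransition.zero_of_nonpos (by linarith)

/-- Normalisation constant of the mollifier. -/
def cη (d : ℕ) : ℝ := ∫ y : Ed d, prof0 (‖y‖ ^ 2)

lemma hasCompactSupport_of_zero {d : ℕ} {E : Type*} [Zero E] {F : Ed d → E} {ρ : ℝ}
    (h : ∀ x, ρ ≤ ‖x‖ → F x = 0) : HasCompactSupport F :=
  HasCompactSupport.intro (isCompact_closedBall (0 : Ed d) ρ) fun x hx => h x (by
    rw [mem_closedBall, dist_zero_right, not_le] at hx; exact hx.le)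

lemma contDiff_radial {d : ℕ} {F : ℝ → ℝ} (hF : ContDiff ℝ (⊤ : ℕ∞) F) :
    ContDiff ℝ (⊤ : ℕ∞) fun y : Ed d => F (‖y‖ ^ 2) :=
  hF.comp (contDiff_norm_sq ℝ)

lemma cη_pos (d : ℕ) : 0 < cη d := by
  unfold cη
  have hc : Continuous fun y : Ed d => prof0 (‖y‖ ^ 2) := (contDiff_radial prof0_contDiff).continuous
  refine hc.integral_pos_of_hasCompactSupport_nonneg_nonzero (x := 0) ?_ (fun y => prof0_nonneg _) ?_
  · exact hasCompactSupport_of_zero (ρ := 1) fun x hx => prof0_zero (one_le_pow₀ hx)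
  · rw [prof0_one (by simp)]; exact one_ne_zero

/-- Radial profile of the mollifier. -/
def prof (d : ℕ) (t : ℝ) : ℝ := (cη d)⁻¹ * prof0 t

/-- The mollifier: smooth, radial, of mass one, supported in the unit ball, and constant on the
ball of squared radius `1 / 2`. -/
def eta (d : ℕ) (y : Ed d) : ℝ := prof d (‖y‖ ^ 2)

/-- Radial profile of `GG`. -/
def Gprof (d : ℕ) (t : ℝ) : ℝ := -(1 / 2) * ∫ s in (1 : ℝ)..t, prof d s

/-- The compactly supported function with gradient `-y η(y)`. -/
def GG (d : ℕ) (y : Ed d) : ℝ := Gprof d (‖y‖ ^ 2)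

lemma prof_contDiff (d : ℕ) : ContDiff ℝ (⊤ : ℕ∞) (prof d) := contDiff_const.mul prof0_contDiff

lemma prof_nonneg (d : ℕ) (t : ℝ) : 0 ≤ prof d t :=
  mul_nonneg (inv_nonneg.2 (cη_pos d).le) (prof0_nonneg t)

lemma eta_contDiff (d : ℕ) : ContDiff ℝ (⊤ : ℕ∞) (eta d) := contDiff_radial (prof_contDiff d)

lemma eta_nonneg (d : ℕ) (y : Ed d) : 0 ≤ eta d y := prof_nonneg d _

lemma eta_zero {d : ℕ} {y : Ed d} (h : 1 ≤ ‖y‖) : eta d y = 0 := by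
  unfold eta prof; rw [prof0_zero (one_le_pow₀ h), mul_zero]

lemma eta_flat {d : ℕ} {y : Ed d} (h : ‖y‖ ≤ 1 / 2) : eta d y = (cη d)⁻¹ := by
  unfold eta prof
  rw [prof0_one (by nlinarith [norm_nonneg y]), mul_one]

lemma eta_integral (d : ℕ) : ∫ y, eta d y = 1 := by
  unfold eta prof
  rw [integral_const_mul]
  exact inv_mul_cancel₀ (cη_pos d).ne'

lemma eta_cs (d : ℕ) : HasCompactSupport (eta d) := hasCompactSupport_of_zero fun _ => eta_zero

lemma eta_int (d : ℕ) : Integrable (eta d) :=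
  (eta_contDiff d).continuous.integrable_of_hasCompactSupport (eta_cs d)

lemma Gprof_deriv (d : ℕ) (t : ℝ) : HasDerivAt (Gprof d) (-(1 / 2) * prof d t) t := by
  have hc := (prof_contDiff d).continuous
  exact (intervalIntegral.integral_hasDerivAt_right (hc.intervalIntegrable _ _)
    hc.stronglyMeasurable.stronglyMeasurableAtFilter hc.continuousAt).const_mul _

lemma Gprof_contDiff (d : ℕ) : ContDiff ℝ (⊤ : ℕ∞) (Gprof d) := by
  have hd : deriv (Gprof d) = fun t => -(1 / 2) * prof d t := funext fun t => (Gprof_deriv d t).deriv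
  rw [contDiff_infty_iff_deriv, hd]
  exact ⟨fun t => (Gprof_deriv d t).differentiableAt, contDiff_const.mul (prof_contDiff d)⟩

lemma GG_contDiff (d : ℕ) : ContDiff ℝ (⊤ : ℕ∞) (GG d) := contDiff_radial (Gprof_contDiff d)

lemma GG_zero {d : ℕ} {y : Ed d} (h : 1 ≤ ‖y‖) : GG d y = 0 := by
  unfold GG Gprof
  have h2 : 1 ≤ ‖y‖ ^ 2 := one_le_pow₀ h
  have : ∫ s in (1 : ℝ)..‖y‖ ^ 2, prof d s = ∫ s in (1 : ℝ)..‖y‖ ^ 2, (0 : ℝ) := by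
    refine intervalIntegral.integral_congr fun s hs => ?_
    rw [uIcc_of_le h2] at hs
    simp only [prof, prof0_zero hs.1, mul_zero]
  rw [this]; simp

lemma GG_nonneg {d : ℕ} (y : Ed d) : 0 ≤ GG d y := by
  rcases le_or_gt 1 ‖y‖ with h | h
  · rw [GG_zero h]
  · unfold GG Gprof
    rw [intervalIntegral.integral_symm]
    have := intervalIntegral.integral_nonneg (μ := volume) (f := prof d)
      (by nlinarith [norm_nonneg y] : ‖y‖ ^ 2 ≤ 1) fun s _ => prof_nonneg d s
    linarith

lemma GG_hasFDerivAt {d : ℕ} (y : Ed d) : HasFDerivAt (GG d) (innerSL ℝ (-(eta d y) • y)) y := by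
  have h1 : HasFDerivAt (fun y : Ed d => ‖y‖ ^ 2) (2 • innerSL ℝ y) y :=
    (hasStrictFDerivAt_norm_sq y).hasFDerivAt
  have h := (Gprof_deriv d (‖y‖ ^ 2)).comp_hasFDerivAt y h1
  refine h.congr_fderiv ?_
  ext v
  simp [eta]
  ring

lemma GG_gradient {d : ℕ} (y : Ed d) : gradient (GG d) y = -(eta d y) • y := by
  have := (GG_hasFDerivAt y).fderiv
  rw [← gradient_inner] at this
  exact (innerSL_inj (𝕜 := ℝ)).1 this

lemma GG_cs (d : ℕ) : HasCompactSupport (GG d) := hasCompactSupport_of_zero fun _ => GG_zero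

lemma GG_int (d : ℕ) : Integrable (GG d) :=
  (GG_contDiff d).continuous.integrable_of_hasCompactSupport (GG_cs d)

/-! ### Partial derivatives and the Laplacian -/

/-- The `i`-th partial derivative. -/
def pd {d : ℕ} (i : Fin d) (f : Ed d → ℝ) (x : Ed d) : ℝ :=
  fderiv ℝ f x (EuclideanSpace.single i (1:ℝ))

lemma lap_eq {d : ℕ} (f : Ed d → ℝ) (x : Ed d) : lap f x = ∑ i, pd i (pd i f) x := rfl

lemma gradient_apply {d : ℕ} (f : Ed d → ℝ) (x : Ed d) (i : Fin d) : gradient f x i = pd i f x := by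
  unfold pd
  rw [← gradient_inner, innerSL_apply_apply, EuclideanSpace.inner_single_right]
  simp

lemma pd_contDiff {d : ℕ} {f : Ed d → ℝ} (hf : ContDiff ℝ (⊤ : ℕ∞) f) (i : Fin d) :
    ContDiff ℝ (⊤ : ℕ∞) (pd i f) :=
  (hf.fderiv_right (m := (⊤ : ℕ∞)) (by norm_cast)).clm_apply contDiff_const

lemma pd_cs {d : ℕ} {f : Ed d → ℝ} (hf : HasCompactSupport f) (i : Fin d) :
    HasCompactSupport (pd i f) :=
  (hf.fderiv (𝕜 := ℝ)).comp_left (g := fun L : Ed d →L[ℝ] ℝ => L (EuclideanSpace.single i (1:ℝ)))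
    (by simp)

lemma pd_zero {d : ℕ} {f : Ed d → ℝ} {ρ : ℝ}
    (h : ∀ x, ρ ≤ ‖x‖ → f x = 0) (i : Fin d) {x : Ed d} (hx : ρ < ‖x‖) : pd i f x = 0 := by
  have : f =ᶠ[𝓝 x] fun _ => 0 := by
    filter_upwards [continuous_norm.continuousAt.eventually (lt_mem_nhds hx)] with y hy
      using h y hy.le
  unfold pd
  rw [this.fderiv_eq]; simp

lemma pd_comm {d : ℕ} {f : Ed d → ℝ} (hf : ContDiff ℝ (⊤ : ℕ∞) f) (i j : Fin d) (x : Ed d) :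
    pd i (pd j f) x = pd j (pd i f) x := by
  have hf' : ContDiff ℝ (⊤ : ℕ∞) (fderiv ℝ f) := hf.fderiv_right (m := (⊤ : ℕ∞)) (by norm_cast)
  have hx : HasFDerivAt (fderiv ℝ f) (fderiv ℝ (fderiv ℝ f) x) x :=
    ((hf'.differentiable (by simp)) x).hasFDerivAt
  have key : ∀ i j : Fin d, pd i (pd j f) x = fderiv ℝ (fderiv ℝ f) x
      (EuclideanSpace.single i (1:ℝ)) (EuclideanSpace.single j (1:ℝ)) := fun i j => by
    have := hx.clm_apply (hasFDerivAt_const (EuclideanSpace.single j (1:ℝ)) x)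
    have h2 := this.fderiv
    show fderiv ℝ (fun y => fderiv ℝ f y (EuclideanSpace.single j (1:ℝ))) x _ = _
    rw [h2]; simp
  rw [key, key]
  exact second_derivative_symmetric (fun y => ((hf.differentiable (by simp)) y).hasFDerivAt) hx _ _

lemma pd_add {d : ℕ} {f g : Ed d → ℝ} (hf : ContDiff ℝ (⊤ : ℕ∞) f) (hg : ContDiff ℝ (⊤ : ℕ∞) g)
    (i : Fin d) : pd i (fun x => f x + g x) = fun x => pd i f x + pd i g x := by
  ext x
  unfold pd
  rw [fderiv_fun_add ((hf.differentiable (by simp)) x) ((hg.differentiable (by simp)) x)]; simp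

lemma pd_sum {d : ℕ} {ι : Type*} {s : Finset ι} {f : ι → Ed d → ℝ}
    (hf : ∀ j, ContDiff ℝ (⊤ : ℕ∞) (f j)) (i : Fin d) (x : Ed d) :
    pd i (fun x => ∑ j ∈ s, f j x) x = ∑ j ∈ s, pd i (f j) x := by
  unfold pd
  rw [fderiv_fun_sum fun j _ => ((hf j).differentiable (by simp)) x]; simp

lemma lap_add {d : ℕ} {f g : Ed d → ℝ} (hf : ContDiff ℝ (⊤ : ℕ∞) f)
    (hg : ContDiff ℝ (⊤ : ℕ∞) g) (x : Ed d) :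
    lap (fun x => f x + g x) x = lap f x + lap g x := by
  simp only [lap_eq, pd_add hf hg, ← Finset.sum_add_distrib]
  refine Finset.sum_congr rfl fun i _ => ?_
  rw [pd_add (pd_contDiff hf i) (pd_contDiff hg i)]

lemma lap_contDiff {d : ℕ} {f : Ed d → ℝ} (hf : ContDiff ℝ (⊤ : ℕ∞) f) :
    ContDiff ℝ (⊤ : ℕ∞) (lap f) := by
  have : lap f = fun x => ∑ i, pd i (pd i f) x := rfl
  rw [this]
  exact ContDiff.sum fun i _ => pd_contDiff (pd_contDiff hf i) i

/-- If the Laplacian of a smooth function is constant, its gradient is harmonic. -/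
lemma gradHarmonicOn_of_lap {d : ℕ} {φ : Ed d → ℝ} (hφ : ContDiff ℝ (⊤ : ℕ∞) φ) {ρ c : ℝ}
    (h : ∀ x ∈ ball (0 : Ed d) ρ, lap φ x = c) : GradHarmonicOn φ (ball 0 ρ) := by
  refine ⟨hφ.contDiffOn, fun i => ?_⟩
  simp only [gradient_apply]
  refine ⟨(pd_contDiff hφ i).contDiffOn, fun x hx => ?_⟩
  have h1 : lap (pd i φ) x = pd i (lap φ) x := by
    have : lap φ = fun x => ∑ j, pd j (pd j φ) x := rfl
    rw [this, pd_sum (fun j => pd_contDiff (pd_contDiff hφ j) j), lap_eq]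
    refine Finset.sum_congr rfl fun j _ => ?_
    have e : pd j (pd i φ) = pd i (pd j φ) := funext fun y => pd_comm hφ j i y
    rw [e, pd_comm (pd_contDiff hφ j)]
  have h2 : lap φ =ᶠ[𝓝 x] fun _ => c := by
    filter_upwards [isOpen_ball.mem_nhds hx] with y hy using h y hy
  show lap (pd i φ) x = 0
  rw [h1]; unfold pd; rw [h2.fderiv_eq]; simp

/-- Superpositions of translates of a `C2b` function are `C2b`. -/
lemma C2b.superpose {d : ℕ} {α : Type*} [MeasurableSpace α] {ρ : Measure α} {w : α → ℝ}
    {z : α → Ed d} (hw : Integrable w ρ) (hz : Measurable z) {K : ℝ} {k : Ed d → ℝ}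
    {gk : Ed d → Ed d} (h : C2b K k gk) :
    C2b (K * ∫ a, |w a| ∂ρ) (fun x => ∫ a, w a * k (x - z a) ∂ρ)
      (fun x => ∫ a, w a • gk (x - z a) ∂ρ) := by
  have hkm : ∀ x, AEStronglyMeasurable (fun a => k (x - z a)) ρ := fun x =>
    (h.cont.measurable.comp (measurable_const.sub hz)).aestronglyMeasurable
  have hgm : ∀ x, AEStronglyMeasurable (fun a => gk (x - z a)) ρ := fun x =>
    (h.gc.measurable.comp (measurable_const.sub hz)).aestronglyMeasurable
  have ik : ∀ x, Integrable (fun a => w a * k (x - z a)) ρ := fun x =>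
    hw.mul_bdd (hkm x) (Filter.Eventually.of_forall fun a => h.bd _)
  have ig : ∀ x, Integrable (fun a => w a • gk (x - z a)) ρ := fun x =>
    hw.smul_bdd _ (hgm x) (Filter.Eventually.of_forall fun a => h.gbd _)
  refine ⟨fun x => ?_, fun x => ?_, fun x v => ?_, ?_⟩
  · rw [← integral_const_mul, ← Real.norm_eq_abs]
    refine norm_integral_le_of_norm_le (hw.abs.const_mul _) (Filter.Eventually.of_forall fun a => ?_)
    rw [norm_mul, mul_comm, Real.norm_eq_abs (w a)]
    gcongr; exact h.bd _
  · rw [← integral_const_mul]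
    refine norm_integral_le_of_norm_le (hw.abs.const_mul _) (Filter.Eventually.of_forall fun a => ?_)
    rw [norm_smul, mul_comm, Real.norm_eq_abs (w a)]
    gcongr; exact h.gbd _
  · have e : (∫ a, w a * k (x + v - z a) ∂ρ) - (∫ a, w a * k (x - z a) ∂ρ)
        - inner ℝ (∫ a, w a • gk (x - z a) ∂ρ) v
        = ∫ a, w a * (k (x - z a + v) - k (x - z a) - inner ℝ (gk (x - z a)) v) ∂ρ := by
      have i3 : Integrable (fun a => inner ℝ v (w a • gk (x - z a))) ρ := (ig x).const_inner v
      have i4 : Integrable (fun a => w a * k (x + v - z a) - w a * k (x - z a)) ρ :=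
        (ik _).sub (ik _)
      rw [real_inner_comm, ← integral_inner (ig x), ← integral_sub (ik _) (ik _),
        ← integral_sub i4 i3]
      refine integral_congr_ae (Filter.Eventually.of_forall fun a => ?_)
      simp only
      rw [inner_smul_right, real_inner_comm, add_sub_right_comm]; ring
    rw [e, mul_right_comm, mul_comm, mul_comm _ (_ * _), ← integral_const_mul, ← Real.norm_eq_abs]
    refine norm_integral_le_of_norm_le (hw.abs.const_mul _) (Filter.Eventually.of_forall fun a => ?_)
    rw [norm_mul, mul_comm, Real.norm_eq_abs (w a)]
    gcongr; exact h.taylor _ _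
  · refine continuous_of_dominated (bound := fun a => |w a| * K) (fun x => (ig x).1)
      (fun x => Filter.Eventually.of_forall fun a => ?_) (hw.abs.mul_const K)
      (Filter.Eventually.of_forall fun a => ?_)
    · rw [norm_smul, Real.norm_eq_abs]; gcongr; exact h.gbd _
    · have := h.gc; fun_prop

lemma C2b.gradient_eq {d : ℕ} {K : ℝ} {k : Ed d → ℝ} {gk : Ed d → Ed d} (h : C2b K k gk)
    (x : Ed d) : gradient k x = gk x := by
  have := (h.hasFDerivAt x).fderiv
  rw [← gradient_inner] at this
  exact (innerSL_inj (𝕜 := ℝ)).1 this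

lemma conv_fderiv {d : ℕ} {α : Type*} [MeasurableSpace α] {ρ : Measure α} {w : α → ℝ}
    {z : α → Ed d} (hw : Integrable w ρ) (hz : Measurable z) {k : Ed d → ℝ}
    (hk : ContDiff ℝ (⊤ : ℕ∞) k) (hs : HasCompactSupport k) (x v : Ed d) :
    fderiv ℝ (fun x => ∫ a, w a * k (x - z a) ∂ρ) x v = ∫ a, w a * fderiv ℝ k (x - z a) v ∂ρ := by
  obtain ⟨K, hK⟩ := C2b_of_contDiff hk hs
  have ig : Integrable (fun a => w a • gradient k (x - z a)) ρ :=
    hw.smul_bdd _ (hK.gc.measurable.comp (measurable_const.sub hz)).aestronglyMeasurable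
      (Filter.Eventually.of_forall fun a => hK.gbd _)
  have i1 := (hK.superpose hw hz).hasFDerivAt x
  rw [i1.fderiv, innerSL_apply_apply, real_inner_comm, ← integral_inner ig]
  refine integral_congr_ae (Filter.Eventually.of_forall fun a => ?_)
  simp only
  rw [inner_smul_right, real_inner_comm, ← innerSL_apply_apply ℝ, gradient_inner]

lemma conv_pd {d : ℕ} {α : Type*} [MeasurableSpace α] {ρ : Measure α} {w : α → ℝ}
    {z : α → Ed d} (hw : Integrable w ρ) (hz : Measurable z) {k : Ed d → ℝ}
    (hk : ContDiff ℝ (⊤ : ℕ∞) k) (hs : HasCompactSupport k) (i : Fin d) :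
    pd i (fun x => ∫ a, w a * k (x - z a) ∂ρ) = fun x => ∫ a, w a * pd i k (x - z a) ∂ρ :=
  funext fun x => conv_fderiv hw hz hk hs x _

/-- Superpositions of translates of a test function are smooth. -/
lemma conv_smooth {d : ℕ} {α : Type*} [MeasurableSpace α] {ρ : Measure α} {w : α → ℝ}
    {z : α → Ed d} (hw : Integrable w ρ) (hz : Measurable z) {k : Ed d → ℝ}
    (hk : ContDiff ℝ (⊤ : ℕ∞) k) (hs : HasCompactSupport k) :
    ContDiff ℝ (⊤ : ℕ∞) (fun x => ∫ a, w a * k (x - z a) ∂ρ) := by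
  rw [contDiff_infty]
  intro n
  induction n generalizing k with
  | zero =>
    obtain ⟨K, hK⟩ := C2b_of_contDiff hk hs
    exact contDiff_zero.2 (hK.superpose hw hz).cont
  | succ n ih =>
    have hd : Differentiable ℝ (fun x => ∫ a, w a * k (x - z a) ∂ρ) := by
      obtain ⟨K, hK⟩ := C2b_of_contDiff hk hs
      exact fun x => ((hK.superpose hw hz).hasFDerivAt x).differentiableAt
    push_cast
    rw [contDiff_succ_iff_fderiv]
    refine ⟨hd, by simp, ?_⟩
    have e : fderiv ℝ (fun x => ∫ a, w a * k (x - z a) ∂ρ) = fun x =>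
        ∑ i : Fin d, (∫ a, w a * pd i k (x - z a) ∂ρ) •
          innerSL ℝ (EuclideanSpace.single i (1:ℝ)) := by
      ext x v
      have hv : v = ∑ i : Fin d, v i • EuclideanSpace.single i (1:ℝ) := by
        ext j
        simp [Finset.sum_apply, Pi.single_apply]
      conv_lhs => rw [hv]
      rw [_root_.map_sum]
      simp only [map_smul, _root_.sum_apply, _root_.smul_apply,
        innerSL_apply_apply, EuclideanSpace.inner_single_left, smul_eq_mul, map_one, one_mul]
      refine Finset.sum_congr rfl fun i _ => ?_
      rw [← congrFun (conv_pd hw hz hk hs i) x, mul_comm]; rfl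
    rw [e]
    exact ContDiff.sum fun i _ => (ih (pd_contDiff hk i) (pd_cs hs i)).smul contDiff_const

/-! ### A right inverse of the Laplacian -/

lemma GG_fderiv {d : ℕ} (y v : Ed d) : fderiv ℝ (GG d) y v = -(eta d y) * inner ℝ y v := by
  rw [(GG_hasFDerivAt y).fderiv, innerSL_apply_apply, inner_smul_left]; simp

lemma fderiv_comp_sub_smul {d : ℕ} {g : Ed d → ℝ} (hg : ContDiff ℝ (⊤ : ℕ∞) g) (σ : ℝ)
    (x y : Ed d) : HasFDerivAt (fun y => g (x - σ • y)) (-(σ • fderiv ℝ g (x - σ • y))) y := by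
  have h1 : HasFDerivAt (fun y : Ed d => x - σ • y) (-(σ • ContinuousLinearMap.id ℝ (Ed d))) y :=
    ((hasFDerivAt_id y).const_smul σ).const_sub x
  have h := (((hg.differentiable (by simp)) (x - σ • y)).hasFDerivAt).comp y h1
  refine h.congr_fderiv ?_
  ext v; simp

/-- Integration by parts against the kernel `GG`. -/
lemma GG_ibp {d : ℕ} {g : Ed d → ℝ} (hg : ContDiff ℝ (⊤ : ℕ∞) g) (σ : ℝ) (x v : Ed d) :
    ∫ y, fderiv ℝ (GG d) y v * g (x - σ • y) = ∫ y, σ * GG d y * fderiv ℝ g (x - σ • y) v := by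
  have hG := GG_contDiff d
  have hc : Continuous fun y => g (x - σ • y) := hg.continuous.comp (by fun_prop)
  have hg' : Continuous (fderiv ℝ g) := hg.continuous_fderiv (by simp)
  have hG' : Continuous (fderiv ℝ (GG d)) := hG.continuous_fderiv (by simp)
  have hc' : Continuous fun y => fderiv ℝ g (x - σ • y) v := by fun_prop
  have hGv : Continuous fun y => fderiv ℝ (GG d) y v := by fun_prop
  have e : ∀ y, fderiv ℝ (fun y => g (x - σ • y)) y v = -(σ * fderiv ℝ g (x - σ • y) v) := fun y => by
    rw [(fderiv_comp_sub_smul hg σ x y).fderiv]; simp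
  have cs : HasCompactSupport (GG d) := GG_cs d
  have cs' : HasCompactSupport (fun y => fderiv ℝ (GG d) y v) :=
    (cs.fderiv (𝕜 := ℝ)).comp_left (g := fun L : Ed d →L[ℝ] ℝ => L v) (by simp)
  have h := integral_mul_fderiv_eq_neg_fderiv_mul_of_integrable (μ := volume) (f := GG d)
    (g := fun y => g (x - σ • y)) (v := v)
    ((hGv.mul hc).integrable_of_hasCompactSupport cs'.mul_right)
    (by
      simp only [e]
      exact (hG.continuous.mul (hc'.const_mul σ).neg).integrable_of_hasCompactSupport cs.mul_right)
    ((hG.continuous.mul hc).integrable_of_hasCompactSupport cs.mul_right)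
    (fun y _ => (hG.differentiable (by simp)) y)
    (fun y _ => (fderiv_comp_sub_smul hg σ x y).differentiableAt)
  simp only [e] at h
  rw [eq_neg_iff_add_eq_zero, add_comm, ← eq_neg_iff_add_eq_zero] at h
  rw [h, ← integral_neg]
  congr 1; ext y; ring

/-- The averages of `g` over the kernels `eta` at scale `σ`, differentiated in `σ`. -/
lemma eta_avg_deriv {d : ℕ} {g : Ed d → ℝ} (hg : ContDiff ℝ (⊤ : ℕ∞) g) (hs : HasCompactSupport g)
    (x : Ed d) (σ : ℝ) :
    HasDerivAt (fun σ : ℝ => ∫ y, eta d y * g (x - σ • y))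
      (∑ i, ∫ y, σ * GG d y * pd i (pd i g) (x - σ • y)) σ := by
  obtain ⟨K, hK⟩ := C2b_of_contDiff hg hs
  have hg' : Continuous (fderiv ℝ g) := hg.continuous_fderiv (by simp)
  have he := (eta_contDiff d).continuous
  have hgc := hg.continuous
  have e0 : ∑ i, ∫ y, σ * GG d y * pd i (pd i g) (x - σ • y)
      = ∫ y, eta d y * -(fderiv ℝ g (x - σ • y) y) := by
    have : ∀ i, ∫ y, σ * GG d y * pd i (pd i g) (x - σ • y)
        = ∫ y, fderiv ℝ (GG d) y (EuclideanSpace.single i 1) * pd i g (x - σ • y) := fun i =>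
      (GG_ibp (pd_contDiff hg i) σ x _).symm
    simp only [this, GG_fderiv]
    rw [← integral_finsetSum]
    · congr 1; ext y
      have hv : fderiv ℝ g (x - σ • y) y = ∑ i, y i * pd i g (x - σ • y) := by
        have hv : y = ∑ i : Fin d, y i • EuclideanSpace.single i (1:ℝ) := by
          ext j; simp [Finset.sum_apply, Pi.single_apply]
        conv_lhs => arg 2; rw [hv]
        rw [_root_.map_sum]
        simp only [map_smul, smul_eq_mul]; rfl
      rw [hv, ← Finset.sum_neg_distrib, Finset.mul_sum]
      refine Finset.sum_congr rfl fun i _ => ?_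
      rw [EuclideanSpace.inner_single_right]; simp; ring
    · intro i _
      have h1 := (pd_contDiff hg i).continuous
      refine Continuous.integrable_of_hasCompactSupport (by fun_prop) ?_
      exact HasCompactSupport.mul_right ((eta_cs d).neg.mul_right)
  rw [e0]
  refine (hasDerivAt_integral_of_dominated_loc_of_deriv_le (F := fun σ y => eta d y * g (x - σ • y))
    (F' := fun σ y => eta d y * -(fderiv ℝ g (x - σ • y) y)) (s := univ)
    (bound := fun y => eta d y * K) Filter.univ_mem ?_ ?_ ?_ ?_ ?_ ?_).2
  · exact Filter.Eventually.of_forall fun σ => Continuous.aestronglyMeasurable (by fun_prop)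
  · exact Continuous.integrable_of_hasCompactSupport (by fun_prop) ((eta_cs d).mul_right)
  · exact Continuous.aestronglyMeasurable (by fun_prop)
  · refine Filter.Eventually.of_forall fun y σ _ => ?_
    rw [norm_mul, Real.norm_of_nonneg (eta_nonneg d y), norm_neg]
    rcases le_or_gt 1 ‖y‖ with h | h
    · simp [eta_zero h]
    · refine mul_le_mul_of_nonneg_left ?_ (eta_nonneg d y)
      rw [← gradient_inner, innerSL_apply_apply]
      refine (norm_inner_le_norm _ _).trans ?_
      nlinarith [hK.gbd (x - σ • y), norm_nonneg (gradient g (x - σ • y)), norm_nonneg y, hK.nonneg]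
  · exact (eta_int d).mul_const K
  · refine Filter.Eventually.of_forall fun y σ _ => ?_
    have h1 : HasDerivAt (fun σ : ℝ => x - σ • y) (-y) σ := by
      simpa using ((hasDerivAt_id σ).smul_const y).const_sub x
    have := (((hg.differentiable (by simp)) (x - σ • y)).hasFDerivAt).comp_hasDerivAt σ h1
    rw [map_neg] at this
    exact this.const_mul _

/-- Every test function `g` supported in the ball of radius `1/2` is, up to sign and an additive
constant, the Laplacian near the origin of the superposition of the kernels `GG` over all scales
at most `2`; the gradient of the latter is bounded by `2 sup |g|`. -/
lemma poisson {d : ℕ} {g : Ed d → ℝ} (hg : ContDiff ℝ (⊤ : ℕ∞) g)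
    (h0 : ∀ x, 1 / 2 ≤ ‖x‖ → g x = 0) {M : ℝ} (hM : ∀ x, |g x| ≤ M) :
    ∃ (W : Ed d → ℝ) (c : ℝ), ContDiff ℝ (⊤ : ℕ∞) W ∧
      (∀ x ∈ ball (0 : Ed d) (1 / 4), lap W x = c - g x) ∧ ∀ x, ‖gradient W x‖ ≤ 2 * M := by
  have hs : HasCompactSupport g := hasCompactSupport_of_zero h0
  set ρ : Measure (ℝ × Ed d) := (volume.restrict (Ioc 0 2)).prod volume with hρ
  set w : ℝ × Ed d → ℝ := fun a => a.1 * GG d a.2 with hwd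
  set z : ℝ × Ed d → Ed d := fun a => a.1 • a.2 with hzd
  have hz : Measurable z := by fun_prop
  have hw : Integrable w ρ :=
    Integrable.mul_prod (f := fun σ : ℝ => σ) (g := GG d)
      (continuous_id.integrableOn_Ioc) (GG_int d)
  have hM0 : 0 ≤ M := (abs_nonneg _).trans (hM 0)
  have hintg : ∀ {k : Ed d → ℝ}, Continuous k → HasCompactSupport k → ∀ x,
      Integrable (fun a => w a * k (x - z a)) ρ := fun {k} hk hks x => by
    obtain ⟨C, hC⟩ := hks.exists_bound_of_continuous hk
    exact hw.mul_bdd (hk.measurable.comp (measurable_const.sub hz)).aestronglyMeasurable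
      (Filter.Eventually.of_forall fun a => hC _)
  have fub : ∀ {k : Ed d → ℝ}, Continuous k → HasCompactSupport k → ∀ x,
      ∫ a, w a * k (x - z a) ∂ρ = ∫ σ in Ioc (0:ℝ) 2, ∫ y, σ * GG d y * k (x - σ • y) :=
    fun {k} hk hks x => integral_prod _ (hintg hk hks x)
  refine ⟨fun x => ∫ a, w a * g (x - z a) ∂ρ, ((2:ℝ) ^ d)⁻¹ * (cη d)⁻¹ * ∫ y, g y,
    conv_smooth hw hz hg hs, fun x hx => ?_, fun x => ?_⟩
  · have e1 : lap (fun x => ∫ a, w a * g (x - z a) ∂ρ) x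
        = ∫ σ in (0:ℝ)..2, ∑ i, ∫ y, σ * GG d y * pd i (pd i g) (x - σ • y) := by
      rw [lap_eq]
      simp only [conv_pd hw hz hg hs, conv_pd hw hz (pd_contDiff hg _) (pd_cs hs _)]
      rw [intervalIntegral.integral_of_le zero_le_two, integral_finsetSum]
      · refine Finset.sum_congr rfl fun i _ => ?_
        exact fub (pd_contDiff (pd_contDiff hg i) i).continuous (pd_cs (pd_cs hs i) i) x
      · intro i _
        exact (hintg (pd_contDiff (pd_contDiff hg i) i).continuous
          (pd_cs (pd_cs hs i) i) x).integral_prod_left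
    rw [e1, intervalIntegral.integral_eq_sub_of_hasDerivAt
      (fun σ _ => eta_avg_deriv hg hs x σ)]
    · congr 1
      · have : ∀ y, eta d y * g (x - (2:ℝ) • y) = (cη d)⁻¹ * g (x - (2:ℝ) • y) := fun y => by
          rcases le_or_gt ‖y‖ (1 / 2) with h | h
          · rw [eta_flat h]
          · rw [h0, mul_zero, mul_zero]
            have h1 := norm_sub_norm_le ((2:ℝ) • y) x
            rw [norm_smul, norm_sub_rev] at h1
            rw [mem_ball_zero_iff] at hx
            norm_num at h1
            linarith
        simp only [this]
        rw [integral_const_mul]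
        have e2 := integral_comp_smul (μ := (volume : Measure (Ed d))) (fun y => g (x - y)) (2:ℝ)
        rw [e2, integral_sub_left_eq_self g volume x]
        simp [abs_of_pos]; ring
      · simp only [zero_smul, sub_zero]
        rw [integral_mul_const, eta_integral, one_mul]
    · rw [intervalIntegrable_iff_integrableOn_Ioc_of_le zero_le_two]
      exact integrable_finsetSum _ fun i _ => (hintg (pd_contDiff (pd_contDiff hg i) i).continuous
          (pd_cs (pd_cs hs i) i) x).integral_prod_left
  · have hb : ∀ v, |fderiv ℝ (fun x => ∫ a, w a * g (x - z a) ∂ρ) x v| ≤ 2 * M * ‖v‖ := fun v => by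
      have hkc : Continuous fun y => fderiv ℝ g y v := by
        have := hg.continuous_fderiv (by simp); fun_prop
      have hks : HasCompactSupport fun y => fderiv ℝ g y v :=
        (hs.fderiv (𝕜 := ℝ)).comp_left (g := fun L : Ed d →L[ℝ] ℝ => L v) (by simp)
      rw [conv_fderiv hw hz hg hs, fub (k := fun y => fderiv ℝ g y v) hkc hks]
      simp only [← GG_ibp hg, ← Real.norm_eq_abs]
      have := norm_setIntegral_le_of_norm_le_const (μ := volume) (s := Ioc (0:ℝ) 2)
        (f := fun σ => ∫ y, fderiv ℝ (GG d) y v * g (x - σ • y)) (C := M * ‖v‖) (by simp)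
        (fun σ _ => by
          have e : M * ‖v‖ = ∫ y, eta d y * (M * ‖v‖) := by
            rw [integral_mul_const, eta_integral, one_mul]
          rw [e]
          refine norm_integral_le_of_norm_le ((eta_int d).mul_const _)
            (Filter.Eventually.of_forall fun y => ?_)
          rw [GG_fderiv, norm_mul, norm_mul, norm_neg, Real.norm_of_nonneg (eta_nonneg d y),
            mul_assoc]
          rcases le_or_gt 1 ‖y‖ with h | h
          · simp [eta_zero h]
          · refine mul_le_mul_of_nonneg_left ?_ (eta_nonneg d y)
            rw [mul_comm]
            refine mul_le_mul (hM _) ?_ (norm_nonneg _) hM0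
            refine (norm_inner_le_norm _ _).trans ?_
            nlinarith [norm_nonneg v])
      refine this.trans (le_of_eq ?_)
      simp [Measure.real]; ring
    have := hb (gradient (fun x => ∫ a, w a * g (x - z a) ∂ρ) x)
    rw [← gradient_inner, innerSL_apply_apply, real_inner_self_eq_norm_sq,
      abs_of_nonneg (sq_nonneg _)] at this
    by_contra hcon
    push Not at hcon
    have h3 : 0 < ‖gradient (fun x => ∫ a, w a * g (x - z a) ∂ρ) x‖ := by linarith
    nlinarith

/-! ### Mollification of the potential -/

/-- Weak form of `∇ f = T - id`. -/
lemma Pot.ibp {d : ℕ} {Ω : Set (Ed d)} {T : Ed d → Ed d} {G : Set (Ed d)} {f χ : Ed d → ℝ}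
    (P : Pot Ω T G f χ) {K : ℝ} {ψ : Ed d → ℝ} {g : Ed d → Ed d} (hψ : C2b K ψ g)
    (h0 : ∀ x, 3 / 2 ≤ ‖x‖ → ψ x = 0) (hg0 : ∀ x, 3 / 2 ≤ ‖x‖ → g x = 0) (v : Ed d) :
    ∫ x, f x * inner ℝ (g x) v = -∫ x, ψ x * inner ℝ (T x - x) v := by
  obtain ⟨L, hL⟩ := P.lipOn 2 zero_le_two
  obtain ⟨F, hF, hFf⟩ := hL.extend_real
  have hψL : LipschitzWith K.toNNReal ψ := LipschitzWith.of_dist_le_mul fun x y => by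
    rw [Real.dist_eq, dist_eq_norm, Real.coe_toNNReal _ hψ.nonneg]; exact hψ.lip x y
  have h := hF.integral_lineDeriv_mul_eq (μ := volume) hψL (hasCompactSupport_of_zero h0) v
  have e1 : ∫ x, lineDeriv ℝ F x v * ψ x = ∫ x, ψ x * inner ℝ (T x - x) v := by
    refine integral_congr_ae ?_
    filter_upwards [P.Gae2] with x hx
    rcases le_or_gt (3 / 2) ‖x‖ with h | h
    · simp [h0 x h]
    · have hx2 : x ∈ ball (0 : Ed d) 2 := by rw [mem_ball_zero_iff]; linarith
      have : F =ᶠ[𝓝 x] f := by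
        filter_upwards [isOpen_ball.mem_nhds hx2] with y hy
          using (hFf (ball_subset_closedBall hy)).symm
      have := ((P.grad x (hx hx2)).congr_of_eventuallyEq this).hasLineDerivAt v
      rw [this.lineDeriv, innerSL_apply_apply, mul_comm]
  have e2 : ∫ x, lineDeriv ℝ ψ x (-v) * F x = -∫ x, f x * inner ℝ (g x) v := by
    rw [← integral_neg]
    congr 1; ext x
    rw [((hψ.hasFDerivAt x).hasLineDerivAt (-v)).lineDeriv, innerSL_apply_apply, inner_neg_right]
    rcases le_or_gt (3 / 2) ‖x‖ with h | h
    · simp [hg0 x h]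
    · rw [hFf (mem_closedBall_zero_iff.2 (by linarith))]; ring
  rw [← e1, h, e2, neg_neg]

/-- The average of `f` with respect to `eta` at scale `σ`. -/
def favg {d : ℕ} (f : Ed d → ℝ) (x : Ed d) (σ : ℝ) : ℝ := ∫ y, eta d y * f (x - σ • y)

/-- Since `∇f = T - id` and `∇ GG (y) = -y η(y)`, the derivative of the average in the scale is the
displacement tested against a gradient. -/
lemma Pot.favg_deriv {d : ℕ} {Ω : Set (Ed d)} {T : Ed d → Ed d} {G : Set (Ed d)} {f χ : Ed d → ℝ}
    (P : Pot Ω T G f χ) {x : Ed d} (hx : ‖x‖ ≤ 3 / 4) {σ : ℝ} (hσ0 : 0 < σ) (hσ : σ ≤ 1 / 4) :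
    HasDerivAt (favg f x)
      (∫ y, inner ℝ (gradient (GG d) y) (T (x - σ • y) - (x - σ • y))) σ := by
  obtain ⟨L, hL⟩ := P.lipOn 2 zero_le_two
  have hq : ∀ᵐ y, x - σ • y ∈ ball (0 : Ed d) 2 → x - σ • y ∈ G := by
    have h1 : ∀ᵐ z, x - z ∈ ball (0 : Ed d) 2 → x - z ∈ G :=
      (measurePreserving_sub_left volume x).quasiMeasurePreserving.ae P.Gae2
    rw [ae_iff] at h1 ⊢
    have : {y : Ed d | ¬(x - σ • y ∈ ball (0 : Ed d) 2 → x - σ • y ∈ G)}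
        = (fun y => σ • y) ⁻¹' {z | ¬(x - z ∈ ball (0 : Ed d) 2 → x - z ∈ G)} := rfl
    rw [this, addHaar_preimage_smul _ hσ0.ne', h1, mul_zero]
  have he := (eta_contDiff d).continuous
  have hfc := P.cont
  have hum := P.um
  have hc0 : ∀ {t : ℝ} {y : Ed d}, |t| < 1 / 2 → ‖y‖ < 1 → x - t • y ∈ ball (0 : Ed d) 2 :=
    fun {t y} ht hy => by
      rw [mem_ball_zero_iff]
      have h1 := norm_sub_le x (t • y)
      rw [norm_smul, Real.norm_eq_abs] at h1
      nlinarith [abs_nonneg t, norm_nonneg y]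
  have hin : ∀ y, inner ℝ (gradient (GG d) y) (T (x - σ • y) - (x - σ • y))
      = -(eta d y) * inner ℝ y (T (x - σ • y) - (x - σ • y)) := fun y => by
    rw [GG_gradient, inner_smul_left]; simp
  refine (hasDerivAt_integral_of_dominated_loc_of_lip (F := fun σ y => eta d y * f (x - σ • y))
    (s := ball 0 (1 / 2)) (bound := fun y => eta d y * L) ?_ ?_ ?_ ?_ ?_ ?_ ?_).2
  · refine isOpen_ball.mem_nhds ?_
    rw [mem_ball_zero_iff, Real.norm_of_nonneg hσ0.le]; linarith
  · exact Filter.Eventually.of_forall fun σ => Continuous.aestronglyMeasurable (by fun_prop)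
  · exact Continuous.integrable_of_hasCompactSupport (by fun_prop) ((eta_cs d).mul_right)
  · refine Measurable.aestronglyMeasurable ?_
    simp only [hin]
    have h1 : Measurable fun y : Ed d => T (x - σ • y) - (x - σ • y) :=
      hum.comp (by fun_prop)
    exact he.measurable.neg.mul (measurable_id.inner h1)
  · refine Filter.Eventually.of_forall fun y => LipschitzOnWith.of_dist_le_mul fun s hs t ht => ?_
    rw [mem_ball_zero_iff, Real.norm_eq_abs] at hs ht
    rw [Real.coe_nnabs, abs_of_nonneg (mul_nonneg (eta_nonneg d y) L.coe_nonneg), Real.dist_eq,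
      ← mul_sub, abs_mul, abs_of_nonneg (eta_nonneg d y), mul_assoc]
    rcases le_or_gt 1 ‖y‖ with h | h
    · simp [eta_zero h]
    · refine mul_le_mul_of_nonneg_left ?_ (eta_nonneg d y)
      have := hL.dist_le_mul _ (ball_subset_closedBall (hc0 hs h)) _
        (ball_subset_closedBall (hc0 ht h))
      rw [Real.dist_eq] at this
      refine this.trans ?_
      rw [dist_eq_norm, sub_sub_sub_cancel_left, ← sub_smul, norm_smul, Real.norm_eq_abs,
        Real.dist_eq, abs_sub_comm]
      have : |s - t| * ‖y‖ ≤ |s - t| := mul_le_of_le_one_right (abs_nonneg _) h.le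
      gcongr
  · exact (eta_int d).mul_const _
  · filter_upwards [hq] with y hy
    rw [hin]
    rcases le_or_gt 1 ‖y‖ with h | h
    · simp only [eta_zero h, zero_mul, neg_zero]
      exact hasDerivAt_const _ _
    · have h1 : HasDerivAt (fun σ : ℝ => x - σ • y) (-y) σ := by
        simpa using ((hasDerivAt_id σ).smul_const y).const_sub x
      have h2 := (P.grad _ (hy (hc0 (by rw [abs_of_pos hσ0]; linarith) h))).comp_hasDerivAt σ h1
      rw [map_neg, innerSL_apply_apply, real_inner_comm] at h2
      have h3 := h2.const_mul (eta d y)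
      rw [mul_neg, ← neg_mul] at h3
      exact h3

/-- Mass of the kernel `GG`. -/
def cG (d : ℕ) : ℝ := ∫ y, GG d y

/-- The derivative of `favg` in the scale is that of a quadratic function, up to a small error. -/
lemma favg_deriv_bound (d : ℕ) : ∃ C, 0 ≤ C ∧ ∀ {Ω : Set (Ed d)} {T : Ed d → Ed d} {G : Set (Ed d)}
    {f χ : Ed d → ℝ} {δ m : ℝ} {O : Set (Ed d)} {π : Measure (Ed d × Ed d)} {κ β : ℝ}
    (_ : Hyp Ω T G f χ δ m O π κ β) {x : Ed d} (_ : ‖x‖ ≤ 3 / 4) {σ : ℝ} (_ : 0 < σ)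
    (_ : σ ≤ 1 / 4),
    |(∫ y, inner ℝ (gradient (GG d) y) (T (x - σ • y) - (x - σ • y))) + (κ - 1) * cG d * σ|
      ≤ C * σ⁻¹ ^ (d + 1) * (β * δ) := by
  obtain ⟨K, hK⟩ := C2b_of_contDiff (GG_contDiff d) (GG_cs d)
  have hK0 := hK.nonneg
  have hN := NN_pos d
  refine ⟨(NN d + 2) * K, by positivity, ?_⟩
  intro Ω T G f χ δ m O π κ β H x hx σ hσ0 hσ
  have ha : 1 ≤ σ⁻¹ := (one_le_inv₀ hσ0).2 (by linarith)
  have hθ := (hK.scale ha).reflect x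
  have hfar : ∀ z : Ed d, 1 ≤ ‖z‖ → 1 ≤ ‖σ⁻¹ • (x - z)‖ := fun z hz => by
    rw [norm_smul, Real.norm_of_nonneg (by positivity), ← div_eq_inv_mul, one_le_div hσ0]
    have := norm_sub_norm_le z x
    rw [norm_sub_rev]; linarith
  have hw := H.weak hθ (fun z hz => GG_zero (hfar z hz))
    (fun z hz => by simp [GG_gradient, eta_zero (hfar z hz)])
  have hsub : ∀ F : Ed d → ℝ, ∫ y, F y = σ⁻¹ ^ d * ∫ z, F (σ⁻¹ • (x - z)) := fun F => by
    rw [integral_sub_left_eq_self (fun z => F (σ⁻¹ • z)) volume x, integral_comp_smul]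
    have : 0 < σ ^ d := by positivity
    simp [abs_of_pos this, hσ0.ne']
  have e1 : ∫ y, inner ℝ (gradient (GG d) y) (T (x - σ • y) - (x - σ • y))
      = -(σ * σ⁻¹ ^ d * ∫ z, inner ℝ (-(σ⁻¹ • gradient (GG d) (σ⁻¹ • (x - z)))) (T z - z)) := by
    rw [hsub, ← integral_const_mul, ← integral_const_mul, ← integral_neg]
    congr 1; ext z
    rw [smul_inv_smul₀ hσ0.ne', sub_sub_cancel, inner_neg_left, inner_smul_left]
    simp; field_simp
  have e2 : cG d = σ⁻¹ ^ d * ∫ z, GG d (σ⁻¹ • (x - z)) := hsub _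
  rw [e1, e2]
  set A := ∫ z, inner ℝ (-(σ⁻¹ • gradient (GG d) (σ⁻¹ • (x - z)))) (T z - z)
  set B := ∫ z, GG d (σ⁻¹ • (x - z))
  have e3 : -(σ * σ⁻¹ ^ d * A) + (κ - 1) * (σ⁻¹ ^ d * B) * σ
      = -(σ * σ⁻¹ ^ d) * (A - (κ - 1) * B) := by ring
  rw [e3, abs_mul, abs_neg, abs_of_nonneg (by positivity : 0 ≤ σ * σ⁻¹ ^ d)]
  calc σ * σ⁻¹ ^ d * |A - (κ - 1) * B|
      ≤ σ * σ⁻¹ ^ d * ((NN d + 2) * (K * σ⁻¹ ^ 2) * (β * δ)) := by gcongr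
    _ = (σ * σ⁻¹) * ((NN d + 2) * K * σ⁻¹ ^ (d + 1) * (β * δ)) := by ring
    _ = _ := by rw [mul_inv_cancel₀ hσ0.ne', one_mul]

lemma gradient_zero {d : ℕ} {f : Ed d → ℝ} {ρ : ℝ} (h : ∀ x, ρ ≤ ‖x‖ → f x = 0) {x : Ed d}
    (hx : ρ < ‖x‖) : gradient f x = 0 := by
  have : f =ᶠ[𝓝 x] fun _ => 0 := by
    filter_upwards [continuous_norm.continuousAt.eventually (lt_mem_nhds hx)] with y hy
      using h y hy.le
  unfold gradient
  rw [this.fderiv_eq]; simp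

/-- The mollifier `eta` at scale `1/4`. -/
def kk (d : ℕ) (z : Ed d) : ℝ := 4 ^ d * eta d ((4:ℝ) • z)

lemma kk_contDiff (d : ℕ) : ContDiff ℝ (⊤ : ℕ∞) (kk d) :=
  contDiff_const.mul ((eta_contDiff d).comp (contDiff_const_smul (4:ℝ)))

lemma kk_zero {d : ℕ} {z : Ed d} (h : 1 / 4 ≤ ‖z‖) : kk d z = 0 := by
  unfold kk
  rw [eta_zero, mul_zero]
  rw [norm_smul]; norm_num; linarith

lemma kk_cs (d : ℕ) : HasCompactSupport (kk d) := hasCompactSupport_of_zero fun _ => kk_zero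

lemma kk_integral (d : ℕ) : ∫ z, kk d z = 1 := by
  unfold kk
  rw [integral_const_mul, integral_comp_smul, eta_integral]
  simp

/-- The smooth approximation of the potential. The additive constant is the one predicted by the
evolution of the averages of `f` in the scale. -/
def pp {d : ℕ} (f : Ed d → ℝ) (κ : ℝ) (x : Ed d) : ℝ :=
  (∫ y in ball (0 : Ed d) 2, f y * kk d (x - y)) + (κ - 1) * cG d / 32

lemma pp_eq {d : ℕ} {f : Ed d → ℝ} {κ : ℝ} {x : Ed d} (hx : ‖x‖ ≤ 1) :
    pp f κ x = favg f x (1 / 4) + (κ - 1) * cG d / 32 := by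
  unfold pp favg
  congr 1
  rw [setIntegral_of_vanish (fun y hy => by
    rw [kk_zero, mul_zero]
    have := norm_sub_norm_le y x
    rw [norm_sub_rev]; linarith)]
  have h1 : ∫ y, eta d y * f (x - (1 / 4 : ℝ) • y)
      = 4 ^ d * ∫ z, eta d ((4:ℝ) • z) * f (x - (1 / 4 : ℝ) • (4:ℝ) • z) := by
    rw [integral_comp_smul _ (fun y => eta d y * f (x - (1 / 4 : ℝ) • y)) (4:ℝ)]
    simp
  rw [h1, ← integral_sub_left_eq_self (fun y => f y * kk d (x - y)) volume x,
    ← integral_const_mul]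
  congr 1; ext z
  rw [smul_smul]
  norm_num [kk]; ring

lemma favg_meas {d : ℕ} {f : Ed d → ℝ} (hf : Continuous f) (s : ℝ) :
    StronglyMeasurable fun x => favg f x s := by
  have he := (eta_contDiff d).continuous
  have : Continuous fun p : Ed d × Ed d => eta d p.2 * f (p.1 - s • p.2) := by fun_prop
  exact this.stronglyMeasurable.integral_prod_right

/-- Mollification at scale `s` moves `f` by at most `s δ` in `L²`. -/
lemma Pot.favg_L2 {d : ℕ} {Ω : Set (Ed d)} {T : Ed d → Ed d} {G : Set (Ed d)} {f χ : Ed d → ℝ}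
    (P : Pot Ω T G f χ) {s : ℝ} (hs0 : 0 ≤ s) (hs : s ≤ 1 / 4) :
    ∫⁻ x in ball (0 : Ed d) (3 / 4), ENNReal.ofReal ((f x - favg f x s) ^ 2)
      ≤ ENNReal.ofReal (s ^ 2) * Elin T := by
  have he := (eta_contDiff d).continuous
  have hfc := P.cont
  set ν : Measure (Ed d) := volume.withDensity fun y => ENNReal.ofReal (eta d y) with hν
  have hem : Measurable fun y => ENNReal.ofReal (eta d y) := he.measurable.ennreal_ofReal
  have hν1 : ν univ = 1 := by
    rw [hν, withDensity_apply _ MeasurableSet.univ, setLIntegral_univ,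
      ← ofReal_integral_eq_lintegral_ofReal (eta_int d)
        (Filter.Eventually.of_forall (eta_nonneg d)), eta_integral, ENNReal.ofReal_one]
  have : IsProbabilityMeasure ν := ⟨hν1⟩
  have hmx : ∀ x, Measurable fun y => ‖f (x + -(s • y)) - f x‖ₑ := fun x =>
    (Continuous.measurable (by fun_prop : Continuous fun y => f (x + -(s • y)) - f x)).enorm
  have hpt : ∀ x, ENNReal.ofReal ((f x - favg f x s) ^ 2)
      ≤ ∫⁻ y, ENNReal.ofReal ((f (x + -(s • y)) - f x) ^ 2) ∂ν := fun x => by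
    have e : f x - favg f x s = ∫ y, eta d y * (f x - f (x - s • y)) := by
      have i1 : Integrable fun y => eta d y * f x := (eta_int d).mul_const _
      have i2 : Integrable fun y => eta d y * f (x - s • y) :=
        Continuous.integrable_of_hasCompactSupport (by fun_prop) ((eta_cs d).mul_right)
      simp only [mul_sub]
      rw [integral_sub i1 i2, integral_mul_const, eta_integral, one_mul]; rfl
    rw [ofReal_sq_eq_enorm, e]
    have h1 : ‖∫ y, eta d y * (f x - f (x - s • y))‖ₑ ≤ ∫⁻ y, ‖f (x + -(s • y)) - f x‖ₑ ∂ν := by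
      refine (enorm_integral_le_lintegral_enorm _).trans (le_of_eq ?_)
      rw [hν, lintegral_withDensity_eq_lintegral_mul _ hem (hmx x)]
      refine lintegral_congr fun y => ?_
      rw [enorm_mul, Pi.mul_apply, Real.enorm_of_nonneg (eta_nonneg d y), ← sub_eq_add_neg,
        ← enorm_neg, neg_sub]
    refine (pow_le_pow_left' h1 2).trans ?_
    refine (lintegral_sq_le ν (hmx x).aemeasurable).trans ?_
    rw [hν1, one_mul]
    refine lintegral_mono fun y => ?_
    rw [ofReal_sq_eq_enorm]
  calc ∫⁻ x in ball (0 : Ed d) (3 / 4), ENNReal.ofReal ((f x - favg f x s) ^ 2)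
      ≤ ∫⁻ x in ball (0 : Ed d) (3 / 4), ∫⁻ y, ENNReal.ofReal ((f (x + -(s • y)) - f x) ^ 2) ∂ν :=
        lintegral_mono hpt
    _ = ∫⁻ y, ∫⁻ x in ball (0 : Ed d) (3 / 4),
          ENNReal.ofReal ((f (x + -(s • y)) - f x) ^ 2) ∂volume ∂ν := by
        refine lintegral_lintegral_swap ?_
        refine Measurable.aemeasurable (Measurable.ennreal_ofReal ?_)
        refine Continuous.measurable ?_
        fun_prop
    _ ≤ ∫⁻ y, ENNReal.ofReal (s ^ 2) * Elin T ∂ν := by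
        have hν2 : ∀ᵐ y ∂ν, ‖y‖ < 1 := by
          rw [hν, ae_withDensity_iff hem]
          refine Filter.Eventually.of_forall fun y hy => ?_
          by_contra hcon
          push Not at hcon
          rw [eta_zero hcon] at hy; simp at hy
        refine lintegral_mono_ae ?_
        filter_upwards [hν2] with y hy
        have hn : ‖-(s • y)‖ ≤ s := by
          rw [norm_neg, norm_smul, Real.norm_of_nonneg hs0]
          exact mul_le_of_le_one_right hs0 hy.le
        refine (lintegral_mono_set ?_).trans ((P.translate (-(s • y))).trans ?_)
        · intro x hx
          rw [mem_ball_zero_iff] at hx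
          have := norm_add_le x (-(s • y))
          simp only [mem_ofPred_eq, mem_ball_zero_iff]
          constructor <;> linarith
        · gcongr
    _ = _ := by rw [lintegral_const, hν1, mul_one]

lemma Hyp.favg_L2' {d : ℕ} {Ω : Set (Ed d)} {T : Ed d → Ed d} {G : Set (Ed d)}
    {f χ : Ed d → ℝ} {δ m : ℝ} {O : Set (Ed d)} {π : Measure (Ed d × Ed d)} {κ β : ℝ}
    (H : Hyp Ω T G f χ δ m O π κ β) {s : ℝ} (hs0 : 0 ≤ s) (hs : s ≤ 1 / 4) :
    IntegrableOn (fun x => (f x - favg f x s) ^ 2) (ball (0 : Ed d) (3 / 4)) ∧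
    ∫ x in ball (0 : Ed d) (3 / 4), (f x - favg f x s) ^ 2 ≤ s ^ 2 * δ ^ 2 := by
  have hm : AEStronglyMeasurable (fun x => (f x - favg f x s) ^ 2)
      (volume.restrict (ball (0 : Ed d) (3 / 4))) :=
    ((H.cont.stronglyMeasurable.sub (favg_meas H.cont s)).pow 2).aestronglyMeasurable
  have hE : Elin T ≤ ENNReal.ofReal (δ ^ 2) := by
    unfold Elin
    rw [← ofReal_integral_eq_lintegral_ofReal H.int_u2
      (Filter.Eventually.of_forall fun x => by positivity)]
    exact ENNReal.ofReal_le_ofReal H.hE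
  have h : ∫⁻ x in ball (0 : Ed d) (3 / 4), ENNReal.ofReal ((f x - favg f x s) ^ 2)
      ≤ ENNReal.ofReal (s ^ 2 * δ ^ 2) := by
    rw [ENNReal.ofReal_mul (by positivity)]
    exact (H.favg_L2 hs0 hs).trans (by gcongr)
  constructor
  · refine ⟨hm, ?_⟩
    rw [hasFiniteIntegral_iff_ofReal (Filter.Eventually.of_forall fun x => by positivity)]
    exact h.trans_lt ENNReal.ofReal_lt_top
  · rw [integral_eq_lintegral_of_nonneg_ae (Filter.Eventually.of_forall fun x => by positivity) hm]
    exact ENNReal.toReal_le_of_le_ofReal (by positivity) h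

/-- The density `κ` differs from `1` by at most a multiple of `δ`. -/
lemma κ_bound (d : ℕ) : ∃ C, 0 ≤ C ∧ ∀ {Ω : Set (Ed d)} {T : Ed d → Ed d} {G : Set (Ed d)}
    {f χ : Ed d → ℝ} {δ m : ℝ} {O : Set (Ed d)} {π : Measure (Ed d × Ed d)} {κ β : ℝ}
    (_ : Hyp Ω T G f χ δ m O π κ β), |κ - 1| ≤ C * δ := by
  obtain ⟨K, hK⟩ := C2b_of_contDiff (kk_contDiff d) (kk_cs d)
  have hN := NN_pos d
  have hL := LL_nonneg d
  have hK0 := hK.nonneg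
  refine ⟨(LL d + NN d + 2) * K, by positivity, ?_⟩
  intro Ω T G f χ δ m O π κ β H
  exact H.κ_sub_one hK (fun x hx => kk_zero (by linarith))
    (fun x hx => gradient_zero (fun _ => kk_zero) (by linarith)) (kk_integral d)

/-- Integrating `favg_deriv_bound` from scale `s` to scale `1/4` compares the two averages of `f`. -/
lemma pp_close_pt (d : ℕ) : ∃ C, 0 ≤ C ∧ ∀ {Ω : Set (Ed d)} {T : Ed d → Ed d} {G : Set (Ed d)}
    {f χ : Ed d → ℝ} {δ m : ℝ} {O : Set (Ed d)} {π : Measure (Ed d × Ed d)} {κ β : ℝ}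
    (_ : Hyp Ω T G f χ δ m O π κ β) {s : ℝ} (_ : 0 < s) (_ : s ≤ 1 / 4) {x : Ed d}
    (_ : ‖x‖ ≤ 3 / 4), |pp f κ x - favg f x s| ≤ C * (s + s⁻¹ ^ (d + 1) * β) * δ := by
  obtain ⟨C1, hC1, h1⟩ := favg_deriv_bound d
  obtain ⟨C2, hC2, h2⟩ := κ_bound d
  refine ⟨C1 + C2 * |cG d|, by positivity, ?_⟩
  intro Ω T G f χ δ m O π κ β H s hs0 hs x hx
  have hδ := H.δpos
  have hβ := H.β0
  have hd : ∀ σ ∈ Icc s (1 / 4), HasDerivWithinAt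
      (fun σ => favg f x σ + (κ - 1) * cG d * (σ ^ 2 / 2))
      ((∫ y, inner ℝ (gradient (GG d) y) (T (x - σ • y) - (x - σ • y))) + (κ - 1) * cG d * σ)
      (Icc s (1 / 4)) σ := fun σ hσ => by
    have a1 := H.favg_deriv hx (hs0.trans_le hσ.1) hσ.2
    have a2 : HasDerivAt (fun σ : ℝ => σ ^ 2 / 2) σ σ := by
      have := (hasDerivAt_pow 2 σ).div_const 2
      refine this.congr_deriv ?_
      push_cast; ring
    exact (a1.add (a2.const_mul _)).hasDerivWithinAt
  have hmv := (convex_Icc s (1 / 4)).norm_image_sub_le_of_norm_hasDerivWithin_le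
    (C := C1 * s⁻¹ ^ (d + 1) * (β * δ)) hd (fun σ hσ => by
      have hσ0 : 0 < σ := hs0.trans_le hσ.1
      refine (h1 H hx hσ0 hσ.2).trans ?_
      have : σ⁻¹ ≤ s⁻¹ := inv_anti₀ hs0 hσ.1
      gcongr) (left_mem_Icc.2 hs) (right_mem_Icc.2 hs)
  rw [Real.norm_eq_abs, Real.norm_of_nonneg (by linarith : 0 ≤ 1 / 4 - s)] at hmv
  have e : pp f κ x - favg f x s = (favg f x (1 / 4) + (κ - 1) * cG d * ((1 / 4) ^ 2 / 2)
      - (favg f x s + (κ - 1) * cG d * (s ^ 2 / 2))) + (κ - 1) * (cG d * (s ^ 2 / 2)) := by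
    rw [pp_eq (by linarith)]; ring
  rw [e]
  refine (abs_add_le _ _).trans ?_
  have b1 : C1 * s⁻¹ ^ (d + 1) * (β * δ) * (1 / 4 - s) ≤ C1 * (s⁻¹ ^ (d + 1) * β) * δ := by
    have : 0 ≤ C1 * s⁻¹ ^ (d + 1) * (β * δ) := by positivity
    nlinarith
  have b2 : |(κ - 1) * (cG d * (s ^ 2 / 2))| ≤ C2 * |cG d| * s * δ := by
    rw [abs_mul, abs_mul, abs_of_nonneg (by positivity : 0 ≤ s ^ 2 / 2)]
    have := h2 H
    calc |κ - 1| * (|cG d| * (s ^ 2 / 2)) ≤ C2 * δ * (|cG d| * s) := by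
          gcongr; nlinarith
      _ = _ := by ring
  have b3 : 0 ≤ C1 * s * δ := by positivity
  have b4 : 0 ≤ C2 * |cG d| * (s⁻¹ ^ (d + 1) * β) * δ := by positivity
  nlinarith

/-- `pp` is close to `f` in `L²`, relative to `δ`, once `β` is small: first average at a small scale,
then compare the averages at the two scales. -/
lemma pp_close (d : ℕ) {γ : ℝ} (hγ : 0 < γ) : ∃ ω, 0 < ω ∧
    ∀ {Ω : Set (Ed d)} {T : Ed d → Ed d} {G : Set (Ed d)}
    {f χ : Ed d → ℝ} {δ m : ℝ} {O : Set (Ed d)} {π : Measure (Ed d × Ed d)} {κ β : ℝ}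
    (_ : Hyp Ω T G f χ δ m O π κ β), β ≤ ω → Continuous (pp f κ) →
    ∫ x in ball (0 : Ed d) (3 / 4), (f x - pp f κ x) ^ 2 ≤ γ ^ 2 * δ ^ 2 := by
  obtain ⟨C, hC, h⟩ := pp_close_pt d
  set v := volume.real (ball (0 : Ed d) (3 / 4)) with hv
  have hv0 : 0 ≤ v := measureReal_nonneg
  set γ' := γ / (4 * (v + 1) * (C + 1)) with hγ'
  have hγ'0 : 0 < γ' := by positivity
  set s := min (1 / 4) (min (γ / 2) γ') with hsd
  have hs0 : 0 < s := by positivity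
  refine ⟨γ' / s⁻¹ ^ (d + 1), by positivity, ?_⟩
  intro Ω T G f χ δ m O π κ β H hβ hpc
  have hs4 : s ≤ 1 / 4 := min_le_left _ _
  have hsγ : s ≤ γ / 2 := (min_le_right _ _).trans (min_le_left _ _)
  have hsγ' : s ≤ γ' := (min_le_right _ _).trans (min_le_right _ _)
  have hβ' : s⁻¹ ^ (d + 1) * β ≤ γ' := by
    rw [le_div_iff₀ (by positivity)] at hβ; linarith
  have hδ := H.δpos
  obtain ⟨i1, i2⟩ := H.favg_L2' hs0.le hs4
  have hpt : ∀ x ∈ ball (0 : Ed d) (3 / 4), (f x - pp f κ x) ^ 2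
      ≤ 2 * (f x - favg f x s) ^ 2 + 2 * (C * (2 * γ') * δ) ^ 2 := fun x hx => by
    rw [mem_ball_zero_iff] at hx
    have h1 := h H hs0 hs4 hx.le
    have h2 : |pp f κ x - favg f x s| ≤ C * (2 * γ') * δ := h1.trans (by gcongr; linarith)
    have h3 := sq_le_sq' (abs_le.1 h2).1 (abs_le.1 h2).2
    nlinarith [sq_nonneg ((f x - favg f x s) + (pp f κ x - favg f x s))]
  have i3 : IntegrableOn (fun x => (f x - pp f κ x) ^ 2) (ball (0 : Ed d) (3 / 4)) :=
    ((H.cont.sub hpc).pow 2).integrableOn_ball' 0 _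
  have i4 : IntegrableOn (fun x => 2 * (f x - favg f x s) ^ 2) (ball (0 : Ed d) (3 / 4)) :=
    i1.const_mul 2
  have i5 : IntegrableOn (fun _ => 2 * (C * (2 * γ') * δ) ^ 2) (ball (0 : Ed d) (3 / 4)) :=
    continuous_const.integrableOn_ball' 0 _
  refine (setIntegral_mono_on i3 (i4.add i5) measurableSet_ball hpt).trans ?_
  rw [Pi.add_def, integral_add i4 i5, integral_const_mul, setIntegral_const, smul_eq_mul, ← hv]
  have hb : C * (2 * γ') * (v + 1) ≤ γ / 2 := by
    rw [hγ']
    have : C * (2 * (γ / (4 * (v + 1) * (C + 1)))) * (v + 1) = γ / 2 * (C / (C + 1)) := by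
      field_simp; ring
    rw [this]
    exact mul_le_of_le_one_right (by positivity) ((div_le_one (by positivity)).2 (by linarith))
  have hb2 : v * (C * (2 * γ')) ^ 2 ≤ γ ^ 2 / 4 := by
    have h1 : (C * (2 * γ') * (v + 1)) ^ 2 ≤ (γ / 2) ^ 2 := by gcongr
    have h2 : v * (C * (2 * γ')) ^ 2 ≤ (C * (2 * γ') * (v + 1)) ^ 2 := by
      rw [mul_pow _ (v + 1), mul_comm]
      exact mul_le_mul_of_nonneg_left (by nlinarith) (sq_nonneg _)
    nlinarith
  have hb3 : s ^ 2 ≤ γ ^ 2 / 4 := by nlinarith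
  have e : v * (2 * (C * (2 * γ') * δ) ^ 2) = 2 * (v * (C * (2 * γ')) ^ 2) * δ ^ 2 := by ring
  rw [e]
  nlinarith [sq_nonneg δ]

/-! ### Harmonic correction of the mollified potential -/

lemma C2b.add_const {d : ℕ} {K : ℝ} {θ : Ed d → ℝ} {g : Ed d → Ed d} (h : C2b K θ g) (c : ℝ) :
    C2b (K + |c|) (fun x => θ x + c) g where
  bd x := (abs_add_le _ _).trans (by gcongr; exact h.bd x)
  gbd x := (h.gbd x).trans (by linarith [abs_nonneg c])
  taylor x v := by
    have := h.taylor x v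
    rw [add_sub_add_right_eq_sub]
    exact this.trans (by gcongr; linarith [abs_nonneg c])
  gc := h.gc

lemma pd_add_const {d : ℕ} (f : Ed d → ℝ) (c : ℝ) (i : Fin d) :
    pd i (fun x => f x + c) = pd i f := by
  ext x; unfold pd; rw [fderiv_add_const]

namespace Hyp
variable {d : ℕ} {Ω : Set (Ed d)} {T : Ed d → Ed d} {G : Set (Ed d)}
    {f χ : Ed d → ℝ} {δ m : ℝ} {O : Set (Ed d)} {π : Measure (Ed d × Ed d)} {κ β : ℝ}

lemma f_intOn (H : Hyp Ω T G f χ δ m O π κ β) : IntegrableOn f (ball 0 2) :=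
  H.cont.integrableOn_ball' 0 2

lemma pp_smooth (H : Hyp Ω T G f χ δ m O π κ β) : ContDiff ℝ (⊤ : ℕ∞) (pp f κ) :=
  (conv_smooth (z := fun y => y) H.f_intOn measurable_id (kk_contDiff d) (kk_cs d)).add
    contDiff_const

lemma f_L1 (H : Hyp Ω T G f χ δ m O π κ β) :
    ∫ x in ball (0 : Ed d) 2, |f x| ≤ (volume.real (ball (0 : Ed d) 2) + CP d) * δ := by
  have hδ := H.δpos
  have i1 : IntegrableOn (fun _ => δ) (ball (0 : Ed d) 2) := continuous_const.integrableOn_ball' 0 _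
  have i2 : IntegrableOn (fun x => δ⁻¹ * f x ^ 2) (ball (0 : Ed d) 2) :=
    (H.cont.pow 2 |>.integrableOn_ball' 0 2).const_mul _
  have h : ∫ x in ball (0 : Ed d) 2, |f x| ≤ ∫ x in ball (0 : Ed d) 2, (δ + δ⁻¹ * f x ^ 2) := by
    refine setIntegral_mono_on H.f_intOn.abs (i1.add i2) measurableSet_ball fun x _ => ?_
    have : |f x| * δ ≤ (δ + δ⁻¹ * f x ^ 2) * δ := by
      rw [add_mul, mul_right_comm, inv_mul_cancel₀ hδ.ne', one_mul, ← sq_abs (f x)]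
      nlinarith [sq_nonneg (|f x| - δ), abs_nonneg (f x)]
    exact le_of_mul_le_mul_right this hδ
  refine h.trans ?_
  rw [integral_add i1 i2, setIntegral_const, integral_const_mul, smul_eq_mul, add_mul]
  refine add_le_add le_rfl ?_
  have := H.hf
  calc δ⁻¹ * ∫ x in ball (0 : Ed d) 2, f x ^ 2 ≤ δ⁻¹ * (CP d * δ ^ 2) := by gcongr
    _ = _ := by field_simp

/-- The Laplacian of `pp` is the weak divergence of the displacement tested with the mollifier. -/
lemma pp_lap_eq (H : Hyp Ω T G f χ δ m O π κ β) {x : Ed d} (hx : ‖x‖ ≤ 1) :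
    lap (pp f κ) x = -∫ y, inner ℝ (-gradient (kk d) (x - y)) (T y - y) := by
  have hw := H.f_intOn
  have far : ∀ y : Ed d, 3 / 2 ≤ ‖y‖ → 1 / 4 < ‖x - y‖ := fun y hy => by
    have := norm_sub_norm_le y x
    rw [norm_sub_rev]; linarith
  have e1 : ∀ i : Fin d, pd i (pd i (pp f κ)) x
      = ∫ y, inner ℝ (pd i (kk d) (x - y) • EuclideanSpace.single i (1:ℝ)) (T y - y) := fun i => by
    have e0 : pd i (pd i (pp f κ)) x = ∫ y in ball 0 2, f y * pd i (pd i (kk d)) (x - y) := by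
      unfold pp
      rw [pd_add_const, conv_pd (z := fun y => y) hw measurable_id (kk_contDiff d) (kk_cs d),
        conv_pd (z := fun y => y) hw measurable_id (pd_contDiff (kk_contDiff d) i)
          (pd_cs (kk_cs d) i)]
    have z1 : ∀ z : Ed d, 1 / 4 < ‖z‖ → pd i (kk d) z = 0 := fun z hz =>
      pd_zero (fun _ => kk_zero) i hz
    have z2 : ∀ z : Ed d, 3 / 8 ≤ ‖z‖ → pd i (kk d) z = 0 := fun z hz => z1 z (by linarith)
    obtain ⟨K, hK⟩ := C2b_of_contDiff (pd_contDiff (kk_contDiff d) i) (pd_cs (kk_cs d) i)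
    have far2 : ∀ y : Ed d, 3 / 2 ≤ ‖y‖ → 3 / 8 < ‖x - y‖ := fun y hy => by
      have := norm_sub_norm_le y x
      rw [norm_sub_rev]; linarith
    have h := H.ibp (hK.reflect x) (fun y hy => z1 _ (far y hy))
      (fun y hy => by rw [gradient_zero z2 (far2 y hy), neg_zero]) (EuclideanSpace.single i (1:ℝ))
    rw [e0, setIntegral_of_vanish (fun y hy => by
      rw [pd_zero z2 i (far2 y (by linarith)), mul_zero])]
    rw [← neg_inj, ← integral_neg]
    have e3 : ∀ y, inner ℝ (pd i (kk d) (x - y) • EuclideanSpace.single i (1:ℝ)) (T y - y)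
        = pd i (kk d) (x - y) * inner ℝ (T y - y) (EuclideanSpace.single i (1:ℝ)) := fun y => by
      rw [inner_smul_left, real_inner_comm]; simp
    simp only [e3]
    rw [← h]
    congr 1; ext y
    rw [inner_neg_left, ← innerSL_apply_apply ℝ, gradient_inner, mul_neg]; rfl
  rw [lap_eq, ← integral_neg]
  simp only [e1]
  rw [← integral_finsetSum]
  · congr 1; ext y
    rw [← sum_inner, inner_neg_left, neg_neg]
    congr 1
    ext j
    simp [Finset.sum_apply, Pi.single_apply, gradient_apply]
  · intro i _
    refine H.integrable_inner ?_ ?_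
    · have := (pd_contDiff (kk_contDiff d) i).continuous; fun_prop
    · intro y hy
      rw [pd_zero (fun _ => kk_zero) i (far y (by linarith)), zero_smul]

end Hyp

/-- `pp` solves the Poisson equation `Δp = 1 - κ` approximately. -/
lemma pp_lap (d : ℕ) : ∃ C, 0 ≤ C ∧ ∀ {Ω : Set (Ed d)} {T : Ed d → Ed d} {G : Set (Ed d)}
    {f χ : Ed d → ℝ} {δ m : ℝ} {O : Set (Ed d)} {π : Measure (Ed d × Ed d)} {κ β : ℝ}
    (_ : Hyp Ω T G f χ δ m O π κ β) {x : Ed d} (_ : ‖x‖ ≤ 1 / 2),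
    |lap (pp f κ) x + (κ - 1)| ≤ C * (β * δ) := by
  obtain ⟨K, hK⟩ := C2b_of_contDiff (kk_contDiff d) (kk_cs d)
  have hK0 := hK.nonneg
  have hN := NN_pos d
  refine ⟨(NN d + 2) * K, by positivity, ?_⟩
  intro Ω T G f χ δ m O π κ β H x hx
  have far : ∀ y : Ed d, 1 ≤ ‖y‖ → 1 / 4 < ‖x - y‖ := fun y hy => by
    have := norm_sub_norm_le y x
    rw [norm_sub_rev]; linarith
  have h := H.weak (hK.reflect x) (fun y hy => kk_zero (far y hy).le)
    (fun y hy => by rw [gradient_zero (fun _ => kk_zero) (far y hy), neg_zero])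
  rw [integral_sub_left_eq_self (kk d) volume x, kk_integral, mul_one, abs_sub_comm] at h
  rw [H.pp_lap_eq (by linarith), add_comm, ← sub_eq_add_neg]
  exact h

/-- Mollification at a fixed scale bounds the `C²` norm of `pp` by that of the kernel times the `L¹`
norm of `f`. -/
lemma pp_C2b (d : ℕ) : ∃ V, 0 ≤ V ∧ ∀ {Ω : Set (Ed d)} {T : Ed d → Ed d} {G : Set (Ed d)}
    {f χ : Ed d → ℝ} {δ m : ℝ} {O : Set (Ed d)} {π : Measure (Ed d × Ed d)} {κ β : ℝ}
    (_ : Hyp Ω T G f χ δ m O π κ β), C2b (V * δ) (pp f κ) (gradient (pp f κ)) := by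
  obtain ⟨K, hK⟩ := C2b_of_contDiff (kk_contDiff d) (kk_cs d)
  obtain ⟨C, hC, hκ⟩ := κ_bound d
  have hK0 := hK.nonneg
  have hCP := CP_nonneg d
  refine ⟨K * (volume.real (ball (0 : Ed d) 2) + CP d) + C * |cG d|, by positivity, ?_⟩
  intro Ω T G f χ δ m O π κ β H
  have hδ := H.δpos
  have h := ((hK.superpose (z := fun y => y) H.f_intOn measurable_id).add_const
    ((κ - 1) * cG d / 32))
  have h2 : gradient (pp f κ) = _ := funext h.gradient_eq
  rw [h2]
  refine h.mono ?_
  have a1 := H.f_L1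
  have a2 : |(κ - 1) * cG d / 32| ≤ C * |cG d| * δ := by
    rw [abs_div, abs_mul, abs_of_pos (by norm_num : (0:ℝ) < 32)]
    have := hκ H
    have := mul_le_mul_of_nonneg_right this (abs_nonneg (cG d))
    have h0 : 0 ≤ |κ - 1| * |cG d| := by positivity
    linarith
  have := mul_le_mul_of_nonneg_left a1 hK0
  linarith

/-- Harmonic correction of the mollified potential. -/
lemma exists_phi (d : ℕ) : ∃ C, 0 ≤ C ∧ ∀ {Ω : Set (Ed d)} {T : Ed d → Ed d} {G : Set (Ed d)}
    {f χ : Ed d → ℝ} {δ m : ℝ} {O : Set (Ed d)} {π : Measure (Ed d × Ed d)} {κ β : ℝ}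
    (_ : Hyp Ω T G f χ δ m O π κ β), ∃ φ : Ed d → ℝ, GradHarmonicOn φ (ball 0 (1 / 4)) ∧
      Continuous (gradient φ) ∧ ∀ x, ‖gradient φ x - gradient (pp f κ) x‖ ≤ C * (β * δ) := by
  obtain ⟨C, hC, h⟩ := pp_lap d
  refine ⟨2 * C, by positivity, ?_⟩
  intro Ω T G f χ δ m O π κ β H
  have hδ := H.δpos
  have hβ := H.β0
  let b : ContDiffBump (0 : Ed d) := ⟨1 / 4, 1 / 2, by norm_num, by norm_num⟩
  have hps := H.pp_smooth
  have hq : ContDiff ℝ (⊤ : ℕ∞) fun x => b x * (lap (pp f κ) x + (κ - 1)) :=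
    b.contDiff.mul ((lap_contDiff hps).add contDiff_const)
  have hb0 : ∀ x : Ed d, 1 / 2 ≤ ‖x‖ → b x = 0 := fun x hx =>
    b.zero_of_le_dist (by rw [dist_zero_right]; exact hx)
  obtain ⟨W, c, hW, hlap, hgr⟩ := poisson hq (fun x hx => by rw [hb0 x hx, zero_mul])
    (M := C * (β * δ)) (fun x => by
      rcases le_or_gt (1 / 2) ‖x‖ with hx | hx
      · rw [hb0 x hx, zero_mul, abs_zero]; positivity
      · rw [abs_mul, abs_of_nonneg b.nonneg]
        exact (mul_le_of_le_one_left (abs_nonneg _) b.le_one).trans (h H hx.le))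
  have hφ := hps.add hW
  have hgrad : ∀ x, gradient (fun x => pp f κ x + W x) x = gradient (pp f κ) x + gradient W x :=
    fun x => by
      ext i
      rw [PiLp.add_apply, gradient_apply, gradient_apply, gradient_apply, pd_add hps hW]
  refine ⟨fun x => pp f κ x + W x, gradHarmonicOn_of_lap hφ (c := c - (κ - 1)) fun x hx => ?_,
    ?_, fun x => ?_⟩
  · rw [lap_add hps hW, hlap x hx, b.one_of_mem_closedBall]
    · ring
    · exact ball_subset_closedBall hx
  · exact (InnerProductSpace.toDual ℝ (Ed d)).symm.continuous.comp
      (hφ.continuous_fderiv (by simp))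
  · rw [hgrad, add_sub_cancel_left, mul_assoc]; exact hgr x

/-! ### Local comparison with a constant vector -/

/-- A `C²` bound controls the Lipschitz constant of the gradient. -/
lemma C2b.grad_lip {d : ℕ} {K : ℝ} {θ : Ed d → ℝ} {g : Ed d → Ed d} (h : C2b K θ g) (x y : Ed d) :
    ‖g x - g y‖ ≤ 6 * K * ‖x - y‖ := by
  have hK := h.nonneg
  rcases eq_or_ne (g x - g y) 0 with h0 | h0
  · rw [h0, norm_zero]; positivity
  rcases eq_or_ne x y with hxy | hxy
  · exact absurd (by rw [hxy, sub_self]) h0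
  have hv : 0 < ‖x - y‖ := norm_pos_iff.2 (sub_ne_zero.2 hxy)
  have hn : 0 < ‖g x - g y‖ := norm_pos_iff.2 h0
  -- test the gradient difference with a vector of length `‖x - y‖` in its own direction
  set w : Ed d := (‖x - y‖ * ‖g x - g y‖⁻¹) • (g x - g y) with hw
  have hwn : ‖w‖ = ‖x - y‖ := by
    rw [hw, norm_smul, Real.norm_of_nonneg (by positivity), mul_assoc, inv_mul_cancel₀ hn.ne',
      mul_one]
  have hin : inner ℝ (g x - g y) w = ‖x - y‖ * ‖g x - g y‖ := by
    rw [hw, inner_smul_right, real_inner_self_eq_norm_sq]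
    field_simp
  have t1 := h.taylor x w
  have t2 := h.taylor y (x - y + w)
  have t3 := h.taylor y (x - y)
  have ex : y + (x - y) = x := by abel
  rw [← add_assoc, ex, inner_add_right] at t2
  rw [ex] at t3
  have t4 : ‖x - y + w‖ ≤ 2 * ‖x - y‖ := (norm_add_le _ _).trans (by rw [hwn]; linarith)
  have t5 : ‖x - y + w‖ ^ 2 ≤ 4 * ‖x - y‖ ^ 2 := by nlinarith [norm_nonneg (x - y + w)]
  have t6 := mul_le_mul_of_nonneg_left t5 hK
  rw [hwn] at t1
  rw [inner_sub_left] at hin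
  have t7 : ‖g x - g y‖ * ‖x - y‖ ≤ (6 * K * ‖x - y‖) * ‖x - y‖ := by
    have := abs_le.1 t1
    have := abs_le.1 t2
    have := abs_le.1 t3
    nlinarith
  exact le_of_mul_le_mul_right t7 hv

/-- Integration by parts for two functions with `C²` bounds, one of them compactly supported. -/
lemma C2b.ibp {d : ℕ} {K K' ρ : ℝ} {θ η : Ed d → ℝ} {g h : Ed d → Ed d} (hθ : C2b K θ g)
    (hη : C2b K' η h) (h0 : ∀ x, ρ ≤ ‖x‖ → η x = 0) (h0' : ∀ x, ρ ≤ ‖x‖ → h x = 0) (v : Ed d) :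
    ∫ x, θ x * inner ℝ (h x) v = -∫ x, η x * inner ℝ (g x) v := by
  have e1 : ∀ x, fderiv ℝ θ x v = inner ℝ (g x) v := fun x => by
    rw [(hθ.hasFDerivAt x).fderiv, innerSL_apply_apply]
  have e2 : ∀ x, fderiv ℝ η x v = inner ℝ (h x) v := fun x => by
    rw [(hη.hasFDerivAt x).fderiv, innerSL_apply_apply]
  have c1 : Continuous fun x => inner ℝ (g x) v := hθ.gc.inner continuous_const
  have c2 : Continuous fun x => inner ℝ (h x) v := hη.gc.inner continuous_const
  have i (F : Ed d → ℝ) (hF : Continuous F) (hF0 : ∀ x, ρ ≤ ‖x‖ → F x = 0) : Integrable F :=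
    integrable_of_vanish (hF.integrableOn_ball' 0 ρ) hF0
  have := integral_mul_fderiv_eq_neg_fderiv_mul_of_integrable (μ := volume) (f := η)
    (g := θ) (v := v)
    (by simp only [e2]; exact i _ (c2.mul hθ.cont) fun x hx => by
          rw [h0' x hx, inner_zero_left, zero_mul])
    (by simp only [e1]; exact i _ (hη.cont.mul c1) fun x hx => by rw [h0 x hx, zero_mul])
    (i _ (hη.cont.mul hθ.cont) fun x hx => by rw [h0 x hx, zero_mul])
    (fun x _ => (hη.hasFDerivAt x).differentiableAt)
    (fun x _ => (hθ.hasFDerivAt x).differentiableAt)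
  simp only [e1, e2] at this
  rw [this, neg_neg]
  congr 1; ext x; ring

namespace Hyp
variable {d : ℕ} {Ω : Set (Ed d)} {T : Ed d → Ed d} {G : Set (Ed d)}
    {f χ : Ed d → ℝ} {δ m : ℝ} {O : Set (Ed d)} {π : Measure (Ed d × Ed d)} {κ β : ℝ}

/-- The algebra behind the local estimate: after replacing `f` by a `C²` function `p`, the terms
of first order combine into `∫ η ⟨∇p - v, u - v⟩`. -/
lemma local_identity (H : Hyp Ω T G f χ δ m O π κ β) {K K' : ℝ} {η p : Ed d → ℝ}
    {g q : Ed d → Ed d} (hη : C2b K η g) (hp : C2b K' p q)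
    (h0 : ∀ x, 1 / 2 ≤ ‖x‖ → η x = 0) (hg0 : ∀ x, 1 / 2 ≤ ‖x‖ → g x = 0)
    (h1 : ∫ x, η x = 1) (v : Ed d) :
    Integrable (fun x => η x * ‖T x - x - v‖ ^ 2) ∧
    Integrable (fun x => η x * inner ℝ (q x - v) (T x - x - v)) ∧
    Integrable (fun x => (f x - p x) * (inner ℝ (g x) (v - (T x - x)) + (κ - 1) * η x)) ∧
    (‖v‖ ^ 2 / 2 + (∫ x, f x * inner ℝ (g x) (v - (T x - x))) + (κ - 1) * (∫ x, η x * f x))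
      - 1 / 2 * (∫ x, η x * ‖T x - x‖ ^ 2)
    = (∫ x, (f x - p x) * (inner ℝ (g x) (v - (T x - x)) + (κ - 1) * η x))
      + (∫ x, η x * inner ℝ (q x - v) (T x - x - v))
      - ((∫ x, inner ℝ (η x • q x + p x • g x) (T x - x)) - (κ - 1) * ∫ x, p x * η x)
      - 1 / 2 * ∫ x, η x * ‖T x - x - v‖ ^ 2 := by
  have h2 : ∀ x, 2 ≤ ‖x‖ → η x = 0 := fun x hx => h0 x (by linarith)
  have hg2 : ∀ x, 2 ≤ ‖x‖ → g x = 0 := fun x hx => hg0 x (by linarith)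
  have cη := hη.cont
  have cp := hp.cont
  have cg := hη.gc
  have cq := hp.gc
  have cf : Continuous f := H.cont
  have i (F : Ed d → ℝ) (hF : Continuous F) (hF0 : ∀ x, 2 ≤ ‖x‖ → F x = 0) : Integrable F :=
    integrable_of_vanish (hF.integrableOn_ball' 0 2) hF0
  have a0 := H.η_u2_int cη h2
  have a1 : Integrable fun x => η x * inner ℝ v (T x - x) := by
    have := H.integrable_inner (g := fun x => η x • v) (by fun_prop)
      (fun x hx => by rw [h2 x hx, zero_smul])
    simpa only [inner_smul_left, conj_trivial] using this
  have b1 : Integrable fun x => f x * inner ℝ (g x) v :=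
    i _ (by fun_prop) fun x hx => by rw [hg2 x hx, inner_zero_left, mul_zero]
  have b2 := H.f_inner_int cg hg2
  have c1 : Integrable fun x => p x * inner ℝ (g x) v :=
    i _ (by fun_prop) fun x hx => by rw [hg2 x hx, inner_zero_left, mul_zero]
  have c2 : Integrable fun x => p x * inner ℝ (g x) (T x - x) := by
    have := H.integrable_inner (g := fun x => p x • g x) (by fun_prop)
      (fun x hx => by rw [hg2 x hx, smul_zero])
    simpa only [inner_smul_left, conj_trivial] using this
  have e1 : Integrable fun x => η x * f x := H.f_int cη h2
  have e2 : Integrable fun x => p x * η x :=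
    i _ (by fun_prop) fun x hx => by rw [h2 x hx, mul_zero]
  have k1 : Integrable fun x => η x * inner ℝ (q x) v :=
    i _ (by fun_prop) fun x hx => by rw [h2 x hx, zero_mul]
  have k2 : Integrable fun x => η x * inner ℝ (q x) (T x - x) := by
    have := H.integrable_inner (g := fun x => η x • q x) (by fun_prop)
      (fun x hx => by rw [h2 x hx, zero_smul])
    simpa only [inner_smul_left, conj_trivial] using this
  have iη : Integrable η := i _ cη h2
  have E1 : ∫ x, f x * inner ℝ (g x) (v - (T x - x))
      = (∫ x, f x * inner ℝ (g x) v) - ∫ x, f x * inner ℝ (g x) (T x - x) := by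
    rw [← integral_sub b1 b2]; congr 1; ext x; rw [inner_sub_right]; ring
  have F2 : (fun x => (f x - p x) * (inner ℝ (g x) (v - (T x - x)) + (κ - 1) * η x))
      = fun x => (f x * inner ℝ (g x) v - f x * inner ℝ (g x) (T x - x)
        - (p x * inner ℝ (g x) v - p x * inner ℝ (g x) (T x - x)))
        + (κ - 1) * (η x * f x - p x * η x) := by
    ext x; rw [inner_sub_right]; ring
  have I2 : Integrable fun x => (f x * inner ℝ (g x) v - f x * inner ℝ (g x) (T x - x)
        - (p x * inner ℝ (g x) v - p x * inner ℝ (g x) (T x - x)))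
        + (κ - 1) * (η x * f x - p x * η x) :=
    ((b1.sub b2).sub (c1.sub c2)).add ((e1.sub e2).const_mul _)
  have E2 : ∫ x, (f x - p x) * (inner ℝ (g x) (v - (T x - x)) + (κ - 1) * η x)
      = ((∫ x, f x * inner ℝ (g x) v) - (∫ x, f x * inner ℝ (g x) (T x - x))
        - ((∫ x, p x * inner ℝ (g x) v) - ∫ x, p x * inner ℝ (g x) (T x - x)))
        + (κ - 1) * ((∫ x, η x * f x) - ∫ x, p x * η x) := by
    have j1 : Integrable fun x => f x * inner ℝ (g x) v - f x * inner ℝ (g x) (T x - x) := b1.sub b2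
    have j2 : Integrable fun x => p x * inner ℝ (g x) v - p x * inner ℝ (g x) (T x - x) := c1.sub c2
    have j3 : Integrable fun x => f x * inner ℝ (g x) v - f x * inner ℝ (g x) (T x - x)
        - (p x * inner ℝ (g x) v - p x * inner ℝ (g x) (T x - x)) := j1.sub j2
    have j4 : Integrable fun x => (κ - 1) * (η x * f x - p x * η x) := (e1.sub e2).const_mul _
    rw [F2, integral_add j3 j4, integral_sub j1 j2, integral_sub b1 b2, integral_sub c1 c2,
      integral_const_mul, integral_sub e1 e2]
  have E3 := hp.ibp hη h0 hg0 v
  have E4 : ∫ x, inner ℝ (η x • q x + p x • g x) (T x - x)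
      = (∫ x, η x * inner ℝ (q x) (T x - x)) + ∫ x, p x * inner ℝ (g x) (T x - x) := by
    rw [← integral_add k2 c2]; congr 1; ext x
    rw [inner_add_left, inner_smul_left, inner_smul_left]; simp
  have F5 : (fun x => η x * ‖T x - x - v‖ ^ 2)
      = fun x => (η x * ‖T x - x‖ ^ 2 - 2 * (η x * inner ℝ v (T x - x))) + ‖v‖ ^ 2 * η x := by
    ext x; rw [norm_sub_sq_real, real_inner_comm]; ring
  have I5 : Integrable fun x =>
      (η x * ‖T x - x‖ ^ 2 - 2 * (η x * inner ℝ v (T x - x))) + ‖v‖ ^ 2 * η x :=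
    (a0.sub (a1.const_mul _)).add (iη.const_mul _)
  have E5 : ∫ x, η x * ‖T x - x - v‖ ^ 2
      = ((∫ x, η x * ‖T x - x‖ ^ 2) - 2 * ∫ x, η x * inner ℝ v (T x - x)) + ‖v‖ ^ 2 := by
    have j1 : Integrable fun x => η x * ‖T x - x‖ ^ 2 - 2 * (η x * inner ℝ v (T x - x)) :=
      a0.sub (a1.const_mul _)
    rw [F5, integral_add j1 (iη.const_mul _), integral_sub a0 (a1.const_mul _), integral_const_mul, integral_const_mul, h1, mul_one]
  have F6 : (fun x => η x * inner ℝ (q x - v) (T x - x - v))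
      = fun x => (η x * inner ℝ (q x) (T x - x) - η x * inner ℝ v (T x - x)
        - η x * inner ℝ (q x) v) + ‖v‖ ^ 2 * η x := by
    ext x
    rw [inner_sub_right, inner_sub_left, inner_sub_left, real_inner_self_eq_norm_sq]; ring
  have I6 : Integrable fun x => (η x * inner ℝ (q x) (T x - x) - η x * inner ℝ v (T x - x)
        - η x * inner ℝ (q x) v) + ‖v‖ ^ 2 * η x :=
    ((k2.sub a1).sub k1).add (iη.const_mul _)
  have E6 : ∫ x, η x * inner ℝ (q x - v) (T x - x - v)
      = ((∫ x, η x * inner ℝ (q x) (T x - x)) - (∫ x, η x * inner ℝ v (T x - x))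
        - ∫ x, η x * inner ℝ (q x) v) + ‖v‖ ^ 2 := by
    have j1 : Integrable fun x => η x * inner ℝ (q x) (T x - x) - η x * inner ℝ v (T x - x) :=
      k2.sub a1
    have j2 : Integrable fun x => η x * inner ℝ (q x) (T x - x) - η x * inner ℝ v (T x - x)
        - η x * inner ℝ (q x) v := j1.sub k1
    rw [F6, integral_add j2 (iη.const_mul _), integral_sub j1 k1, integral_sub k2 a1,
      integral_const_mul, h1, mul_one]
  refine ⟨F5 ▸ I5, F6 ▸ I6, F2 ▸ I2, ?_⟩
  rw [E1, E2, E4, E5, E6, E3]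
  ring

/-- Cost of replacing `f` by the mollified potential. -/
lemma replace_error (H : Hyp Ω T G f χ δ m O π κ β) {K V γ : ℝ} (hγ : 0 < γ) {η p : Ed d → ℝ}
    {g : Ed d → Ed d} (hη : C2b K η g) (hp : Continuous p)
    (h0 : ∀ x, 1 / 2 ≤ ‖x‖ → η x = 0) (hg0 : ∀ x, 1 / 2 ≤ ‖x‖ → g x = 0)
    (hfp : ∫ x in ball (0 : Ed d) (3 / 4), (f x - p x) ^ 2 ≤ γ ^ 2 * δ ^ 2)
    {v : Ed d} (hv : ‖v‖ + |κ - 1| ≤ V * δ) :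
    ∫ x, (f x - p x) * (inner ℝ (g x) (v - (T x - x)) + (κ - 1) * η x)
      ≤ K * (2 + V ^ 2 * volume.real (ball (0 : Ed d) (3 / 4))) * γ * δ ^ 2 := by
  have hK := hη.nonneg
  have cf : Continuous f := H.cont
  rw [← setIntegral_of_vanish (ρ := 3 / 4) (fun x hx => by
    rw [h0 x (by linarith), hg0 x (by linarith), inner_zero_left, mul_zero, add_zero, mul_zero])]
  have i1 : IntegrableOn (fun x => γ⁻¹ * (f x - p x) ^ 2) (ball (0 : Ed d) (3 / 4)) :=
    Continuous.integrableOn_ball' (by fun_prop) 0 _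
  have i2 : IntegrableOn (fun x => γ * ‖T x - x‖ ^ 2) (ball (0 : Ed d) (3 / 4)) :=
    (H.int_u2.mono_set (ball_subset_ball (by norm_num))).const_mul _
  have i3 : IntegrableOn (fun _ => γ * (V * δ) ^ 2) (ball (0 : Ed d) (3 / 4)) :=
    continuous_const.integrableOn_ball' 0 _
  have i4 : IntegrableOn (fun x => γ⁻¹ * (f x - p x) ^ 2 + γ * ‖T x - x‖ ^ 2)
    (ball (0 : Ed d) (3 / 4)) := i1.add i2
  have i5 : IntegrableOn (fun x => γ⁻¹ * (f x - p x) ^ 2 + γ * ‖T x - x‖ ^ 2 + γ * (V * δ) ^ 2)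
    (ball (0 : Ed d) (3 / 4)) := i4.add i3
  have key : ∀ x, (f x - p x) * (inner ℝ (g x) (v - (T x - x)) + (κ - 1) * η x)
      ≤ K * (γ⁻¹ * (f x - p x) ^ 2 + γ * ‖T x - x‖ ^ 2 + γ * (V * δ) ^ 2) := fun x => by
    have s1 : |inner ℝ (g x) (v - (T x - x)) + (κ - 1) * η x| ≤ K * (‖T x - x‖ + V * δ) := by
      refine (abs_add_le _ _).trans ?_
      rw [abs_mul]
      have t1 : |inner ℝ (g x) (v - (T x - x))| ≤ K * (‖v‖ + ‖T x - x‖) :=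
        (abs_real_inner_le_norm _ _).trans
          (mul_le_mul (hη.gbd x) (norm_sub_le _ _) (norm_nonneg _) hK)
      have t2 : |κ - 1| * |η x| ≤ |κ - 1| * K := mul_le_mul_of_nonneg_left (hη.bd x) (abs_nonneg _)
      have t3 := mul_le_mul_of_nonneg_left hv hK
      linarith
    have s2 : (f x - p x) * (inner ℝ (g x) (v - (T x - x)) + (κ - 1) * η x)
        ≤ |f x - p x| * (K * (‖T x - x‖ + V * δ)) := by
      refine (le_abs_self _).trans ?_
      rw [abs_mul]
      exact mul_le_mul_of_nonneg_left s1 (abs_nonneg _)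
    have s3 : |f x - p x| * (‖T x - x‖ + V * δ)
        ≤ γ⁻¹ * (f x - p x) ^ 2 + γ * ‖T x - x‖ ^ 2 + γ * (V * δ) ^ 2 := by
      have hs : ∀ b : ℝ, |f x - p x| * b ≤ (γ⁻¹ * (f x - p x) ^ 2) / 2 + γ * b ^ 2 / 2 := fun b => by
        have e : (γ⁻¹ * (f x - p x) ^ 2) / 2 + γ * b ^ 2 / 2 - |f x - p x| * b
            = γ⁻¹ / 2 * (|f x - p x| - γ * b) ^ 2 := by
          rw [← sq_abs (f x - p x)]; field_simp; ring
        have : 0 ≤ γ⁻¹ / 2 * (|f x - p x| - γ * b) ^ 2 := by positivity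
        linarith
      have q1 := hs ‖T x - x‖
      have q2 := hs (V * δ)
      have q3 : 0 ≤ γ * ‖T x - x‖ ^ 2 := by positivity
      have q4 : 0 ≤ γ * (V * δ) ^ 2 := by positivity
      linarith
    have := mul_le_mul_of_nonneg_left s3 hK
    linarith
  have hmono : ∫ x in ball (0 : Ed d) (3 / 4),
        (f x - p x) * (inner ℝ (g x) (v - (T x - x)) + (κ - 1) * η x)
      ≤ ∫ x in ball (0 : Ed d) (3 / 4),
        K * (γ⁻¹ * (f x - p x) ^ 2 + γ * ‖T x - x‖ ^ 2 + γ * (V * δ) ^ 2) := by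
    by_cases hi : IntegrableOn
        (fun x => (f x - p x) * (inner ℝ (g x) (v - (T x - x)) + (κ - 1) * η x))
        (ball (0 : Ed d) (3 / 4))
    · exact setIntegral_mono hi (i5.const_mul K) key
    · rw [integral_undef hi]
      exact integral_nonneg fun x => by positivity
  refine hmono.trans ?_
  rw [integral_const_mul, integral_add i4 i3, integral_add i1 i2, integral_const_mul,
    integral_const_mul, setIntegral_const, smul_eq_mul]
  have r1 := H.hE' (ρ := 3 / 4) (by norm_num)
  have r2 : γ⁻¹ * ∫ x in ball (0 : Ed d) (3 / 4), (f x - p x) ^ 2 ≤ γ * δ ^ 2 := by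
    calc _ ≤ γ⁻¹ * (γ ^ 2 * δ ^ 2) := by gcongr
      _ = γ * δ ^ 2 := by field_simp
  have r3 := mul_le_mul_of_nonneg_left r1 hγ.le
  rw [mul_assoc K, mul_assoc K]
  refine mul_le_mul_of_nonneg_left ?_ hK
  nlinarith
end Hyp

/-- Local estimate: against a bump function `η`, the displacement is close to the constant
`∇p(z)`, up to the oscillation `S` of `∇p` on the support of `η`. -/
lemma local_estimate (d : ℕ) (K : ℝ) : ∃ C, 0 ≤ C ∧ ∀ γ : ℝ, 0 < γ → ∃ ω, 0 < ω ∧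
    ∀ {Ω : Set (Ed d)} {T : Ed d → Ed d} {G : Set (Ed d)}
    {f χ : Ed d → ℝ} {δ m : ℝ} {O : Set (Ed d)} {π : Measure (Ed d × Ed d)} {κ β : ℝ}
    (_ : Hyp Ω T G f χ δ m O π κ β), β ≤ ω →
    ∀ {η : Ed d → ℝ} {g : Ed d → Ed d} (_ : C2b K η g)
    (_ : ∀ x, 1 / 2 ≤ ‖x‖ → η x = 0) (_ : ∀ x, 1 / 2 ≤ ‖x‖ → g x = 0) (_ : ∀ x, 0 ≤ η x)
    (_ : ∫ x, η x = 1) {z : Ed d} {S : ℝ}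
    (_ : ∀ x, η x ≠ 0 → ‖gradient (pp f κ) x - gradient (pp f κ) z‖ ≤ S),
    Integrable (fun x => η x * ‖T x - x - gradient (pp f κ) z‖ ^ 2) ∧
    ∫ x, η x * ‖T x - x - gradient (pp f κ) z‖ ^ 2 ≤ 4 * S ^ 2 + C * (β + m + γ) * δ ^ 2 := by
  rcases lt_or_ge K 0 with hK | hK
  · refine ⟨0, le_rfl, fun γ _ => ⟨1, one_pos, ?_⟩⟩
    intro Ω T G f χ δ m O π κ β H _ η g hη
    exact absurd hη.nonneg (not_le.2 hK)
  obtain ⟨V, hV, hpC⟩ := pp_C2b d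
  obtain ⟨Cκ, hCκ, hκ⟩ := κ_bound d
  obtain ⟨C1, hC1, hM⟩ := Hyp.M d K V
  have hN := NN_pos d
  set C2 := K * (2 + (V + Cκ) ^ 2 * volume.real (ball (0 : Ed d) (3 / 4))) with hC2
  set C3 := (NN d + 2) * (3 * V * K) with hC3
  have hC2' : 0 ≤ C2 := by positivity
  have hC3' : 0 ≤ C3 := by positivity
  refine ⟨4 * (C1 + C2 + C3), by positivity, fun γ hγ => ?_⟩
  obtain ⟨ω, hω, hclose⟩ := pp_close d hγ
  refine ⟨min ω (1 / (8 * (V + 1))), by positivity, ?_⟩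
  intro Ω T G f χ δ m O π κ β H hβω η g hη h0 hg0 hη0 h1 z S hS
  have hδ := H.δpos
  have hβ := H.β0
  have hm := H.mpos
  have hp := hpC H
  set p := pp f κ with hpdef
  set v := gradient p z with hv
  have hvV : ‖v‖ ≤ V * δ := hp.gbd z
  have hv8 : ‖v‖ ≤ 1 / 8 := by
    have h2 : δ ≤ 1 / (8 * (V + 1)) := H.δβ.trans (hβω.trans (min_le_right _ _))
    rw [le_div_iff₀ (by positivity)] at h2
    nlinarith
  obtain ⟨I1, I2, I3, hid⟩ := H.local_identity hη hp h0 hg0 h1 v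
  refine ⟨I1, ?_⟩
  have m1 := hM H hη h0 hg0 hη0 h1 hv8 hvV
  have m2 := H.replace_error (V := V + Cκ) hγ hη hp.cont h0 hg0
    (hclose H (hβω.trans (min_le_left _ _)) hp.cont) (v := v) (by linarith [hκ H])
  have m3 := (abs_le.1 (H.weak (hp.mul hη)
    (fun x hx => by rw [h0 x (by linarith), mul_zero])
    (fun x hx => by rw [h0 x (by linarith), hg0 x (by linarith), zero_smul, smul_zero,
      add_zero]))).1
  have m4 : ∫ x, η x * inner ℝ (gradient p x - v) (T x - x - v)
      ≤ 1 / 4 * (∫ x, η x * ‖T x - x - v‖ ^ 2) + S ^ 2 := by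
    have iη : Integrable η := integrable_of_vanish (hη.cont.integrableOn_ball' 0 (1 / 2)) h0
    have hle : ∫ x, η x * inner ℝ (gradient p x - v) (T x - x - v)
        ≤ ∫ x, (1 / 4 * (η x * ‖T x - x - v‖ ^ 2) + S ^ 2 * η x) := by
      refine integral_mono I2 ((I1.const_mul _).add (iη.const_mul _)) fun x => ?_
      show η x * inner ℝ (gradient p x - v) (T x - x - v)
        ≤ 1 / 4 * (η x * ‖T x - x - v‖ ^ 2) + S ^ 2 * η x
      rcases eq_or_ne (η x) 0 with hx | hx
      · rw [hx]; simp
      have hs := hS x hx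
      have hi := real_inner_le_norm (gradient p x - v) (T x - x - v)
      have hs2 : ‖gradient p x - v‖ ^ 2 ≤ S ^ 2 := by gcongr
      have : inner ℝ (gradient p x - v) (T x - x - v) ≤ 1 / 4 * ‖T x - x - v‖ ^ 2 + S ^ 2 := by
        nlinarith [sq_nonneg (‖gradient p x - v‖ - 1 / 2 * ‖T x - x - v‖)]
      nlinarith [mul_le_mul_of_nonneg_left this (hη0 x)]
    rwa [integral_add (I1.const_mul _) (iη.const_mul _), integral_const_mul, integral_const_mul,
      h1, mul_one] at hle
  have m5 : (NN d + 2) * (3 * (V * δ) * K) * (β * δ) = C3 * β * δ ^ 2 := by rw [hC3]; ring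
  rw [m5] at m3
  have n1 : 0 ≤ C1 * γ * δ ^ 2 := by positivity
  have n2 : 0 ≤ C2 * (β + m) * δ ^ 2 := by positivity
  have n3 : 0 ≤ C3 * (m + γ) * δ ^ 2 := by positivity
  linarith

/-! ### Averaging the local estimate -/

lemma exists_bump (d : ℕ) {r : ℝ} (hr : 0 < r) : ∃ (K : ℝ) (ρ : Ed d → ℝ) (g : Ed d → Ed d),
    C2b K ρ g ∧ (∀ x, r ≤ ‖x‖ → ρ x = 0) ∧ (∀ x, r < ‖x‖ → g x = 0) ∧ (∀ x, 0 ≤ ρ x) ∧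
    ∫ x, ρ x = 1 := by
  have hz : ∀ x : Ed d, r ≤ ‖x‖ → r⁻¹ ^ d * eta d (r⁻¹ • x) = 0 := fun x hx => by
    rw [eta_zero, mul_zero]
    rw [norm_smul, Real.norm_of_nonneg (by positivity)]
    rw [inv_mul_eq_div, le_div_iff₀ hr]; linarith
  have hc : ContDiff ℝ (⊤ : ℕ∞) fun x : Ed d => r⁻¹ ^ d * eta d (r⁻¹ • x) :=
    contDiff_const.mul ((eta_contDiff d).comp (contDiff_const_smul r⁻¹))
  obtain ⟨K, hK⟩ := C2b_of_contDiff hc (hasCompactSupport_of_zero hz)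
  refine ⟨K, _, _, hK, hz, fun x hx => gradient_zero hz hx,
    fun x => mul_nonneg (by positivity) (eta_nonneg d _), ?_⟩
  rw [integral_const_mul, Measure.integral_comp_smul, eta_integral]
  have : |(r⁻¹ ^ Module.finrank ℝ (Ed d))⁻¹| = (r⁻¹ ^ d)⁻¹ := by
    rw [finrank_euclideanSpace_fin, abs_of_nonneg (by positivity)]
  rw [this, smul_eq_mul, mul_one, mul_inv_cancel₀ (by positivity)]

lemma norm_sub_sq_le_two {d : ℕ} (a b c : Ed d) :
    ‖a - c‖ ^ 2 ≤ 2 * ‖a - b‖ ^ 2 + 2 * ‖b - c‖ ^ 2 := by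
  have : ‖a - c‖ ≤ ‖a - b‖ + ‖b - c‖ := norm_sub_le_norm_sub_add_norm_sub a b c
  nlinarith [norm_nonneg (a - c), sq_nonneg (‖a - b‖ - ‖b - c‖)]

/-- If `u` is close to `q z` on average over the bump around `z`, for all `z ∈ B_{3/8}`, then `u`
is close to `q` in `L²(B_{1/4})`. -/
lemma average_in {d : ℕ} {u q : Ed d → Ed d} (hu : Measurable u) (hq : Continuous q)
    {ρ : Ed d → ℝ} (hρc : Continuous ρ) {r A S : ℝ} (hr : r ≤ 1 / 8)
    (hρz : ∀ x, r ≤ ‖x‖ → ρ x = 0) (hρ0 : ∀ x, 0 ≤ ρ x) (hρ1 : ∫ x, ρ x = 1) (hA : 0 ≤ A)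
    (hS : ∀ x z, ‖x - z‖ ≤ r → ‖q x - q z‖ ≤ S)
    (hI : ∀ z, ‖z‖ ≤ 3 / 8 → Integrable fun x => ρ (x - z) * ‖u x - q z‖ ^ 2)
    (hloc : ∀ z, ‖z‖ ≤ 3 / 8 → ∫ x, ρ (x - z) * ‖u x - q z‖ ^ 2 ≤ A) :
    ∫⁻ x in ball (0 : Ed d) (1 / 4), ENNReal.ofReal (‖u x - q x‖ ^ 2)
      ≤ ENNReal.ofReal ((2 * A + 2 * S ^ 2) * volume.real (ball (0 : Ed d) (3 / 8))) := by
  have hρi : Integrable ρ := integrable_of_vanish (hρc.integrableOn_ball' 0 r) hρz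
  have hρl : ∀ x : Ed d, ∫⁻ z, ENNReal.ofReal (ρ (x - z)) = 1 := fun x => by
    rw [lintegral_sub_left_eq_self (fun y => ENNReal.ofReal (ρ y)) x,
      ← ofReal_integral_eq_lintegral_ofReal hρi (Filter.Eventually.of_forall hρ0), hρ1,
      ENNReal.ofReal_one]
  -- pointwise in `x`: average the triangle inequality over `z`
  have step1 : ∀ x ∈ ball (0 : Ed d) (1 / 4), ENNReal.ofReal (‖u x - q x‖ ^ 2)
      ≤ ∫⁻ z in ball (0 : Ed d) (3 / 8),
        ENNReal.ofReal (ρ (x - z) * (2 * ‖u x - q z‖ ^ 2 + 2 * S ^ 2)) := fun x hx => by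
    rw [mem_ball, dist_zero_right] at hx
    calc ENNReal.ofReal (‖u x - q x‖ ^ 2)
        = ∫⁻ z, ENNReal.ofReal (ρ (x - z)) * ENNReal.ofReal (‖u x - q x‖ ^ 2) := by
          rw [lintegral_mul_const _ (by fun_prop), hρl, one_mul]
      _ ≤ ∫⁻ z, (ball (0 : Ed d) (3 / 8)).indicator (fun z =>
            ENNReal.ofReal (ρ (x - z) * (2 * ‖u x - q z‖ ^ 2 + 2 * S ^ 2))) z := by
          refine lintegral_mono fun z => ?_
          rcases le_or_gt r ‖x - z‖ with hz | hz
          · simp [hρz _ hz]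
          have hzb : z ∈ ball (0 : Ed d) (3 / 8) := by
            rw [mem_ball, dist_zero_right]
            have := norm_sub_norm_le z x
            rw [norm_sub_rev] at this
            linarith
          rw [indicator_of_mem hzb, ← ENNReal.ofReal_mul (hρ0 _)]
          refine ENNReal.ofReal_le_ofReal (mul_le_mul_of_nonneg_left ?_ (hρ0 _))
          have h1 := norm_sub_sq_le_two (u x) (q z) (q x)
          have h2 : ‖q z - q x‖ ^ 2 ≤ S ^ 2 := by
            rw [norm_sub_rev]
            have := hS x z hz.le
            gcongr
          linarith
      _ = _ := lintegral_indicator measurableSet_ball _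
  calc _ ≤ ∫⁻ x in ball (0 : Ed d) (1 / 4), ∫⁻ z in ball (0 : Ed d) (3 / 8),
        ENNReal.ofReal (ρ (x - z) * (2 * ‖u x - q z‖ ^ 2 + 2 * S ^ 2)) :=
        setLIntegral_mono' measurableSet_ball step1
    _ ≤ ∫⁻ x, ∫⁻ z in ball (0 : Ed d) (3 / 8),
        ENNReal.ofReal (ρ (x - z) * (2 * ‖u x - q z‖ ^ 2 + 2 * S ^ 2)) :=
        setLIntegral_le_lintegral _ _
    _ = ∫⁻ z in ball (0 : Ed d) (3 / 8), ∫⁻ x,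
        ENNReal.ofReal (ρ (x - z) * (2 * ‖u x - q z‖ ^ 2 + 2 * S ^ 2)) := by
        refine lintegral_lintegral_swap (Measurable.aemeasurable ?_)
        have m1 : Measurable fun w : Ed d × Ed d => ρ (w.1 - w.2) :=
          hρc.measurable.comp (by fun_prop)
        have m2 : Measurable fun w : Ed d × Ed d => ‖u w.1 - q w.2‖ :=
          ((hu.comp measurable_fst).sub (hq.measurable.comp measurable_snd)).norm
        exact (m1.mul (((m2.pow_const 2).const_mul 2).add_const _)).ennreal_ofReal
    _ ≤ ∫⁻ _ in ball (0 : Ed d) (3 / 8), ENNReal.ofReal (2 * A + 2 * S ^ 2) := by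
        refine setLIntegral_mono' measurableSet_ball fun z hz => ?_
        rw [mem_ball, dist_zero_right] at hz
        have i1 : Integrable fun x => ρ (x - z) := hρi.comp_sub_right z
        have i2 := hI z hz.le
        have e : (fun x => ρ (x - z) * (2 * ‖u x - q z‖ ^ 2 + 2 * S ^ 2))
            = fun x => 2 * (ρ (x - z) * ‖u x - q z‖ ^ 2) + 2 * S ^ 2 * ρ (x - z) := by
          ext x; ring
        have i3 : Integrable fun x => ρ (x - z) * (2 * ‖u x - q z‖ ^ 2 + 2 * S ^ 2) := by
          rw [e]; exact (i2.const_mul 2).add (i1.const_mul _)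
        rw [← ofReal_integral_eq_lintegral_ofReal i3 (Filter.Eventually.of_forall fun x =>
          mul_nonneg (hρ0 _) (by positivity))]
        refine ENNReal.ofReal_le_ofReal ?_
        rw [e, integral_add (i2.const_mul 2) (i1.const_mul _), integral_const_mul,
          integral_const_mul, integral_sub_right_eq_self ρ z, hρ1, mul_one]
        linarith [hloc z hz.le]
    _ = _ := by
        rw [setLIntegral_const, ENNReal.ofReal_mul (by positivity), ofReal_measureReal]

/-- In the perturbative regime the displacement is close to a harmonic gradient. -/
lemma perturbative (d : ℕ) {τ : ℝ} (hτ : 0 < τ) : ∃ m ω : ℝ, 0 < m ∧ m ≤ 1 / 100 ∧ 0 < ω ∧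
    ∀ {Ω : Set (Ed d)} {T : Ed d → Ed d} {G : Set (Ed d)}
    {f χ : Ed d → ℝ} {δ : ℝ} {O : Set (Ed d)} {π : Measure (Ed d × Ed d)} {κ β : ℝ}
    (_ : Hyp Ω T G f χ δ m O π κ β), β ≤ ω →
    ∃ φ : Ed d → ℝ, GradHarmonicOn φ (ball 0 (1 / 4)) ∧ Continuous (gradient φ) ∧
      ∫⁻ x in ball (0 : Ed d) (1 / 4), ENNReal.ofReal (‖T x - (x + gradient φ x)‖ ^ 2)
        ≤ ENNReal.ofReal (τ * δ ^ 2) := by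
  obtain ⟨V, hV, hpC⟩ := pp_C2b d
  obtain ⟨Cφ, hCφ, hφ⟩ := exists_phi d
  set B := volume.real (ball (0 : Ed d) (3 / 8)) with hB
  set B' := volume.real (ball (0 : Ed d) (1 / 4)) with hB'
  have hB0 : 0 ≤ B := measureReal_nonneg
  have hB0' : 0 ≤ B' := measureReal_nonneg
  -- the scale of the bump, chosen so that the oscillation of `∇p` costs at most `τ / 4`
  obtain ⟨r, hr0, hr8, hrτ⟩ : ∃ r : ℝ, 0 < r ∧ r ≤ 1 / 16 ∧
      2 * (2 * 4 + 2) * (6 * V) ^ 2 * B * r ≤ τ / 4 := by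
    refine ⟨min (1 / 16) (τ / 4 / (2 * (2 * 4 + 2) * (6 * V) ^ 2 * B + 1)), by positivity,
      min_le_left _ _, ?_⟩
    have : min (1 / 16) (τ / 4 / (2 * (2 * 4 + 2) * (6 * V) ^ 2 * B + 1))
      ≤ τ / 4 / (2 * (2 * 4 + 2) * (6 * V) ^ 2 * B + 1) := min_le_right _ _
    rw [le_div_iff₀ (by positivity)] at this
    have h0 : 0 < min (1 / 16) (τ / 4 / (2 * (2 * 4 + 2) * (6 * V) ^ 2 * B + 1)) := by positivity
    linarith
  obtain ⟨K, ρ, g, hρ, hρz, hgz, hρ0, hρ1⟩ := exists_bump d hr0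
  obtain ⟨C, hC, hloc⟩ := local_estimate d K
  obtain ⟨s, hs0, hs1, hsτ⟩ : ∃ s : ℝ, 0 < s ∧ s ≤ 1 / 100 ∧
      (2 * 2 * C * 3 * B + 2 * Cφ ^ 2 * B') * s ≤ τ / 4 := by
    refine ⟨min (1 / 100) (τ / 4 / ((2 * 2 * C * 3 * B + 2 * Cφ ^ 2 * B') + 1)), by positivity,
      min_le_left _ _, ?_⟩
    have : min (1 / 100) (τ / 4 / ((2 * 2 * C * 3 * B + 2 * Cφ ^ 2 * B') + 1))
      ≤ τ / 4 / ((2 * 2 * C * 3 * B + 2 * Cφ ^ 2 * B') + 1) := min_le_right _ _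
    rw [le_div_iff₀ (by positivity)] at this
    have h0 : 0 < min (1 / 100) (τ / 4 / ((2 * 2 * C * 3 * B + 2 * Cφ ^ 2 * B') + 1)) := by
      positivity
    linarith
  obtain ⟨ω, hω, hest⟩ := hloc s hs0
  refine ⟨s, min ω s, hs0, hs1, by positivity, ?_⟩
  intro Ω T G f χ δ O π κ β H hβ
  have hδ := H.δpos
  have hβ0 := H.β0
  have hβ1 := H.β1
  have hβs : β ≤ s := hβ.trans (min_le_right _ _)
  obtain ⟨φ, hφ1, hφ2, hφ3⟩ := hφ H
  refine ⟨φ, hφ1, hφ2, ?_⟩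
  have hp := hpC H
  set p := pp f κ with hpdef
  set S := 6 * (V * δ) * r with hSdef
  have hS : ∀ x z, ‖x - z‖ ≤ r → ‖gradient p x - gradient p z‖ ≤ S := fun x z hxz =>
    (hp.grad_lip x z).trans (by rw [hSdef]; gcongr)
  have hall : ∀ z : Ed d, ‖z‖ ≤ 3 / 8 → _ := fun z hz =>
    hest H (hβ.trans (min_le_left _ _)) (hρ.translate z)
      (fun x hx => hρz _ (by have := norm_sub_norm_le x z; linarith))
      (fun x hx => hgz _ (by have := norm_sub_norm_le x z; linarith))
      (fun x => hρ0 _) (by rw [integral_sub_right_eq_self ρ z, hρ1])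
      (z := z) (S := S) (fun x hx => hS x z (by
        by_contra! h
        exact hx (hρz _ h.le)))
  have havg := average_in (u := fun x => T x - x) H.um hp.gc hρ.cont (hr8.trans (by norm_num)) hρz
    hρ0 hρ1 (A := 4 * S ^ 2 + C * (β + s + s) * δ ^ 2) (by positivity) hS
    (fun z hz => (hall z hz).1) (fun z hz => (hall z hz).2)
  have hqm : Measurable fun x => ENNReal.ofReal (2 * ‖T x - x - gradient p x‖ ^ 2) :=
    ((((H.um.sub hp.gc.measurable).norm).pow_const 2).const_mul 2).ennreal_ofReal
  calc ∫⁻ x in ball (0 : Ed d) (1 / 4), ENNReal.ofReal (‖T x - (x + gradient φ x)‖ ^ 2)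
      ≤ ∫⁻ x in ball (0 : Ed d) (1 / 4), (ENNReal.ofReal (2 * ‖T x - x - gradient p x‖ ^ 2)
          + ENNReal.ofReal (2 * (Cφ * (β * δ)) ^ 2)) := by
        refine lintegral_mono fun x => ?_
        rw [← ENNReal.ofReal_add (by positivity) (by positivity)]
        refine ENNReal.ofReal_le_ofReal ?_
        rw [← sub_sub]
        have h1 := norm_sub_sq_le_two (T x - x) (gradient p x) (gradient φ x)
        have h2 : ‖gradient p x - gradient φ x‖ ^ 2 ≤ (Cφ * (β * δ)) ^ 2 := by
          rw [norm_sub_rev]; gcongr; exact hφ3 x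
        linarith
    _ = 2 * (∫⁻ x in ball (0 : Ed d) (1 / 4), ENNReal.ofReal (‖T x - x - gradient p x‖ ^ 2))
          + ENNReal.ofReal (2 * (Cφ * (β * δ)) ^ 2 * B') := by
        rw [lintegral_add_left hqm, setLIntegral_const, ENNReal.ofReal_mul (q := B') (by positivity),
          hB', ofReal_measureReal measure_ball_lt_top.ne]
        congr 1
        rw [← lintegral_const_mul' _ _ (by simp)]
        refine lintegral_congr fun x => ?_
        rw [ENNReal.ofReal_mul (by norm_num), ENNReal.ofReal_ofNat]
    _ ≤ 2 * ENNReal.ofReal ((2 * (4 * S ^ 2 + C * (β + s + s) * δ ^ 2) + 2 * S ^ 2) * B)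
          + ENNReal.ofReal (2 * (Cφ * (β * δ)) ^ 2 * B') := by gcongr
    _ = ENNReal.ofReal (2 * ((2 * (4 * S ^ 2 + C * (β + s + s) * δ ^ 2) + 2 * S ^ 2) * B)
          + 2 * (Cφ * (β * δ)) ^ 2 * B') := by
        rw [ENNReal.ofReal_add (by positivity) (by positivity),
          ENNReal.ofReal_mul (p := 2) (by norm_num), ENNReal.ofReal_ofNat]
    _ ≤ ENNReal.ofReal (τ * δ ^ 2) := by
        refine ENNReal.ofReal_le_ofReal ?_
        have hδ2 : 0 ≤ δ ^ 2 := by positivity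
        have t1 : 2 * (2 * 4 + 2) * (6 * V) ^ 2 * B * r ^ 2 * δ ^ 2 ≤ τ / 4 * δ ^ 2 := by
          refine mul_le_mul_of_nonneg_right (le_trans ?_ hrτ) hδ2
          have : r ^ 2 ≤ r := by nlinarith
          gcongr
        have t2 : (2 * 2 * C * 3 * B + 2 * Cφ ^ 2 * B') * s * δ ^ 2 ≤ τ / 4 * δ ^ 2 :=
          mul_le_mul_of_nonneg_right hsτ hδ2
        have t3 : 2 * 2 * C * B * (β + s + s) * δ ^ 2 ≤ 2 * 2 * C * B * (s + s + s) * δ ^ 2 := by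
          gcongr
        have t4 : 2 * Cφ ^ 2 * B' * β ^ 2 * δ ^ 2 ≤ 2 * Cφ ^ 2 * B' * s * δ ^ 2 := by
          have : β ^ 2 ≤ s := by nlinarith
          gcongr
        have t5 : 0 ≤ τ / 4 * δ ^ 2 := by positivity
        rw [hSdef]
        nlinarith

/-! ### Reduction to the perturbative regime -/

lemma gradient_const_zero {d : ℕ} : gradient (fun _ : Ed d => (0 : ℝ)) = 0 := by
  ext1 x; simp [gradient]

lemma gradHarmonicOn_zero {d : ℕ} (s : Set (Ed d)) : GradHarmonicOn (fun _ : Ed d => (0 : ℝ)) s := by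
  refine ⟨contDiffOn_const, fun i => ?_⟩
  rw [gradient_const_zero]
  refine ⟨contDiffOn_const, fun x _ => ?_⟩
  simp [lap]

/-- A coupling of small cost provides all the data of the perturbative regime. -/
lemma exists_hyp {d : ℕ} (hd : 2 ≤ d) {m : ℝ} (hm : 0 < m) (hm1 : m ≤ 1 / 100) :
    ∃ ω, 0 < ω ∧ ∀ {Ω O : Set (Ed d)} {μ : Measure (Ed d)} {T : Ed d → Ed d},
      Bornology.IsBounded Ω → MeasurableSet Ω → ball (0 : Ed d) 2 ⊆ Ω →
      IsOpen O → ball (0 : Ed d) 2 ⊆ O →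
      (∃ K : Set (Ed d), IsCompact K ∧ μ Kᶜ = 0) → μ Set.univ = volume Ω →
      IsOptMap Ω μ T → ∀ {δ β : ℝ}, 0 < δ → δ ≤ ω → δ ≤ 1 → δ ≤ β → 0 < β → β ≤ 1 →
      Elin T = ENNReal.ofReal (δ ^ 2) → Dlin μ O < ENNReal.ofReal (β ^ 2 * δ ^ 2) →
      ∃ G f χ π κ, Hyp Ω T G f χ δ m O π κ β := by
  obtain ⟨ω, hω, hpot⟩ := exists_potE d hm hm1
  refine ⟨ω, hω, ?_⟩
  intro Ω O μ T hΩb hΩm hΩB hO hOB ⟨K, hK, hμK⟩ hμ hopt δ β hδ hδω hδ1 hδβ hβ0 hβ1 hE hD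
  have hT := hopt.1
  have hfin : volume Ω ≠ ∞ := hΩb.measure_lt_top.ne
  have hμO : μ O ≠ ∞ := ((measure_mono (subset_univ O)).trans_lt (hμ ▸ hfin.lt_top)).ne
  obtain ⟨R, hR0, hKR⟩ : ∃ R : ℝ, 0 ≤ R ∧ K ⊆ closedBall 0 R := by
    obtain ⟨R, hR⟩ := hK.isBounded.subset_closedBall 0
    exact ⟨max R 0, le_max_right _ _, hR.trans (closedBall_subset_closedBall (le_max_left _ _))⟩
  have hTR : ∀ᵐ x ∂(volume.restrict Ω), ‖T x‖ ≤ (⟨R, hR0⟩ : ℝ≥0) := by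
    have h0 : μ (closedBall 0 R)ᶜ = 0 := measure_mono_null (compl_subset_compl.2 hKR) hμK
    rw [← hopt.2.1, Measure.map_apply hT measurableSet_closedBall.compl] at h0
    filter_upwards [compl_mem_ae_iff.2 h0] with x hx
    simpa using hx
  obtain ⟨G, f₀, χ₀, P⟩ := exists_potentials hd hΩm hΩb hΩB hopt hTR
  have hmeas : AEStronglyMeasurable (fun x => ‖T x - x‖ ^ 2)
      (volume.restrict (ball (0 : Ed d) 2)) := (P.um.norm.pow_const 2).aestronglyMeasurable
  have hEreal : ∫ x in ball (0 : Ed d) 2, ‖T x - x‖ ^ 2 ≤ δ ^ 2 := by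
    rw [integral_eq_lintegral_of_nonneg_ae (Filter.Eventually.of_forall fun x => by positivity)
      hmeas]
    have : ∫⁻ x in ball (0 : Ed d) 2, ENNReal.ofReal (‖T x - x‖ ^ 2) = ENNReal.ofReal (δ ^ 2) := hE
    rw [this, ENNReal.toReal_ofReal (by positivity)]
  obtain ⟨f, χ, P'⟩ := hpot P hδ hδω hEreal
  obtain ⟨c, ⟨π, h1, h2, rfl⟩, hc⟩ := sInf_lt_iff.1 hD
  have hvO : volume O ≠ 0 :=
    ((measure_ball_pos volume (0 : Ed d) two_pos).trans_le (measure_mono hOB)).ne'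
  have hπ : IsFiniteMeasure π := ⟨by
    have : π univ = μ O := by
      rw [← Measure.restrict_apply_univ O (μ := μ), ← h1,
        Measure.map_apply measurable_fst MeasurableSet.univ, preimage_univ]
    rw [this]; exact hμO.lt_top⟩
  have hcm : AEStronglyMeasurable (fun p : Ed d × Ed d => ‖p.1 - p.2‖ ^ 2) π :=
    Continuous.aestronglyMeasurable (by fun_prop)
  have hc0 : 0 ≤ᵐ[π] fun p : Ed d × Ed d => ‖p.1 - p.2‖ ^ 2 :=
    Filter.Eventually.of_forall fun p => by positivity
  refine ⟨G, f, χ, π, (μ O / volume O).toReal, { P' with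
    β0 := hβ0, β1 := hβ1, δβ := hδβ, Om := hO.measurableSet, Osub := hOB
    κ0 := ENNReal.toReal_nonneg, πfin := hπ, fst := ?_, snd := ?_, costI := ?_, cost := ?_ }⟩
  · rw [h1, hopt.2.1]
  · rw [h2, ENNReal.ofReal_toReal (ENNReal.div_ne_top hμO hvO)]
  · exact ⟨hcm, (hasFiniteIntegral_iff_ofReal hc0).2 (hc.trans ENNReal.ofReal_lt_top)⟩
  · rw [integral_eq_lintegral_of_nonneg_ae hc0 hcm]
    exact ENNReal.toReal_le_of_le_ofReal (by positivity) hc.le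

/-- Lagrangian harmonic approximation: for `0 < τ ≪ 1` there are `ε(τ), C(τ)`
such that if `E + D ≤ ε(τ)` then there is `φ` with harmonic gradient on `B_{1/4}` with
`∫_{B_{1/4}}|T − (x + ∇φ)|² ≲ τE + C(τ)D` and `∫_{B_{1/4}}|∇φ|² ≲ E`. -/
theorem harmonic_approximation_lagrangian (d : ℕ) (hd : 2 ≤ d) :
    ∃ Cd τ₀ : ℝ, 0 < Cd ∧ 0 < τ₀ ∧
    ∀ τ : ℝ, 0 < τ → τ < τ₀ →
    ∃ ε C : ℝ, 0 < ε ∧ 0 < C ∧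
    ∀ (Ω O : Set (Ed d)) (μ : Measure (Ed d)) (T : Ed d → Ed d),
      Bornology.IsBounded Ω → MeasurableSet Ω → ball (0 : Ed d) 2 ⊆ Ω →
      IsOpen O → ball (0 : Ed d) 2 ⊆ O →
      (∃ K : Set (Ed d), IsCompact K ∧ μ Kᶜ = 0) → μ Set.univ = volume Ω →
      IsOptMap Ω μ T →
      Elin T + Dlin μ O ≤ ENNReal.ofReal ε →
      ∃ φ : Ed d → ℝ, GradHarmonicOn φ (ball (0 : Ed d) (1/4)) ∧
        (∫⁻ x in ball (0 : Ed d) (1/4),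
            ENNReal.ofReal (‖T x - (x + gradient φ x)‖ ^ 2))
          ≤ ENNReal.ofReal Cd *
            (ENNReal.ofReal τ * Elin T + ENNReal.ofReal C * Dlin μ O) ∧
        (∫⁻ x in ball (0 : Ed d) (1/4), ENNReal.ofReal (‖gradient φ x‖ ^ 2))
          ≤ ENNReal.ofReal Cd * Elin T := by
  refine ⟨4, 1, by norm_num, one_pos, fun τ hτ hτ1 => ?_⟩
  obtain ⟨m, ω₁, hm, hm1, hω₁, hpert⟩ := perturbative d hτ
  obtain ⟨ω₂, hω₂, hhyp⟩ := exists_hyp hd hm hm1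
  set β := min ω₁ 1 with hβdef
  have hβ : 0 < β := by positivity
  have hβ1 : β ≤ 1 := min_le_right _ _
  refine ⟨(min ω₂ β) ^ 2, (β ^ 2)⁻¹, by positivity, by positivity, ?_⟩
  intro Ω O μ T hΩb hΩm hΩB hO hOB hK hμ hopt hED
  have hE : Elin T ≤ ENNReal.ofReal ((min ω₂ β) ^ 2) := le_self_add.trans hED
  have hEfin : Elin T ≠ ∞ := (hE.trans_lt ENNReal.ofReal_lt_top).ne
  have hsub : ball (0 : Ed d) (1 / 4) ⊆ ball 0 2 := ball_subset_ball (by norm_num)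
  have hE4 : ∫⁻ x in ball (0 : Ed d) (1 / 4), ENNReal.ofReal (‖T x - x‖ ^ 2) ≤ Elin T :=
    lintegral_mono_set hsub
  have h4 : (1 : ℝ≥0∞) ≤ ENNReal.ofReal 4 := by
    rw [ENNReal.ofReal_ofNat]; norm_num
  rcases le_or_gt (ENNReal.ofReal (β ^ 2) * Elin T) (Dlin μ O) with hD | hD
  · -- the data term dominates, and `φ = 0` will do
    refine ⟨fun _ => 0, gradHarmonicOn_zero _, ?_, ?_⟩
    · rw [gradient_const_zero]
      simp only [Pi.zero_apply, add_zero]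
      refine hE4.trans ?_
      calc Elin T = ENNReal.ofReal (β ^ 2)⁻¹ * (ENNReal.ofReal (β ^ 2) * Elin T) := by
            rw [← mul_assoc, ← ENNReal.ofReal_mul (by positivity),
              inv_mul_cancel₀ (by positivity), ENNReal.ofReal_one, one_mul]
        _ ≤ ENNReal.ofReal (β ^ 2)⁻¹ * Dlin μ O := by gcongr
        _ ≤ ENNReal.ofReal τ * Elin T + ENNReal.ofReal (β ^ 2)⁻¹ * Dlin μ O := le_add_self
        _ ≤ _ := le_mul_of_one_le_left (zero_le) h4
    · rw [gradient_const_zero]; simp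
  · have hE0 : Elin T ≠ 0 := fun h => by simp [h] at hD
    set δ := √(Elin T).toReal with hδdef
    have hδ : 0 < δ := Real.sqrt_pos.2 (ENNReal.toReal_pos hE0 hEfin)
    have hδ2 : δ ^ 2 = (Elin T).toReal := Real.sq_sqrt ENNReal.toReal_nonneg
    have hEδ : Elin T = ENNReal.ofReal (δ ^ 2) := by rw [hδ2, ENNReal.ofReal_toReal hEfin]
    have hδle : δ ≤ min ω₂ β := by
      refine Real.sqrt_le_iff.2 ⟨by positivity, ENNReal.toReal_le_of_le_ofReal (by positivity) hE⟩
    have hδβ : δ ≤ β := hδle.trans (min_le_right _ _)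
    rw [hEδ, ← ENNReal.ofReal_mul (by positivity)] at hD
    obtain ⟨G, f, χ, π, κ, H⟩ := hhyp hΩb hΩm hΩB hO hOB hK hμ hopt hδ (hδle.trans (min_le_left _ _))
      (hδβ.trans hβ1) hδβ hβ hβ1 hEδ hD
    obtain ⟨φ, hφ, hφc, hφτ⟩ := hpert H (min_le_left _ _)
    rw [ENNReal.ofReal_mul hτ.le, ← hEδ] at hφτ
    refine ⟨φ, hφ, ?_, ?_⟩
    · exact (hφτ.trans le_self_add).trans (le_mul_of_one_le_left (zero_le) h4)
    · have hum : Measurable fun x => ENNReal.ofReal (‖T x - x‖ ^ 2) :=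
        (H.um.norm.pow_const 2).ennreal_ofReal
      calc ∫⁻ x in ball (0 : Ed d) (1 / 4), ENNReal.ofReal (‖gradient φ x‖ ^ 2)
          ≤ ∫⁻ x in ball (0 : Ed d) (1 / 4), (2 * ENNReal.ofReal (‖T x - x‖ ^ 2)
            + 2 * ENNReal.ofReal (‖T x - (x + gradient φ x)‖ ^ 2)) := by
            refine lintegral_mono fun x => ?_
            have h := norm_sub_sq_le_two (gradient φ x) (T x - x) 0
            rw [sub_zero, sub_zero, norm_sub_rev, sub_sub] at h
            have h2 := ENNReal.ofReal_le_ofReal h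
            rw [ENNReal.ofReal_add (by positivity) (by positivity),
              ENNReal.ofReal_mul (by norm_num), ENNReal.ofReal_mul (by norm_num),
              ENNReal.ofReal_ofNat, add_comm] at h2
            exact h2
        _ = 2 * (∫⁻ x in ball (0 : Ed d) (1 / 4), ENNReal.ofReal (‖T x - x‖ ^ 2))
            + 2 * ∫⁻ x in ball (0 : Ed d) (1 / 4),
              ENNReal.ofReal (‖T x - (x + gradient φ x)‖ ^ 2) := by
            rw [lintegral_add_left (hum.const_mul 2), lintegral_const_mul' _ _ (by simp),
              lintegral_const_mul' _ _ (by simp)]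
        _ ≤ 2 * Elin T + 2 * (ENNReal.ofReal τ * Elin T) := by gcongr
        _ ≤ 2 * Elin T + 2 * (1 * Elin T) := by
            gcongr
            exact ENNReal.ofReal_le_one.2 hτ1.le
        _ = ENNReal.ofReal 4 * Elin T := by
            rw [ENNReal.ofReal_ofNat]; ring
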